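/- Let n and r be positive integers with 2^{n−1} − 1 ≤ r ≤ 2^n − 2, and let d_0, …, d_{r+1} be integers all of the same parity with d_i ≥ 2^n + n − 1 for all i. Then a very general complex r-fold quadric bundle of type (d_i)_{0≤i≤r+1} over ℙ^n is not stably rational. -/

import Mathlib

/-!
The idea is to specialize a very general bundle to a singular one which carries an unramified class,
and to let this class obstruct the rational curves that stable rationality would provide.

*Specialization.* A very general matrix has coefficients algebraically independent over `ℤ`
(`veryGeneral_of`), so a place of `ℂ`, with valuation ring `O`, takes it to any matrix of the same
type (`spec`). The special bundle `Dat.sp` is diagonal, and its entries are coefficients of the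
Pfister form `⟨⟨x₁/x₀, …, xₙ/x₀⟩⟩` up to powers of `x₀`, except for one, which is
`x₀ᵏ (μ² (∑ xⱼ)²ⁿ - x₀ⁿ x₁ ⋯ xₙ)` with `μ` transcendental. Irreducibility of the quadratic form and
the conditions defining a quadric bundle are also checked by specialization (`quadricBundle`,
`cone_isDomain`).

*The class is unramified.* Over a complete discretely valued base on which the special quadric has a
point, the Pfister form is isotropic as soon as its reduction is (`Dat.piso_lift`). Consequently,
along a polynomial curve over which the special quadric has a point, the lattice of the Pfister form
can be enlarged at each prime where it is degenerate, because the form is hyperbolic there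
(`Dat.step`), and it lies in a unimodular lattice (`Dat.unimodular`). By Harder's theorem
(`harder`, deduced from a bound of Hermite type, `hermite`), this lattice is constant if it is
anisotropic. So the Pfister form is isotropic along the curve if and only if it is isotropic at any
given rational point (`Dat.lemmaA`). For a curve over a valued field, a Newton polygon argument shows
that the reductions of any two of its points agree in this respect (`path`).

*The class is nonzero.* The Pfister form stays anisotropic over the function field of the special
quadric (`nonvanish`). After specializing `μ² = ν` to `0`, this comes from the fact that
monomials distinct modulo squares are linearly independent over squares (`parity`).

*Conclusion.* Suppose that the function field `F` of the cone, with some variables adjoined, is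
purely transcendental over `ℂ`. Then the tautological `F`-point and a complex point are joined by a
rational curve over `F` which lifts to the bundle (`exists_curve`). The place of `ℂ` extends to a
Gauss valuation on `F` (`place`). The reduced Pfister form is isotropic at the complex point, since
residue fields of valuation rings of `ℂ` are algebraically closed, so by `path` it is isotropic at the
tautological point. This contradicts `nonvanish`.
-/

noncomputable section
open MvPolynomial

/-- The rational function field `ℂ(t₁, …, t_d)`. -/
abbrev RatFF (d : ℕ) : Type := FractionRing (MvPolynomial (Fin d) ℂ)

/-- An affine ℂ-algebra `R` (a chart, or an affine cone, of a variety `V`) has stably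
rational fraction field: `Frac(R)(y₁,…,y_m) ≅ ℂ(t₁,…,t_d)` for some `m`, `d`.
If `R` is the coordinate ring of the affine cone over a projective variety `V`
(so that `Frac R = ℂ(V)(t)` is stably birational to `ℂ(V)`), this holds if and only if
`V` is stably rational, i.e. `V × ℙᵐ` is birational to a projective space for some `m`. -/
def IsStablyRationalSpec (R : Type*) [CommRing R] [Algebra ℂ R] : Prop :=
  ∃ m d : ℕ, Nonempty (FractionRing (MvPolynomial (Fin m) R) ≃ₐ[ℂ] RatFF d)

/-- The fraction field of the affine ℂ-algebra `R` embeds into a purely transcendental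
extension of `ℂ`.  If `R` is the coordinate ring of the affine cone over a projective
variety `V`, this holds if and only if `V` is unirational. -/
def IsUnirationalSpec (R : Type*) [CommRing R] [Algebra ℂ R] : Prop :=
  ∃ d : ℕ, Nonempty (FractionRing R →ₐ[ℂ] RatFF d)

/-- `Z` is an algebraic (Zariski closed) subset of a parameter space `V` with coordinates
`coords`: it is the common zero locus of a set of polynomial functions in the coordinates. -/
def IsAlgSubsetOn {V : Type*} (coords : Set (V → ℂ)) (Z : Set V) : Prop :=
  ∃ S : Set (V → ℂ),
    S ⊆ ↑(Algebra.adjoin ℂ coords) ∧ Z = {v | ∀ f ∈ S, f v = 0}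

/-- `P` holds for a very general point of the parameter space `V`: it holds away from a
countable union of proper algebraic subsets. -/
def VeryGenerallyOn {V : Type*} (coords : Set (V → ℂ)) (P : V → Prop) : Prop :=
  ∃ Z : ℕ → Set V,
    (∀ m, IsAlgSubsetOn coords (Z m) ∧ Z m ≠ Set.univ) ∧ ∀ v, (∀ m, v ∉ Z m) → P v

namespace QB

/-- Homogeneous coordinate ring `ℂ[x₀, …, xₙ]` of `ℙⁿ`. -/
abbrev PolyP (n : ℕ) := MvPolynomial (Fin (n+1)) ℂ

/-- Coordinate ring `ℂ[x₀,…,xₙ,z₀,…,z_{r+1}]` of the affine double cone over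
`ℙ(𝓔)` (`x`'s: base variables, `z`'s: fibre variables). -/
abbrev Amb (n r : ℕ) := MvPolynomial (Fin (n+1) ⊕ Fin (r+2)) ℂ

/-- Homogeneous component of (possibly negative) degree `m`; it is `0` for `m < 0`. -/
def homComp (n : ℕ) (m : ℤ) : Submodule ℂ (PolyP n) :=
  if 0 ≤ m then homogeneousSubmodule (Fin (n+1)) ℂ m.toNat else ⊥

/-- The parameter space of symmetric matrices `A = (a_{ij})`, `0 ≤ i,j ≤ r+1`, of homogeneous
polynomials with `deg a_{ij} = l_i + l_j + l₀`, i.e. of line bundle valued quadratic forms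
`q : 𝓔 → O_{ℙⁿ}(l₀)` on `𝓔 = ⊕_{i=0}^{r+1} O_{ℙⁿ}(-l_i)`.  The corresponding
quadric bundle `X = {q = 0} ⊂ ℙ(𝓔)`, given locally over `ℙⁿ` by
`∑ a_{ij} z_i z_j = 0`, is an `r`-fold quadric bundle over `ℙⁿ` of type `(d_i)` with
`d_i = 2 l_i + l₀`. -/
def SymMat (n r : ℕ) (l : Fin (r+2) → ℤ) (l₀ : ℤ) : Type :=
  {a : Fin (r+2) → Fin (r+2) → PolyP n //
    (∀ i j, a i j = a j i) ∧ ∀ i j, a i j ∈ homComp n (l i + l j + l₀)}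

variable {n r : ℕ} {l : Fin (r+2) → ℤ} {l₀ : ℤ}

/-- The quadratic form `q = ∑_{i,j} a_{ij} z_i z_j` as a polynomial on the double affine cone. -/
def qpoly (A : SymMat n r l l₀) : Amb n r :=
  ∑ i, ∑ j, (rename Sum.inl (A.1 i j)) * X (Sum.inr i) * X (Sum.inr j)

/-- `A` defines a quadric bundle over `ℙⁿ`, i.e. `X = {q = 0} → ℙⁿ` is flat (the quadratic
form is nonzero on each fibre) with generic fibre a smooth quadric (the symmetric matrix is
generically non-degenerate). -/
def IsQuadricBundle (A : SymMat n r l l₀) : Prop :=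
  (Matrix.det (Matrix.of fun i j => A.1 i j) ≠ 0) ∧
    ∀ x : Fin (n+1) → ℂ, x ≠ 0 → ∃ i j, eval x (A.1 i j) ≠ 0

/-- Substitution `x_i = 1`, `z_j = 1`, giving the equation of `X` on the standard affine
chart `{x_i ≠ 0, z_j ≠ 0}` of `ℙ(𝓔)`. -/
def chartSub (i : Fin (n+1)) (j : Fin (r+2)) (p : Amb n r) : Amb n r :=
  aeval (fun v => if v = Sum.inl i ∨ v = Sum.inr j then 1 else X v) p

/-- The total space `X = {q = 0} ⊂ ℙ(𝓔)` is smooth over `ℂ`: on each standard affine chart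
the dehomogenized equation satisfies the Jacobian criterion. -/
def SmoothTotalSpace (A : SymMat n r l l₀) : Prop :=
  ∀ (i : Fin (n+1)) (j : Fin (r+2)) (p : Fin (n+1) ⊕ Fin (r+2) → ℂ),
    eval p (chartSub i j (qpoly A)) = 0 →
      ∃ v, eval p (pderiv v (chartSub i j (qpoly A))) ≠ 0

/-- Coordinate ring of the affine double cone over `X = {q = 0} ⊂ ℙ(𝓔)`; the corresponding
affine variety is stably birational to `X` (its fraction field is `ℂ(X)(t, s)`). -/
def ConeRing (A : SymMat n r l l₀) : Type :=
  Amb n r ⧸ Ideal.span {qpoly A}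

instance (A : SymMat n r l l₀) : CommRing (ConeRing A) := Ideal.Quotient.commRing _
instance (A : SymMat n r l l₀) : Algebra ℂ (ConeRing A) := Ideal.Quotient.algebra ℂ

/-- Coordinate ring of the affine chart `X ∩ {x_i = 1, z_j = 1}` of `X ⊂ ℙ(𝓔)`;
when nonempty, this chart is a dense open subvariety of `X`, so if it is integral its
fraction field is the function field `ℂ(X)`. -/
def ChartRing (A : SymMat n r l l₀) (i : Fin (n+1)) (j : Fin (r+2)) : Type :=
  Amb n r ⧸ Ideal.span {qpoly A, X (Sum.inl i) - 1, X (Sum.inr j) - 1}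

instance (A : SymMat n r l l₀) (i : Fin (n+1)) (j : Fin (r+2)) : CommRing (ChartRing A i j) :=
  Ideal.Quotient.commRing _
instance (A : SymMat n r l l₀) (i : Fin (n+1)) (j : Fin (r+2)) : Algebra ℂ (ChartRing A i j) :=
  Ideal.Quotient.algebra ℂ

/-- The quadric bundle `X` given by `A` is rational over `ℂ`: `X` is integral and its
function field (computed on a dense standard affine chart) is purely transcendental,
`ℂ(X) ≅ ℂ(t₁, …, t_{n+r})`, i.e. `X` is birational to `ℙ^{n+r}`. -/
def IsRationalQB (A : SymMat n r l l₀) : Prop :=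
  IsDomain (ConeRing A) ∧
    ∃ i j, Nonempty (FractionRing (ChartRing A i j) ≃ₐ[ℂ] RatFF (n+r))

/-- The quadric bundle `X` given by `A` is stably rational: `X × ℙᵐ` is birational to a
projective space for some `m`; equivalently its affine double cone is. -/
def IsStablyRationalQB (A : SymMat n r l l₀) : Prop :=
  IsStablyRationalSpec (ConeRing A)

/-- The quadric bundle `X` given by `A` is unirational: `ℂ(X)` embeds into a purely
transcendental extension of `ℂ`; equivalently this holds for its affine double cone. -/
def IsUnirationalQB (A : SymMat n r l l₀) : Prop :=
  IsUnirationalSpec (ConeRing A)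

/-- The coordinates (coefficients of the matrix entries) on the parameter space `SymMat`. -/
def symMatCoords (n r : ℕ) (l : Fin (r+2) → ℤ) (l₀ : ℤ) :
    Set (SymMat n r l l₀ → ℂ) :=
  {f | ∃ (i j : Fin (r+2)) (m : Fin (n+1) →₀ ℕ), f = fun A => coeff m (A.1 i j)}

/-- The euclidean (analytic) topology on the parameter space, induced from the coefficients. -/
def coeffTopology (n r : ℕ) (l : Fin (r+2) → ℤ) (l₀ : ℤ) :
    TopologicalSpace (SymMat n r l l₀) :=
  TopologicalSpace.induced
    (fun A (p : Fin (r+2) × Fin (r+2) × ((Fin (n+1)) →₀ ℕ)) => coeff p.2.2 (A.1 p.1 p.2.1))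
    inferInstance

/-- Dehomogenization `ℂ[x₀,…,xₙ] → ℂ(t₁,…,tₙ) = ℂ(ℙⁿ)`, `x₀ ↦ 1`, `x_i ↦ t_i`. -/
def dehom (n : ℕ) : PolyP n →ₐ[ℂ] RatFF n :=
  aeval fun i : Fin (n+1) =>
    if h : i = 0 then 1 else algebraMap (MvPolynomial (Fin n) ℂ) (RatFF n) (X (i.pred h))

/-- The quadric bundle given by `A` admits a rational section, i.e. its generic fibre,
the quadric `{∑ a_{ij}(x) z_i z_j = 0} ⊂ ℙ^{r+1}_{ℂ(ℙⁿ)}`, has a rational point. -/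
def HasRationalSection (A : SymMat n r l l₀) : Prop :=
  ∃ w : Fin (r+2) → RatFF n, w ≠ 0 ∧ ∑ i, ∑ j, dehom n (A.1 i j) * w i * w j = 0

end QB

namespace QBProof

/-! ### Pfister forms -/

/-- A quadratic form is *round-or-hyperbolic* if it is either hyperbolic (it has a totally
isotropic subspace of half the dimension) or anisotropic with all its nonzero values being
similarity factors. Pfister forms have this property. -/
def RoundOrHyp {E V : Type*} [Field E] [AddCommGroup V] [Module E V]
    (Q : QuadraticForm E V) : Prop :=
  (∃ W : Submodule E V, (∀ w ∈ W, Q w = 0) ∧ 2 * Module.finrank E W = Module.finrank E V) ∨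
  ((∀ v, Q v = 0 → v = 0) ∧ ∀ a, a ≠ 0 → ∃ M : V →ₗ[E] V, ∀ v, Q (M v) = Q a * Q v)

section
variable {E V V' : Type*} [Field E] [AddCommGroup V] [Module E V] [AddCommGroup V'] [Module E V']

theorem RoundOrHyp.of_equiv {Q : QuadraticForm E V} {Q' : QuadraticForm E V'}
    (h : RoundOrHyp Q) (e : V ≃ₗ[E] V') (he : ∀ v, Q' (e v) = Q v) : RoundOrHyp Q' := by
  have he' : ∀ v, Q (e.symm v) = Q' v := fun v => by rw [← he, e.apply_symm_apply]
  rcases h with ⟨W, hW, hd⟩ | ⟨h1, h2⟩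
  · refine Or.inl ⟨W.map (e : V →ₗ[E] V'), ?_, ?_⟩
    · rintro _ ⟨w, hw, rfl⟩
      exact (he w).trans (hW w hw)
    · rw [← e.finrank_eq, ← hd, LinearEquiv.finrank_map_eq]
  · refine Or.inr ⟨fun v hv => ?_, fun a ha => ?_⟩
    · rw [← he'] at hv
      simpa using h1 _ hv
    · obtain ⟨M, hM⟩ := h2 (e.symm a) (by simpa using ha)
      refine ⟨e ∘ₗ M ∘ₗ (e.symm : V' →ₗ[E] V), fun v => ?_⟩
      simp [he, hM, he']

/-- Passing from `Q` to `Q ⊥ wQ` preserves being round or hyperbolic. -/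
theorem RoundOrHyp.double [FiniteDimensional E V] {Q : QuadraticForm E V} (h : RoundOrHyp Q)
    (w : E) : RoundOrHyp (QuadraticMap.prod Q (w • Q)) := by
  have hQ : ∀ p : V × V, QuadraticMap.prod Q (w • Q) p = Q p.1 + w * Q p.2 := fun p => by simp
  rcases h with ⟨W, hW, hd⟩ | ⟨h1, h2⟩
  · refine Or.inl ⟨LinearMap.range (W.subtype.prodMap W.subtype), ?_, ?_⟩
    · rintro _ ⟨⟨a, b⟩, rfl⟩
      simp [hQ, hW a a.2, hW b b.2]
    · rw [LinearMap.finrank_range_of_inj, Module.finrank_prod, Module.finrank_prod, ← hd]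
      · ring
      · exact Function.Injective.prodMap W.injective_subtype W.injective_subtype
  · by_cases hiso : ∃ p : V × V, p ≠ 0 ∧ Q p.1 + w * Q p.2 = 0
    · obtain ⟨⟨a, b⟩, hp, hpz⟩ := hiso
      simp only at hpz
      have hb : b ≠ 0 := by
        rintro rfl
        simp only [QuadraticMap.map_zero, mul_zero, add_zero] at hpz
        exact hp (by simp [h1 a hpz])
      have hQb : Q b ≠ 0 := fun h => hb (h1 b h)
      have key : ∃ M : V →ₗ[E] V, ∀ v, Q (M v) = - w * Q v := by
        by_cases ha : a = 0
        · subst ha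
          have hw : w = 0 := by simpa [hQb] using hpz
          exact ⟨0, fun v => by simp [hw]⟩
        obtain ⟨M, hM⟩ := h2 a ha
        obtain ⟨M', hM'⟩ := h2 ((Q b)⁻¹ • b) (by simp [hQb, hb])
        refine ⟨M ∘ₗ M', fun v => ?_⟩
        have : Q a = - w * Q b := by linear_combination hpz
        rw [LinearMap.comp_apply, hM, hM', this, QuadraticMap.map_smul]
        simp only [smul_eq_mul]
        field_simp
      obtain ⟨M, hM⟩ := key
      refine Or.inl ⟨LinearMap.range (M.prod LinearMap.id), ?_, ?_⟩
      · rintro _ ⟨v, rfl⟩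
        simp [hM]
      · rw [LinearMap.finrank_range_of_inj, Module.finrank_prod, two_mul]
        intro x y hxy
        simpa using congrArg Prod.snd hxy
    · push Not at hiso
      refine Or.inr ⟨fun p hp => ?_, ?_⟩
      · by_contra hne
        exact hiso p hne (by simpa [hQ] using hp)
      rintro ⟨a, b⟩ hab
      by_cases hb : b = 0
      · subst hb
        have ha : a ≠ 0 := fun h => hab (by simp [h])
        obtain ⟨M, hM⟩ := h2 a ha
        refine ⟨M.prodMap M, fun v => ?_⟩
        simp only [hQ, LinearMap.prodMap_apply, hM, QuadraticMap.map_zero]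
        ring
      obtain ⟨B, hB⟩ := h2 b hb
      by_cases ha : a = 0
      · subst ha
        refine ⟨(w • B ∘ₗ LinearMap.snd E V V).prod (B ∘ₗ LinearMap.fst E V V), fun v => ?_⟩
        simp only [hQ, LinearMap.prod_apply, Function.prod_apply, LinearMap.smul_apply, LinearMap.comp_apply,
          LinearMap.fst_apply, LinearMap.snd_apply, QuadraticMap.map_smul, hB,
          QuadraticMap.map_zero, smul_eq_mul]
        ring
      obtain ⟨A, hA⟩ := h2 a ha
      have hα : Q a ≠ 0 := fun h => ha (h1 a h)
      have hβ : Q b ≠ 0 := fun h => hb (h1 b h)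
      have hBinj : Function.Injective B := by
        rw [← LinearMap.ker_eq_bot, LinearMap.ker_eq_bot']
        intro v hv
        have := hB v
        rw [hv, QuadraticMap.map_zero] at this
        exact h1 v ((mul_eq_zero.1 this.symm).resolve_left hβ)
      let Be := LinearEquiv.ofInjectiveEndo B hBinj
      have hBe : ∀ v, B (Be.symm v) = v := fun v => Be.apply_symm_apply v
      refine ⟨(A ∘ₗ LinearMap.fst E V V -
          (w * (Q b / Q a)) • (A ∘ₗ (Be.symm : V →ₗ[E] V) ∘ₗ A ∘ₗ LinearMap.snd E V V)).prod
          (B ∘ₗ LinearMap.fst E V V + A ∘ₗ LinearMap.snd E V V), fun v => ?_⟩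
      have hpolar : ∀ (M : V →ₗ[E] V) (c : E), (∀ v, Q (M v) = c * Q v) → ∀ x y,
          QuadraticMap.polar Q (M x) (M y) = c * QuadraticMap.polar Q x y := by
        intro M c hM x y
        simp only [QuadraticMap.polar, ← map_add, hM]
        ring
      have hadd : ∀ x y, Q (x + y) = Q x + Q y + QuadraticMap.polar Q x y := fun x y => by
        simp [QuadraticMap.polar]
      have hBs : ∀ v, Q b * Q (Be.symm v) = Q v := fun v => by rw [← hB, hBe]
      have e1 : QuadraticMap.polar Q (B v.1) (A v.2) =
          Q b * QuadraticMap.polar Q v.1 (Be.symm (A v.2)) := by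
        rw [← hpolar B _ hB, hBe]
      have e2 : QuadraticMap.polar Q (A v.1) (A (Be.symm (A v.2))) =
          Q a * QuadraticMap.polar Q v.1 (Be.symm (A v.2)) := hpolar A _ hA _ _
      have e3 := hBs (A v.2)
      rw [hA] at e3
      simp only [hQ, LinearMap.prod_apply, Function.prod_apply, LinearMap.smul_apply, LinearMap.comp_apply,
          LinearMap.fst_apply, LinearMap.snd_apply, LinearMap.add_apply, LinearMap.sub_apply, LinearMap.neg_apply,
          LinearEquiv.coe_coe, sub_eq_add_neg, hadd, QuadraticMap.map_neg,
          QuadraticMap.map_smul, hB, hA, QuadraticMap.polar_neg_right,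
          QuadraticMap.polar_smul_right, e1, e2, smul_eq_mul]
      have e4 : Q (Be.symm (A v.2)) = Q a * Q v.2 / Q b := by
        field_simp; linear_combination e3
      rw [e4]
      field_simp
      ring

end
/-- The coefficients `∏ᵢ (xᵢ₊₁ or x₀)` of the homogenized `n`-fold Pfister form. -/
def pc {n : ℕ} {R : Type*} [CommRing R] (x : Fin (n+1) → R) (ε : Fin n → Bool) : R :=
  ∏ i, if ε i then x i.succ else x 0

/-- The form with coefficients `pc x` is isotropic over `R`. -/
def PIso {n : ℕ} {R : Type*} [CommRing R] (x : Fin (n+1) → R) : Prop :=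
  ∃ v : (Fin n → Bool) → R, v ≠ 0 ∧ ∑ ε, pc x ε * v ε ^ 2 = 0

/-- The (dehomogenized) `n`-fold Pfister form `⟨⟨u₁,…,uₙ⟩⟩`, in the sign convention `⟨1, u⟩`. -/
def pfister {E : Type*} [Field E] {n : ℕ} (u : Fin n → E) :
    QuadraticForm E ((Fin n → Bool) → E) :=
  QuadraticMap.weightedSumSquares E (fun ε : Fin n → Bool => ∏ i, if ε i then u i else 1)

theorem pfister_apply {E : Type*} [Field E] {n : ℕ} (u : Fin n → E) (v) :
    pfister u v = ∑ ε : Fin n → Bool, (∏ i, if ε i then u i else 1) * v ε ^ 2 := by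
  simp [pfister, QuadraticMap.weightedSumSquares_apply, pow_two]

theorem sum_cons_bool {M : Type*} [AddCommMonoid M] {n : ℕ} (f : (Fin (n+1) → Bool) → M) :
    ∑ ε, f ε = ∑ ε, f (Fin.cons false ε) + ∑ ε, f (Fin.cons true ε) := by
  rw [← (Fin.consEquiv (fun _ : Fin (n+1) => Bool)).sum_comp, Fintype.sum_prod_type]
  simp [Fin.consEquiv, add_comm]

/-- Pfister forms are round or hyperbolic, by induction on the number of slots. -/
theorem roundOrHyp_pfister {E : Type*} [Field E] : ∀ {n : ℕ} (u : Fin n → E),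
    RoundOrHyp (pfister u)
  | 0, u => by
    refine Or.inr ⟨fun v hv => ?_, fun a ha => ⟨a default • LinearMap.id, fun v => ?_⟩⟩
    · rw [pfister_apply] at hv
      ext ε
      rw [Fintype.sum_subsingleton _ ε] at hv
      simpa using hv
    · rw [pfister_apply, pfister_apply, pfister_apply, Fintype.sum_subsingleton _ default,
        Fintype.sum_subsingleton _ default, Fintype.sum_subsingleton _ default]
      simp [mul_pow]
  | n+1, u => by
    let e : (((Fin n → Bool) → E) × ((Fin n → Bool) → E)) ≃ₗ[E] ((Fin (n+1) → Bool) → E) :=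
      { toFun := fun p ε => if ε 0 then p.2 (Fin.tail ε) else p.1 (Fin.tail ε)
        map_add' := fun p q => by ext ε; by_cases h : ε 0 <;> simp [h]
        map_smul' := fun c p => by ext ε; by_cases h : ε 0 <;> simp [h]
        invFun := fun v => (fun ε => v (Fin.cons false ε), fun ε => v (Fin.cons true ε))
        left_inv := fun p => by ext ε <;> simp
        right_inv := fun v => by
          ext ε
          have := Fin.cons_self_tail ε
          by_cases h : ε 0
          · rw [h] at this; simp [h, this]
          · simp only [Bool.not_eq_true] at h; rw [h] at this; simp [h, this] }
    refine ((roundOrHyp_pfister (Fin.tail u)).double (u 0)).of_equiv e fun p => ?_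
    rw [pfister_apply, sum_cons_bool]
    simp [e, pfister_apply, Fin.prod_univ_succ, Finset.mul_sum, mul_assoc, Fin.tail]

/-- An isotropic Pfister form has a totally isotropic subspace of half the dimension. -/
theorem PIso.hyperbolic {E : Type*} [Field E] {n : ℕ} {y : Fin (n+1) → E} (h0 : y 0 ≠ 0)
    (h : PIso y) : ∃ W : Submodule E ((Fin n → Bool) → E),
      (∀ w ∈ W, ∑ ε, pc y ε * w ε ^ 2 = 0) ∧ 2 * Module.finrank E W = 2 ^ n := by
  have key : ∀ v, ∑ ε, pc y ε * v ε ^ 2 = y 0 ^ n * pfister (fun i => y i.succ / y 0) v := by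
    intro v
    rw [pfister_apply, Finset.mul_sum]
    refine Finset.sum_congr rfl fun ε _ => ?_
    rw [← mul_assoc]
    congr 1
    rw [pc, ← Fin.prod_const n (y 0), ← Finset.prod_mul_distrib]
    refine Finset.prod_congr rfl fun i _ => ?_
    by_cases h : ε i
    · simp only [h, if_true]; field_simp
    · simp [h]
  obtain ⟨v, hv, hz⟩ := h
  rw [key] at hz
  rcases roundOrHyp_pfister (fun i => y i.succ / y 0) with ⟨W, hW, hd⟩ | ⟨h1, -⟩
  · exact ⟨W, fun w hw => by rw [key, hW w hw, mul_zero], by simpa using hd⟩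
  · exact (hv (h1 v ((mul_eq_zero.1 hz).resolve_left (pow_ne_zero _ h0)))).elim

end QBProof

namespace QBProof

/-! ### Quadratic lattices over a polynomial ring -/

section Hermite
open Matrix Polynomial

/-- The value `vᵀ G v`. -/
def qv {R ι : Type*} [CommRing R] [Fintype ι] (G : Matrix ι ι R) (v : ι → R) : R := v ⬝ᵥ G *ᵥ v

/-- `G` represents zero only trivially. -/
def MAniso {R ι : Type*} [CommRing R] [Fintype ι] (G : Matrix ι ι R) : Prop :=
  ∀ v, qv G v = 0 → v = 0

/-- The block matrix `diag(a, H)`. -/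
def blk {R : Type*} [CommRing R] {N : ℕ} (a : R) (H : Matrix (Fin N) (Fin N) R) :
    Matrix (Fin (N+1)) (Fin (N+1)) R :=
  Matrix.of (Fin.cons (Fin.cons a 0) fun i => Fin.cons 0 (H i))

/-- The lower triangular matrix with first column `(1, g)` and lower right block `a • 1`. -/
def low {R : Type*} [CommRing R] {N : ℕ} (a : R) (g : Fin N → R) :
    Matrix (Fin (N+1)) (Fin (N+1)) R :=
  Matrix.of (Fin.cons (Fin.cons 1 0) fun i => Fin.cons (g i) ((a • (1 : Matrix (Fin N) (Fin N) R)) i))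

section
variable {R : Type*} [CommRing R]

theorem qv_conj {ι : Type*} [Fintype ι] (P G : Matrix ι ι R) (v : ι → R) :
    qv (P * G * Pᵀ) v = qv G (v ᵥ* P) := by
  rw [qv, qv, ← mulVec_mulVec, ← mulVec_mulVec, mulVec_transpose, dotProduct_mulVec]

theorem qv_row {N : ℕ} (P G : Matrix (Fin (N+1)) (Fin (N+1)) R) :
    (P * G * Pᵀ) 0 0 = qv G (P 0) := by
  rw [qv, Matrix.mul_assoc, Matrix.mul_apply_eq_vecMul, Matrix.vecMul, dotProduct, dotProduct]
  rfl

theorem det_blk {N : ℕ} (a : R) (H : Matrix (Fin N) (Fin N) R) : (blk a H).det = a * H.det := by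
  rw [det_succ_row_zero, Fin.sum_univ_succ, Finset.sum_eq_zero]
  · simp [blk]
    congr 1
  · intro i _; simp [blk]

theorem det_low {N : ℕ} (a : R) (g : Fin N → R) : (low a g).det = a ^ N := by
  rw [det_succ_row_zero, Fin.sum_univ_succ, Finset.sum_eq_zero]
  · have : (low a g).submatrix (Fin.succAbove 0) (Fin.succAbove 0) = a • 1 := by
      ext i j; simp [low]
    have h2 : (low a g).submatrix Fin.succ (Fin.succAbove 0) = a • 1 := this
    rw [h2]; simp [low]
  · intro i _; simp [low]

theorem blk_conj {N : ℕ} (a : R) (P H : Matrix (Fin N) (Fin N) R) :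
    blk 1 P * blk a H * (blk 1 P)ᵀ = blk a (P * H * Pᵀ) := by
  have h1 : blk 1 P * blk a H = blk a (P * H) := by
    ext i j
    refine Fin.cases ?_ (fun i => ?_) i <;> refine Fin.cases ?_ (fun j => ?_) j <;>
      simp [blk, Matrix.mul_apply, Fin.sum_univ_succ]
  rw [h1]
  ext i j
  refine Fin.cases ?_ (fun i => ?_) i <;> refine Fin.cases ?_ (fun j => ?_) j <;>
      simp [blk, Matrix.mul_apply, Fin.sum_univ_succ]

/-- Completing the square: for symmetric `G` with corner `a`, the orthogonal complement of the
first basis vector carries the form `aG_{ij} - G_{0i}G_{0j}`, up to a factor. -/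
theorem low_conj {N : ℕ} (G : Matrix (Fin (N+1)) (Fin (N+1)) R) (hG : G.IsSymm) (t a : R)
    (h : G 0 0 * t = a) (g : Fin N → R) (hg : ∀ i, g i = - (t * G 0 i.succ)) :
    low a g * G * (low a g)ᵀ =
      blk (G 0 0) (Matrix.of fun i j => a * (a * G i.succ j.succ - t * G 0 i.succ * G 0 j.succ)) := by
  have hs : ∀ i, G (Fin.succ i) 0 = G 0 i.succ := fun i => hG.apply _ _
  ext i j
  refine Fin.cases ?_ (fun i => ?_) i <;> refine Fin.cases ?_ (fun j => ?_) j
  · simp [low, blk, Matrix.mul_apply, Fin.sum_univ_succ]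
  · simp [low, blk, Matrix.mul_apply, Fin.sum_univ_succ, Matrix.one_apply, hg, ← h]; ring
  · simp [low, blk, Matrix.mul_apply, Fin.sum_univ_succ, Matrix.one_apply, hg, ← h, hs]
    ring
  · simp [low, blk, Matrix.mul_apply, Fin.sum_univ_succ, Matrix.one_apply, hg, ← h, hs]
    ring

theorem MAniso.conj [IsDomain R] {ι : Type*} [Fintype ι] [DecidableEq ι] {G : Matrix ι ι R}
    (h : MAniso G) {P : Matrix ι ι R} (hP : P.det ≠ 0) : MAniso (P * G * Pᵀ) := by
  intro v hv
  rw [qv_conj] at hv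
  exact eq_zero_of_vecMul_eq_zero hP (h _ hv)

theorem IsSymm.conj {ι : Type*} [Fintype ι] {G : Matrix ι ι R} (h : G.IsSymm)
    (P : Matrix ι ι R) : (P * G * Pᵀ).IsSymm := by
  rw [Matrix.IsSymm, transpose_mul, transpose_mul, transpose_transpose, h.eq, Matrix.mul_assoc]

theorem qv_blk {N : ℕ} (a : R) (H : Matrix (Fin N) (Fin N) R) (c : R) (v : Fin N → R) :
    qv (blk a H) (Fin.cons c v) = a * c ^ 2 + qv H v := by
  simp [qv, blk, dotProduct, Matrix.mulVec, Fin.sum_univ_succ]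
  ring

theorem qv_smul {ι : Type*} [Fintype ι] (a : R) (H : Matrix ι ι R) (v : ι → R) :
    qv (a • H) v = a * qv H v := by
  simp [qv, smul_mulVec]

theorem MAniso.of_blk {N : ℕ} {a b : R} {H : Matrix (Fin N) (Fin N) R}
    (h : MAniso (blk a (b • H))) : MAniso H := by
  intro v hv
  have := h (Fin.cons 0 v) (by rw [qv_blk, qv_smul, hv]; ring)
  ext i
  simpa using congrFun this i.succ

theorem MAniso.corner_ne_zero [Nontrivial R] {N : ℕ} {G : Matrix (Fin (N+1)) (Fin (N+1)) R}
    (h : MAniso G) : G 0 0 ≠ 0 := by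
  intro h0
  have := h (Pi.single 0 1) (by simp [qv, h0])
  simpa using congrFun this 0

end

variable {κ : Type*} [Field κ]

/-- Hermite's bound in the polynomial ring: an anisotropic symmetric form of rank `N` over `κ[X]`
represents, by a member of a basis, a value of degree at most `deg (det G) / N`. -/
theorem hermite : ∀ (m : ℕ) (G : Matrix (Fin (m+1)) (Fin (m+1)) κ[X]), G.IsSymm → MAniso G →
    ∃ P : Matrix (Fin (m+1)) (Fin (m+1)) κ[X], IsUnit P.det ∧
      (m + 1) * (qv G (P 0)).natDegree ≤ G.det.natDegree
  | 0, G, _, _ => ⟨1, by simp, by simp [qv, dotProduct, Matrix.mulVec]⟩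
  | m+1, G₀, hS₀, hA₀ => by
    classical
    -- a unimodular matrix whose first row has a value of minimal degree
    let S : Set ℕ := {e | ∃ P : Matrix (Fin (m+2)) (Fin (m+2)) κ[X], IsUnit P.det ∧
      (qv G₀ (P 0)).natDegree = e}
    have hSne : S.Nonempty := ⟨_, 1, by simp, rfl⟩
    obtain ⟨P₀, hP₀, hP₀d⟩ := Nat.sInf_mem hSne
    refine ⟨P₀, hP₀, ?_⟩
    set d := sInf S with hd
    obtain ⟨G, hG⟩ : ∃ G, G = P₀ * G₀ * P₀ᵀ := ⟨_, rfl⟩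
    have hS : G.IsSymm := hG ▸ IsSymm.conj hS₀ P₀
    have hA : MAniso G := hG ▸ hA₀.conj hP₀.ne_zero
    have h00 : G 0 0 = qv G₀ (P₀ 0) := hG ▸ qv_row _ _
    have hdet : G.det.natDegree = G₀.det.natDegree := by
      have hu := natDegree_eq_zero_of_isUnit hP₀
      have hdne : P₀.det ≠ 0 := hP₀.ne_zero
      simp only [hG, det_mul, det_transpose]
      by_cases h0 : G₀.det = 0
      · simp [h0]
      · rw [natDegree_mul (mul_ne_zero hdne h0) hdne, natDegree_mul hdne h0, hu]; simp
    have hmin : ∀ P : Matrix (Fin (m+2)) (Fin (m+2)) κ[X], IsUnit P.det →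
        d ≤ (qv G (P 0)).natDegree := by
      intro P hP
      refine Nat.sInf_le ⟨P * P₀, by simpa using hP.mul hP₀, ?_⟩
      rw [hG, qv_conj]
      rfl
    rw [hP₀d, ← hdet]
    rcases Nat.eq_zero_or_pos d with hd0 | hdpos
    · simp [hd0]
    set a := G 0 0 with ha
    have had : a.natDegree = d := by rw [h00, hP₀d]
    have hane : a ≠ 0 := hA.corner_ne_zero
    have hlc := low_conj G hS 1 a (by simp [ha]) (fun i => - G 0 i.succ) (by simp)
    set H : Matrix (Fin (m+1)) (Fin (m+1)) κ[X] :=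
      Matrix.of fun i j => a * G i.succ j.succ - G 0 i.succ * G 0 j.succ with hH
    have hlc' : low a (fun i => - G 0 i.succ) * G * (low a (fun i => - G 0 i.succ))ᵀ =
        blk a (a • H) := by
      refine hlc.trans (congrArg (blk a) (Matrix.ext fun i j => ?_))
      rw [Matrix.of_apply, Matrix.smul_apply, hH, Matrix.of_apply, one_mul, smul_eq_mul]
    have hHA : MAniso H := by
      refine MAniso.of_blk (a := a) (b := a) ?_
      rw [← hlc']
      exact hA.conj (by rw [det_low]; exact pow_ne_zero _ hane)
    have hHS : H.IsSymm := by
      ext i j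
      simp [hH, hS.apply i.succ j.succ, mul_comm]
    have hHdet : H.det = a ^ m * G.det := by
      have := congrArg Matrix.det hlc'
      rw [det_mul, det_mul, det_transpose, det_low, det_blk, det_smul, Fintype.card_fin] at this
      have hpp : a ^ (m + 2) ≠ 0 := pow_ne_zero _ hane
      refine mul_left_cancel₀ hpp ?_
      linear_combination -this
    obtain ⟨P', hP', hP'd⟩ := hermite m H hHS hHA
    set f := P' 0 with hf
    set β := qv H f with hβ
    have hβne : β ≠ 0 := by
      intro h
      have := hHA f h
      have : P'.det = 0 := det_eq_zero_of_row_eq_zero 0 (fun j => congrFun this j)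
      exact hP'.ne_zero this
    -- the projection identity `a Q(c, v) = H(v) + B(e₀, (c, v))²`
    have hproj : ∀ (c : κ[X]) (v : Fin (m+1) → κ[X]),
        a * qv G (Fin.cons c v) = qv H v + (c * a + ∑ i, G 0 i.succ * v i) ^ 2 := by
      intro c v
      have hs : ∀ i, G (Fin.succ i) 0 = G 0 i.succ := fun i => hS.apply _ _
      have e1 : qv G (Fin.cons c v) = c ^ 2 * a + 2 * c * (∑ i, G 0 i.succ * v i) +
          ∑ i, ∑ j, v i * (G i.succ j.succ * v j) := by
        simp only [qv, dotProduct, Matrix.mulVec, Fin.sum_univ_succ (n := m+1), Fin.cons_zero,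
          Fin.cons_succ, hs, mul_add, Finset.sum_add_distrib, Finset.mul_sum, ← ha]
        have : ∑ i, v i * (G 0 i.succ * c) = ∑ i, c * (G 0 i.succ * v i) :=
          Finset.sum_congr rfl fun i _ => by ring
        rw [this]
        simp only [mul_assoc, ← Finset.mul_sum]
        ring
      have e2 : qv H v = a * (∑ i, ∑ j, v i * (G i.succ j.succ * v j)) -
          (∑ i, G 0 i.succ * v i) ^ 2 := by
        rw [pow_two, Finset.sum_mul_sum]
        simp only [qv, dotProduct, Matrix.mulVec, hH, Matrix.of_apply, Finset.mul_sum,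
          ← Finset.sum_sub_distrib]
        refine Finset.sum_congr rfl fun i _ => Finset.sum_congr rfl fun j _ => by ring
      rw [e1, e2]; ring
    let b₀ := ∑ i, G 0 i.succ * f i
    let c := - (b₀ / a)
    have hbc : c * a + b₀ = b₀ % a := by
      have := EuclideanDomain.div_add_mod b₀ a
      simp only [c]; linear_combination -this
    have hbdeg : (b₀ % a).natDegree < d := by
      rw [← had]
      exact Polynomial.natDegree_mod_lt _ (by omega)
    -- the vector `(c, f)` is a member of a basis
    obtain ⟨P'', hP'', hP''0⟩ : ∃ P'' : Matrix (Fin (m+2)) (Fin (m+2)) κ[X],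
        IsUnit P''.det ∧ P'' 0 = Fin.cons c f := by
      let P1 := (blk 1 P').submatrix (Equiv.swap (0 : Fin (m+2)) 1) id
      refine ⟨P1.updateRow 0 (P1 0 + c • P1 1), ?_, ?_⟩
      · rw [det_updateRow_add_smul_self _ (by simp), det_permute, det_blk, one_mul]
        exact IsUnit.mul (by simp [Equiv.Perm.sign_swap]) hP'
      · have hs0 : Equiv.swap (0 : Fin (m+2)) 1 0 = 1 := Equiv.swap_apply_left _ _
        have hs1 : Equiv.swap (0 : Fin (m+2)) 1 1 = 0 := Equiv.swap_apply_right _ _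
        ext j
        have h1 : (1 : Fin (m+2)) = Fin.succ 0 := rfl
        rw [updateRow_self]
        simp only [P1, Pi.add_apply, Pi.smul_apply, Matrix.submatrix_apply, hs0, hs1, id]
        refine Fin.cases ?_ (fun j => ?_) j
        · simp [blk, h1, -Fin.succ_zero_eq_one, -Fin.succ_zero_eq_one']
        · simp [blk, h1, hf, -Fin.succ_zero_eq_one, -Fin.succ_zero_eq_one']
    have h1 := hmin P'' hP''
    rw [hP''0] at h1
    have h2 := hproj c f
    rw [hbc, ← hβ] at h2
    have hq : qv G (Fin.cons c f) ≠ 0 := by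
      intro h
      rw [h] at h1; simp at h1; omega
    have h3 : (a * qv G (Fin.cons c f)).natDegree = d + (qv G (Fin.cons c f)).natDegree := by
      rw [natDegree_mul hane hq, had]
    have h4 : 2 * d ≤ β.natDegree := by
      by_contra hlt
      push Not at hlt
      have h5 : ((b₀ % a) ^ 2).natDegree < 2 * d := by
        rw [natDegree_pow]; omega
      have := natDegree_add_le β ((b₀ % a) ^ 2)
      rw [← h2, h3] at this
      have h6 := max_lt hlt h5
      omega
    have hGdet : G.det ≠ 0 := by
      intro h0
      obtain ⟨v, hv, hv0⟩ := Matrix.exists_mulVec_eq_zero_iff.2 h0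
      exact hv (hA v (by rw [qv, hv0]; simp))
    rw [hHdet, natDegree_mul (pow_ne_zero _ hane) hGdet, natDegree_pow, had] at hP'd
    have h7 : (m + 1) * (2 * d) ≤ m * d + G.det.natDegree :=
      (Nat.mul_le_mul_left _ h4).trans hP'd
    push_cast
    nlinarith

/-- Harder's theorem for the affine line in the anisotropic case: a unimodular anisotropic
symmetric form over `κ[X]` comes, up to congruence, from a diagonal form over `κ`. -/
theorem harder : ∀ (N : ℕ) (G : Matrix (Fin N) (Fin N) κ[X]), G.IsSymm → MAniso G →
    G.det.natDegree = 0 → ∃ P : Matrix (Fin N) (Fin N) κ[X], IsUnit P.det ∧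
      ∃ c : Fin N → κ, P * G * Pᵀ = Matrix.diagonal (fun i => Polynomial.C (c i))
  | 0, G, _, _, _ => ⟨1, by simp, Fin.elim0, Subsingleton.elim _ _⟩
  | N+1, G₀, hS₀, hA₀, hd => by
    obtain ⟨P, hP, hPd⟩ := hermite N G₀ hS₀ hA₀
    let G := P * G₀ * Pᵀ
    have hS : G.IsSymm := IsSymm.conj hS₀ P
    have hA : MAniso G := hA₀.conj hP.ne_zero
    have h00 : G 0 0 = qv G₀ (P 0) := qv_row _ _
    have hdeg : (G 0 0).natDegree = 0 := by
      rw [h00]; rw [hd] at hPd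
      simpa using hPd
    obtain ⟨c₀, hc₀⟩ := natDegree_eq_zero.1 hdeg
    have hc₀ne : c₀ ≠ 0 := by
      rintro rfl
      exact hA.corner_ne_zero (by rw [← hc₀, Polynomial.C_0])
    have hcc : G 0 0 * Polynomial.C c₀⁻¹ = 1 := by
      rw [← hc₀, ← Polynomial.C_mul, mul_inv_cancel₀ hc₀ne, Polynomial.C_1]
    have hlc := low_conj G hS (Polynomial.C c₀⁻¹) 1 hcc (fun i => - (Polynomial.C c₀⁻¹ * G 0 i.succ)) (fun i => rfl)
    set L := low (1 : κ[X]) (fun i => - (Polynomial.C c₀⁻¹ * G 0 i.succ)) with hL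
    have hLdet : L.det = 1 := by rw [hL, det_low, one_pow]
    set H : Matrix (Fin N) (Fin N) κ[X] :=
      Matrix.of fun i j => 1 * (1 * G i.succ j.succ - Polynomial.C c₀⁻¹ * G 0 i.succ * G 0 j.succ) with hH
    have hHA : MAniso H := by
      refine MAniso.of_blk (a := G 0 0) (b := 1) ?_
      rw [one_smul, ← hlc]
      exact hA.conj (by rw [hLdet]; exact one_ne_zero)
    have hHS : H.IsSymm := by
      ext i j
      simp [hH, hS.apply i.succ j.succ, mul_comm, mul_left_comm]
    have hHdet : H.det.natDegree = 0 := by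
      have h1 : G 0 0 * H.det = P.det * P.det * G₀.det := by
        have := congrArg Matrix.det hlc
        rw [det_mul, det_mul, det_transpose, hLdet, det_blk] at this
        rw [← this]; simp [G]; ring
      have hu : IsUnit (G 0 0) := IsUnit.of_mul_eq_one _ hcc
      have hG₀ : IsUnit G₀.det := by
        have hGdet : G₀.det ≠ 0 := by
          intro h0
          obtain ⟨v, hv, hv0⟩ := Matrix.exists_mulVec_eq_zero_iff.2 h0
          exact hv (hA₀ v (by rw [qv, hv0]; simp))
        rw [Polynomial.isUnit_iff_degree_eq_zero, degree_eq_natDegree hGdet, hd]; rfl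
      have : IsUnit (G 0 0 * H.det) := by
        rw [h1]; exact (hP.mul hP).mul hG₀
      exact natDegree_eq_zero_of_isUnit (isUnit_of_mul_isUnit_right this)
    obtain ⟨P', hP', c, hc⟩ := harder N H hHS hHA hHdet
    refine ⟨blk 1 P' * L * P, ?_, Fin.cons c₀ c, ?_⟩
    · rw [det_mul, det_mul, det_blk, hLdet, one_mul, mul_one]; exact hP'.mul hP
    · have : blk 1 P' * L * P * G₀ * (blk 1 P' * L * P)ᵀ =
          blk 1 P' * (L * G * Lᵀ) * (blk 1 P')ᵀ := by
        simp only [G, transpose_mul, Matrix.mul_assoc]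
      rw [this, hlc, blk_conj, hc, ← hc₀]
      ext i j
      refine Fin.cases ?_ (fun i => ?_) i <;> refine Fin.cases ?_ (fun j => ?_) j <;>
        simp [blk, Matrix.diagonal_apply, Fin.succ_ne_zero, (Fin.succ_ne_zero _).symm]

end Hermite
end QBProof

namespace QBProof

/-! ### Power series and square roots -/

/-- A power series whose constant coefficient is a nonzero square is a square. -/
theorem ps_sqrt {K : Type*} [Field K] [CharZero K] (f : PowerSeries K) (c : K) (hc : c ≠ 0)
    (h : PowerSeries.constantCoeff f = c ^ 2) : ∃ g : PowerSeries K, g ^ 2 = f ∧ g ≠ 0 := by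
  let b := PowerSeries.binomialSeries K (1/2 : ℚ)
  have hb : b * b = 1 + PowerSeries.X := by
    rw [← PowerSeries.binomialSeries_add, show (1/2 + 1/2 : ℚ) = ((1 : ℕ) : ℚ) by norm_num,
      PowerSeries.binomialSeries_nat, pow_one]
  let t : PowerSeries K := PowerSeries.C (c ^ 2)⁻¹ * f - 1
  have ht : PowerSeries.HasSubst t := by
    apply PowerSeries.HasSubst.of_constantCoeff_zero'
    simp [t, h, hc]
  have h1 : (b.subst t) * (b.subst t) = 1 + t := by
    rw [← PowerSeries.subst_mul ht, hb, PowerSeries.subst_add ht, PowerSeries.subst_X ht,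
      ← PowerSeries.coe_substAlgHom ht, map_one]
  have h2 : (PowerSeries.C c * b.subst t) ^ 2 = f := by
    have : (PowerSeries.C c) ^ 2 * PowerSeries.C (c^2)⁻¹ = (1 : PowerSeries K) := by
      rw [← map_pow, ← map_mul, mul_inv_cancel₀ (pow_ne_zero 2 hc), map_one]
    rw [mul_pow, pow_two (b.subst t), h1]
    simp only [t]
    linear_combination f * this
  refine ⟨_, h2, ?_⟩
  intro h0
  rw [h0] at h2
  rw [← h2] at h
  simp at h
  exact hc (pow_eq_zero_iff two_ne_zero |>.1 h.symm)

/-- In a valuation ring every nonzero vector over the fraction field is a multiple of an integral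
vector one of whose entries is `1`. -/
theorem exists_normalize (O : Type*) {E ι : Type*} [CommRing O] [IsDomain O] [ValuationRing O]
    [Field E] [Algebra O E] [IsFractionRing O E] [Finite ι] (v : ι → E) (hv : v ≠ 0) :
    ∃ i₀, v i₀ ≠ 0 ∧ ∃ v' : ι → O, v' i₀ = 1 ∧ ∀ i, v i = v i₀ * algebraMap O E (v' i) := by
  classical
  obtain ⟨j, hj⟩ := Function.ne_iff.1 hv
  haveI : Nonempty ι := ⟨j⟩
  obtain ⟨i₀, hi₀⟩ := Finite.exists_max fun i => ValuationRing.valuation O E (v i)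
  have h0 : v i₀ ≠ 0 := by
    intro h
    have := hi₀ j
    rw [h, map_zero, le_zero_iff, map_eq_zero] at this
    exact hj this
  have : ∀ i, ∃ b : O, algebraMap O E b = v i / v i₀ := by
    intro i
    rw [← Set.mem_range, ← RingHom.coe_range, SetLike.mem_coe]
    have : v i / v i₀ ∈ (ValuationRing.valuation O E).integer := by
      rw [Valuation.mem_integer_iff, map_div₀]
      exact div_le_one_of_le₀ (hi₀ i) zero_le
    obtain ⟨b, hb⟩ := (ValuationRing.mem_integer_iff O E _).1 this
    exact ⟨b, hb⟩
  choose b hb using this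
  refine ⟨i₀, h0, Function.update b i₀ 1, by simp, fun i => ?_⟩
  by_cases hi : i = i₀
  · subst hi; simp
  · rw [Function.update_of_ne hi, hb, mul_div_cancel₀ _ h0]

section iso
variable {n : ℕ}

theorem pc_map {R S : Type*} [CommRing R] [CommRing S] (f : R →+* S) (x : Fin (n+1) → R)
    (ε : Fin n → Bool) : pc (fun i => f (x i)) ε = f (pc x ε) := by
  simp only [pc, map_prod]
  exact Finset.prod_congr rfl fun i _ => by split_ifs <;> rfl

theorem pc_mul {R : Type*} [CommRing R] (x y : Fin (n+1) → R) (ε : Fin n → Bool) :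
    pc (fun i => x i * y i) ε = pc x ε * pc y ε := by
  simp only [pc, ← Finset.prod_mul_distrib]
  exact Finset.prod_congr rfl fun i _ => by split_ifs <;> rfl

theorem pc_const {R : Type*} [CommRing R] (e : R) (ε : Fin n → Bool) :
    pc (fun _ : Fin (n+1) => e) ε = e ^ n := by
  simp [pc]

theorem PIso.map {R S : Type*} [CommRing R] [CommRing S] (f : R →+* S)
    (hf : Function.Injective f) {x : Fin (n+1) → R} (h : PIso x) : PIso (fun i => f (x i)) := by
  obtain ⟨v, hv, hz⟩ := h
  refine ⟨fun ε => f (v ε), fun h0 => hv ?_, ?_⟩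
  · ext ε
    exact hf (by simpa using congrFun h0 ε)
  · simp only [pc_map, ← map_pow, ← map_mul, ← map_sum, hz, map_zero]

theorem PIso.smul_iff {R : Type*} [CommRing R] [IsDomain R] {e : R} (he : e ≠ 0)
    (x : Fin (n+1) → R) : PIso (fun i => e * x i) ↔ PIso x := by
  have : ∀ v : (Fin n → Bool) → R, ∑ ε, pc (fun i => e * x i) ε * v ε ^ 2 =
      e ^ n * ∑ ε, pc x ε * v ε ^ 2 := by
    intro v
    rw [Finset.mul_sum]
    exact Finset.sum_congr rfl fun ε _ => by rw [pc_mul, pc_const, mul_assoc]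
  simp only [PIso, this, mul_eq_zero, pow_eq_zero_iff', he, false_and, false_or, ne_eq]

/-- Clearing denominators. -/
theorem exists_clear (R : Type*) {K ι : Type*} [CommRing R] [IsDomain R] [Field K] [Algebra R K]
    [IsFractionRing R K] [Finite ι] (v : ι → K) :
    ∃ b : R, b ≠ 0 ∧ ∃ v' : ι → R, ∀ i, algebraMap R K (v' i) = algebraMap R K b * v i := by
  obtain ⟨b, hb⟩ := IsLocalization.exist_integer_multiples_of_finite (nonZeroDivisors R) v
  choose v' hv' using hb
  exact ⟨b, nonZeroDivisors.ne_zero b.2, v', fun i => by rw [hv', Algebra.smul_def]⟩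

theorem exists_clear_ne (R : Type*) {K ι : Type*} [CommRing R] [IsDomain R] [Field K] [Algebra R K]
    [IsFractionRing R K] [Finite ι] (v : ι → K) (hv : v ≠ 0) :
    ∃ b : R, b ≠ 0 ∧ ∃ v' : ι → R, v' ≠ 0 ∧
      ∀ i, algebraMap R K (v' i) = algebraMap R K b * v i := by
  obtain ⟨b, hb, v', hv'⟩ := exists_clear R v
  refine ⟨b, hb, v', fun h => hv ?_, hv'⟩
  ext i
  have := hv' i
  rw [h, Pi.zero_apply, map_zero, eq_comm, mul_eq_zero] at this
  exact this.resolve_left fun h => hb (IsFractionRing.injective R K (by simpa using h))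

theorem diag_clear (R : Type*) {K ι : Type*} [CommRing R] [IsDomain R] [Field K] [Algebra R K]
    [IsFractionRing R K] [Fintype ι] (a : ι → R) (v : ι → K) (hv : v ≠ 0)
    (h : ∑ i, algebraMap R K (a i) * v i ^ 2 = 0) :
    ∃ v' : ι → R, v' ≠ 0 ∧ ∑ i, a i * v' i ^ 2 = 0 := by
  obtain ⟨b, hb, v', hv', hbv⟩ := exists_clear_ne R v hv
  refine ⟨v', hv', IsFractionRing.injective R K ?_⟩
  simp only [map_sum, map_mul, map_pow, hbv, map_zero, mul_pow]
  rw [← mul_zero (algebraMap R K b ^ 2), ← h, Finset.mul_sum]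
  exact Finset.sum_congr rfl fun i _ => by ring

theorem PIso.of_frac (R : Type*) {K : Type*} [CommRing R] [IsDomain R] [Field K] [Algebra R K]
    [IsFractionRing R K] {x : Fin (n+1) → R} (h : PIso (fun i => algebraMap R K (x i))) :
    PIso x := by
  obtain ⟨v, hv, hz⟩ := h
  simp only [pc_map] at hz
  exact diag_clear R _ v hv hz

theorem PIso.of_zero {R : Type*} [CommRing R] [Nontrivial R] (hn : 0 < n) {x : Fin (n+1) → R}
    {i : Fin (n+1)} (hi : x i = 0) : PIso x := by
  classical
  obtain ⟨ε, hε⟩ : ∃ ε, pc x ε = 0 := by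
    refine Fin.cases (fun h => ⟨fun _ => false, ?_⟩) (fun j h => ⟨fun _ => true, ?_⟩) i hi
    · simp [pc, h, hn.ne']
    · exact Finset.prod_eq_zero (Finset.mem_univ j) (by simpa using h)
  refine ⟨Pi.single ε 1, by simp, ?_⟩
  rw [Finset.sum_eq_single ε] <;> simp +contextual [hε]

theorem PIso.of_algClosed {K : Type*} [Field K] [IsAlgClosed K] (hn : 0 < n)
    (x : Fin (n+1) → K) : PIso x := by
  classical
  by_cases h0 : x 0 = 0
  · exact .of_zero hn h0
  let ε₁ : Fin n → Bool := fun _ => true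
  let ε₀ : Fin n → Bool := fun _ => false
  have hne : ε₁ ≠ ε₀ := fun h => by simpa [ε₁, ε₀] using congrFun h ⟨0, hn⟩
  have hpc : pc x ε₀ ≠ 0 := by simp [pc, ε₀, h0]
  obtain ⟨s, hs⟩ := IsAlgClosed.exists_pow_nat_eq (-(pc x ε₁ / pc x ε₀)) (n := 2) (by simp)
  refine ⟨Pi.single ε₁ 1 + Pi.single ε₀ s, fun h => ?_, ?_⟩
  · have := congrFun h ε₁
    simp [hne] at this
  · rw [← Finset.sum_subset (Finset.subset_univ {ε₁, ε₀}), Finset.sum_pair hne]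
    · simp [hne, hne.symm, hs]
      field_simp; ring
    · intro e _ he
      simp only [Finset.mem_insert, Finset.mem_singleton, not_or] at he
      simp [he.1, he.2]

/-- An isotropic vector of a diagonal form over `K⟦X⟧` yields one of the reduced form. -/
theorem ps_diag_reduce {K ι : Type*} [Field K] [Fintype ι] (a : ι → PowerSeries K)
    (v : ι → PowerSeries K) (hv : v ≠ 0) (h : ∑ i, a i * v i ^ 2 = 0) :
    ∃ u : ι → K, u ≠ 0 ∧ ∑ i, PowerSeries.constantCoeff (a i) * u i ^ 2 = 0 := by
  let E := FractionRing (PowerSeries K)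
  have hinj := IsFractionRing.injective (PowerSeries K) E
  obtain ⟨i₀, h0, v', h1, h2⟩ := exists_normalize (PowerSeries K)
    (fun i => algebraMap (PowerSeries K) E (v i)) (fun h => hv (by
      ext1 i; exact hinj (by simpa using congrFun h i)))
  simp only [ne_eq] at h0
  refine ⟨fun i => PowerSeries.constantCoeff (v' i), fun h => ?_, ?_⟩
  · have := congrFun h i₀
    simp [h1] at this
  · simp only [← map_pow, ← map_mul, ← map_sum]
    have h3 : v i₀ ^ 2 * ∑ i, a i * v' i ^ 2 = 0 := by
      rw [← h, Finset.mul_sum]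
      refine Finset.sum_congr rfl fun i _ => ?_
      have : v i = v i₀ * v' i := hinj (by simpa using h2 i)
      rw [this]; ring
    rw [(mul_eq_zero.1 h3).resolve_left (pow_ne_zero 2 fun h => h0 (by rw [h, map_zero])), map_zero]

theorem PIso.reduce {K : Type*} [Field K] {y : Fin (n+1) → PowerSeries K} (h : PIso y) :
    PIso (fun i => PowerSeries.constantCoeff (y i)) := by
  obtain ⟨v, hv, hz⟩ := h
  simp only [PIso, pc_map]
  exact ps_diag_reduce _ v hv hz

end iso

/-! ### The special quadric bundle -/

/-- Combinatorial data of the special quadric bundle: degrees of the diagonal entries and the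
labelling of these entries by slots of the `n`-fold Pfister form. -/
structure Dat (n r : ℕ) where
  /-- degrees -/
  d : Fin (r+2) → ℕ
  /-- slots -/
  ε : Fin (r+2) → Fin n → Bool
  inj : Function.Injective ε
  ε0 : ε 0 = fun _ => true
  ε1 : ε 1 = fun _ => false
  par : ∀ i j, d i % 2 = d j % 2
  le_d : ∀ i, 2 * n ≤ d i
  two_le : 2 ≤ n

variable {n r : ℕ}

/-- The diagonal entries of the special quadric bundle. All of them are, up to powers of `x₀`,
coefficients of the Pfister form, except for the entry `1`. -/
def Dat.sp (D : Dat n r) {R : Type*} [CommRing R] (ν : R) (x : Fin (n+1) → R) (i : Fin (r+2)) : R :=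
  if i = 1 then x 0 ^ (D.d 1 - 2 * n) * (ν * (∑ j, x j) ^ (2 * n) - x 0 ^ n * ∏ j : Fin n, x j.succ)
  else x 0 ^ (D.d i - n) * pc x (D.ε i)

/-- The fibre over `x` of the special quadric bundle has a point. -/
def Dat.QIso (D : Dat n r) {R : Type*} [CommRing R] (ν : R) (x : Fin (n+1) → R) : Prop :=
  ∃ z : Fin (r+2) → R, z ≠ 0 ∧ ∑ i, D.sp ν x i * z i ^ 2 = 0

theorem Dat.sp_map (D : Dat n r) {R S : Type*} [CommRing R] [CommRing S] (f : R →+* S)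
    (ν : R) (x : Fin (n+1) → R) (i) : D.sp (f ν) (fun i => f (x i)) i = f (D.sp ν x i) := by
  unfold Dat.sp
  split_ifs
  · simp
  · simp [pc_map]

theorem Dat.QIso.map (D : Dat n r) {R S : Type*} [CommRing R] [CommRing S] (f : R →+* S)
    (hf : Function.Injective f) {ν : R} {x : Fin (n+1) → R} (h : D.QIso ν x) :
    D.QIso (f ν) (fun i => f (x i)) := by
  obtain ⟨v, hv, hz⟩ := h
  refine ⟨fun ε => f (v ε), fun h0 => hv ?_, ?_⟩
  · ext ε
    exact hf (by simpa using congrFun h0 ε)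
  · simp only [D.sp_map, ← map_pow, ← map_mul, ← map_sum, hz, map_zero]

theorem Dat.QIso.of_frac (D : Dat n r) (R : Type*) {K : Type*} [CommRing R] [IsDomain R] [Field K]
    [Algebra R K] [IsFractionRing R K] {ν : R} {x : Fin (n+1) → R}
    (h : D.QIso (algebraMap R K ν) (fun i => algebraMap R K (x i))) : D.QIso ν x := by
  obtain ⟨v, hv, hz⟩ := h
  simp only [D.sp_map] at hz
  exact diag_clear R _ v hv hz

theorem Dat.sp_smul (D : Dat n r) {R : Type*} [CommRing R] (ν e : R) (x : Fin (n+1) → R) (i) :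
    D.sp ν (fun i => e * x i) i = e ^ (D.d i) * D.sp ν x i := by
  have h1 := D.le_d i
  have h2 := D.le_d 1
  unfold Dat.sp
  split_ifs with h
  · subst h
    rw [← Finset.mul_sum, Finset.prod_mul_distrib, Finset.prod_const, Finset.card_univ,
      Fintype.card_fin]
    have : e ^ D.d 1 = e ^ (D.d 1 - 2 * n) * e ^ n * e ^ n := by
      rw [← pow_add, ← pow_add]; congr 1; omega
    rw [this, mul_pow, mul_pow, mul_pow]; ring
  · have : e ^ D.d i = e ^ (D.d i - n) * e ^ n := by
      rw [← pow_add]; congr 1; omega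
    rw [pc_mul, pc_const, this, mul_pow]; ring

theorem Dat.QIso.of_smul (D : Dat n r) {R : Type*} [CommRing R] [IsDomain R] {ν e : R}
    (he : e ≠ 0) {x : Fin (n+1) → R} (h : D.QIso ν (fun i => e * x i)) : D.QIso ν x := by
  obtain ⟨v, hv, hz⟩ := h
  obtain ⟨i₀, hi₀⟩ := Function.ne_iff.1 hv
  refine ⟨fun i => e ^ (D.d i / 2) * v i, fun h0 => hi₀ ?_, ?_⟩
  · have := congrFun h0 i₀
    simpa [he] using this
  · have h2 : e ^ (D.d 0 % 2) * ∑ i, D.sp ν x i * (e ^ (D.d i / 2) * v i) ^ 2 = 0 := by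
      rw [← hz, Finset.mul_sum]
      refine Finset.sum_congr rfl fun i _ => ?_
      have : e ^ D.d i = e ^ (D.d 0 % 2) * (e ^ (D.d i / 2)) ^ 2 := by
        rw [← pow_mul, ← pow_add]; congr 1
        have := D.par i 0; omega
      rw [D.sp_smul, this]; ring
    exact (mul_eq_zero.1 h2).resolve_left (pow_ne_zero _ he)

/-- Over a complete local base the Pfister form is unramified wherever the special quadric has a
point: if its reduction is isotropic then so is the form itself. -/
theorem Dat.piso_lift (D : Dat n r) {K : Type*} [Field K] [CharZero K] {μ : K} (hμ : μ ≠ 0)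
    {y : Fin (n+1) → PowerSeries K} (hy : ∃ i, PowerSeries.constantCoeff (y i) ≠ 0)
    (hq : D.QIso (PowerSeries.C (μ ^ 2)) y)
    (hz : PIso (fun i => PowerSeries.constantCoeff (y i))) : PIso y := by
  classical
  have hn : 0 < n := by have := D.two_le; omega
  by_cases hall : ∀ i, PowerSeries.constantCoeff (y i) ≠ 0
  -- all reductions are units: each `yᵢ` is a constant times a square
  · have : ∀ i, ∃ s : PowerSeries K, s ^ 2 =
        PowerSeries.C (PowerSeries.constantCoeff (y i))⁻¹ * y i ∧ s ≠ 0 := fun i =>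
      ps_sqrt _ 1 one_ne_zero (by simp [hall i])
    choose s hs hs0 using this
    have hy2 : ∀ i, y i = PowerSeries.C (PowerSeries.constantCoeff (y i)) * s i ^ 2 := by
      intro i
      rw [hs, ← mul_assoc, ← map_mul, mul_inv_cancel₀ (hall i), map_one, one_mul]
    have hpcs : ∀ ε, pc s ε ≠ 0 := fun ε => Finset.prod_ne_zero_iff.2 fun i _ => by
      split_ifs <;> exact hs0 _
    obtain ⟨v, hv, hv0⟩ := hz
    let P := ∏ ε : Fin n → Bool, pc s ε
    have hP : ∀ ε, pc s ε * ∏ e ∈ Finset.univ.erase ε, pc s e = P := fun ε =>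
      Finset.mul_prod_erase _ _ (Finset.mem_univ ε)
    refine ⟨fun ε => PowerSeries.C (v ε) * ∏ e ∈ Finset.univ.erase ε, pc s e, fun h => hv ?_, ?_⟩
    · ext ε
      have := congrFun h ε
      simp only [Pi.zero_apply, mul_eq_zero, Finset.prod_eq_zero_iff, hpcs] at this
      simpa using this
    · have h1 : ∀ ε, pc y ε = PowerSeries.C (pc (fun i => PowerSeries.constantCoeff (y i)) ε) *
          pc s ε ^ 2 := by
        intro ε
        rw [← pc_map, pow_two, ← pc_mul, ← pc_mul]
        congr 1
        ext1 i
        rw [← pow_two]; exact hy2 i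
      have h2 : ∑ ε, pc y ε * (PowerSeries.C (v ε) * ∏ e ∈ Finset.univ.erase ε, pc s e) ^ 2 =
          P ^ 2 * PowerSeries.C (∑ ε, pc (fun i => PowerSeries.constantCoeff (y i)) ε * v ε ^ 2) := by
        rw [map_sum, Finset.mul_sum]
        refine Finset.sum_congr rfl fun ε _ => ?_
        rw [h1, ← hP ε, map_mul, map_pow]; ring
      rw [h2, hv0, map_zero, mul_zero]
  push Not at hall
  obtain ⟨i₁, hi₁⟩ := hall
  by_cases hzero : ∃ i, y i = 0
  · exact .of_zero hn hzero.choose_spec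
  push Not at hzero
  have hprod0 : PowerSeries.constantCoeff (y 0 ^ n * ∏ j : Fin n, y j.succ) = 0 := by
    rw [map_mul, map_pow, map_prod]
    refine Fin.cases (fun h => ?_) (fun j h => ?_) i₁ hi₁
    · rw [h, zero_pow hn.ne', zero_mul]
    · rw [Finset.prod_eq_zero (Finset.mem_univ j) h, mul_zero]
  by_cases hsum : PowerSeries.constantCoeff (∑ j, y j) = 0
  -- here `⟨y₀, …, yₙ⟩`, a subform up to scaling, is isotropic
  · obtain ⟨k, hk⟩ := hy
    have hu : y k * (y k)⁻¹ = 1 := PowerSeries.mul_inv_cancel _ hk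
    obtain ⟨s, hs, -⟩ := ps_sqrt (-(∑ j ∈ Finset.univ.erase k, y j) * (y k)⁻¹) 1 one_ne_zero (by
      have := Finset.add_sum_erase Finset.univ y (Finset.mem_univ k)
      rw [← this, map_add] at hsum
      rw [map_mul, map_neg, PowerSeries.constantCoeff_inv, one_pow]
      field_simp
      linear_combination -hsum)
    let w : Fin (n+1) → PowerSeries K := Function.update (fun _ => 1) k s
    have hw : ∑ j, y j * w j ^ 2 = 0 := by
      rw [← Finset.add_sum_erase Finset.univ _ (Finset.mem_univ k)]
      have : ∑ j ∈ Finset.univ.erase k, y j * w j ^ 2 = ∑ j ∈ Finset.univ.erase k, y j :=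
        Finset.sum_congr rfl fun j hj => by simp [w, Finset.ne_of_mem_erase hj]
      rw [this]
      simp only [w, Function.update_self, hs]
      linear_combination -(∑ j ∈ Finset.univ.erase k, y j) * hu
    let e : Fin (n+1) → (Fin n → Bool) := Fin.cons (fun _ => false) (fun i => Pi.single i true)
    have he : Function.Injective e := by
      intro i j
      refine Fin.cases ?_ (fun i => ?_) i <;> refine Fin.cases ?_ (fun j => ?_) j
      · simp
      · intro h; have := congrFun h j; simp [e] at this
      · intro h; have := congrFun h i; simp [e] at this
      · intro h
        have := congrFun h i
        simp only [e, Fin.cons_succ, Pi.single_eq_same] at this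
        by_contra hne
        rw [Pi.single_eq_of_ne (by rintro rfl; exact hne rfl)] at this
        simp at this
    have hpe : ∀ i, pc y (e i) = y 0 ^ (n - 1) * y i := by
      intro i
      refine Fin.cases ?_ (fun i => ?_) i
      · simp [e, pc, ← pow_succ, Nat.sub_add_cancel hn]
      · rw [pc, ← Finset.mul_prod_erase _ _ (Finset.mem_univ i),
          Finset.prod_congr (g := fun _ => y 0) rfl]
        · simp [e, Finset.card_erase_of_mem]; ring
        · intro j hj; simp [e, Pi.single_eq_of_ne (Finset.ne_of_mem_erase hj)]
    obtain ⟨k', hk'⟩ : ∃ k', k' ≠ k := by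
      haveI : Nontrivial (Fin (n+1)) := Fin.nontrivial_iff_two_le.2 (by omega)
      exact exists_ne k
    refine ⟨Function.extend e w 0, fun h => ?_, ?_⟩
    · have := congrFun h (e k')
      rw [he.extend_apply] at this
      simp [w, hk'] at this
    · rw [← Fintype.sum_of_injective e he (fun i => y 0 ^ (n - 1) * (y i * w i ^ 2)),
        ← Finset.mul_sum, hw, mul_zero]
      · intro i hi
        rw [Function.extend_apply' _ _ _ (by simpa using hi)]; simp
      · intro i; rw [he.extend_apply, hpe, mul_assoc]
  -- here the exceptional entry is a square times a power of `y₀`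
  · obtain ⟨ω, hω, hω0⟩ := ps_sqrt (PowerSeries.C (μ ^ 2) * (∑ j, y j) ^ (2 * n) -
      y 0 ^ n * ∏ j : Fin n, y j.succ) (μ * PowerSeries.constantCoeff (∑ j, y j) ^ n)
      (mul_ne_zero hμ (pow_ne_zero _ hsum)) (by
        rw [map_sub, hprod0, map_mul, map_pow]; simp; ring)
    obtain ⟨z, hz, hz0⟩ := hq
    let p := (D.d 1 + n) % 2
    have hp : ∀ i, ∃ m, D.d i = n + p + 2 * m := fun i => by
      have h1 := D.par i 1
      have h2 := D.le_d i
      have h3 := D.two_le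
      exact ⟨(D.d i - n - p) / 2, by simp only [p]; omega⟩
    choose m hm using hp
    let u : Fin (r+2) → PowerSeries K := fun i =>
      if i = 1 then ω * y 0 ^ (m 1) * z 1 else y 0 ^ (m i + n) * z i
    obtain ⟨i₀, hi₀⟩ := Function.ne_iff.1 hz
    refine ⟨Function.extend D.ε u 0, fun h => hi₀ ?_, ?_⟩
    · have := congrFun h (D.ε i₀)
      rw [D.inj.extend_apply] at this
      simp only [u] at this
      split_ifs at this with h1
      · subst h1; simpa [hω0, hzero 0] using this
      · simpa [hzero 0] using this
    · rw [← Fintype.sum_of_injective D.ε D.inj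
        (fun i => pc y (D.ε i) * u i ^ 2)]
      · have h2 : y 0 ^ p * ∑ i, pc y (D.ε i) * u i ^ 2 =
            y 0 ^ (2 * n) * ∑ i, D.sp (PowerSeries.C (μ ^ 2)) y i * z i ^ 2 := by
          rw [Finset.mul_sum, Finset.mul_sum]
          refine Finset.sum_congr rfl fun i _ => ?_
          simp only [u, Dat.sp]
          split_ifs with h1
          · subst h1
            have h3 : pc y (D.ε 1) = y 0 ^ n := by rw [D.ε1]; simp [pc]
            rw [h3, ← hω, mul_pow, mul_pow]
            have h4 : y 0 ^ p * y 0 ^ n * (y 0 ^ m 1) ^ 2 =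
                y 0 ^ (2 * n) * y 0 ^ (D.d 1 - 2 * n) := by
              rw [← pow_mul, ← pow_add, ← pow_add, ← pow_add]; congr 1
              have := hm 1; have := D.le_d 1; omega
            linear_combination ω ^ 2 * z 1 ^ 2 * h4
          · have h4 : y 0 ^ p * (y 0 ^ (m i + n)) ^ 2 =
                y 0 ^ (2 * n) * y 0 ^ (D.d i - n) := by
              rw [← pow_mul, ← pow_add, ← pow_add]; congr 1
              have := hm i; omega
            linear_combination pc y (D.ε i) * z i ^ 2 * h4
        rw [hz0, mul_zero] at h2
        exact (mul_eq_zero.1 h2).resolve_left (pow_ne_zero _ (hzero 0))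
      · intro i hi
        rw [Function.extend_apply' _ _ _ (by simpa using hi)]; simp
      · intro i; rw [D.inj.extend_apply]

end QBProof

namespace QBProof

/-! ### Hyperbolic forms and enlargement of lattices -/

section lattice
open Matrix

/-- If a degenerate symmetric form has a totally isotropic subspace of at least half the dimension,
then this subspace meets the radical. -/
theorem exists_mem_radical {K ι : Type*} [Field K] [Fintype ι] [DecidableEq ι]
    (G : Matrix ι ι K) (hG : G.IsSymm) (hdet : G.det = 0) (W : Submodule K (ι → K))
    (hd : Fintype.card ι ≤ 2 * Module.finrank K W)
    (hW : ∀ w ∈ W, ∀ w' ∈ W, w' ⬝ᵥ G *ᵥ w = 0) : ∃ w ∈ W, w ≠ 0 ∧ G *ᵥ w = 0 := by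
  by_contra hcon
  push Not at hcon
  let Z : Submodule K (ι → K) := LinearMap.ker (Matrix.mulVecLin G)
  have hdisj : Disjoint W Z := by
    rw [Submodule.disjoint_def]
    intro w hw hz
    by_contra hne
    exact hcon w hw hne hz
  have hZ : 0 < Module.finrank K Z := by
    obtain ⟨v, hv, hv0⟩ := Matrix.exists_mulVec_eq_zero_iff.2 hdet
    rw [Module.finrank_pos_iff_exists_ne_zero]
    exact ⟨⟨v, hv0⟩, fun h => hv (congrArg Subtype.val h)⟩
  let U := W ⊔ Z
  have hU : Module.finrank K U = Module.finrank K W + Module.finrank K Z := by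
    have := Submodule.finrank_sup_add_finrank_inf_eq W Z
    rw [hdisj.eq_bot, finrank_bot] at this
    simpa using this
  have hann := Subspace.finrank_add_finrank_dualAnnihilator_eq U
  let L : W →ₗ[K] U.dualAnnihilator := LinearMap.codRestrict _
    ((dotProductEquiv K ι : (ι → K) →ₗ[K] _) ∘ₗ Matrix.mulVecLin G ∘ₗ W.subtype) (by
      rintro ⟨w, hw⟩
      rw [Submodule.mem_dualAnnihilator]
      intro u hu
      obtain ⟨a, ha, b, hb, rfl⟩ := Submodule.mem_sup.1 hu
      have h1 : a ⬝ᵥ G *ᵥ w = 0 := hW w hw a ha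
      have h2 : b ⬝ᵥ G *ᵥ w = 0 := by
        have hb' : G *ᵥ b = 0 := hb
        rw [dotProduct_mulVec, ← mulVec_transpose, hG.eq, hb', zero_dotProduct]
      simp [dotProduct_comm _ (a + b), add_dotProduct, h1, h2])
  have hL : Function.Injective L := by
    refine (injective_iff_map_eq_zero L).2 ?_
    rintro ⟨w, hw⟩ h
    have h1 : dotProductEquiv K ι (G *ᵥ w) = 0 := congrArg Subtype.val h
    have h2 : G *ᵥ w = 0 := by simpa using h1
    by_contra hne
    exact hcon w hw (fun h => hne (Subtype.ext h)) h2
  have := LinearMap.finrank_le_finrank_of_injective hL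
  rw [Module.finrank_fintype_fun_eq_card] at hann
  omega

/-- Reduction of a subspace over the fraction field of `K⟦X⟧` does not lower the dimension. -/
theorem exists_reduction {K ι : Type*} [Field K] [Fintype ι]
    (W : Submodule (FractionRing (PowerSeries K)) (ι → FractionRing (PowerSeries K))) :
    ∃ W' : Submodule K (ι → K), Module.finrank (FractionRing (PowerSeries K)) W ≤
      Module.finrank K W' ∧ ∀ u ∈ W', ∃ w : ι → PowerSeries K,
        (fun i => algebraMap _ (FractionRing (PowerSeries K)) (w i)) ∈ W ∧
        ∀ i, PowerSeries.constantCoeff (w i) = u i := by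
  classical
  let O := PowerSeries K
  let E := FractionRing O
  let ψ : (ι → O) →ₗ[O] (ι → E) := (Algebra.linearMap O E).compLeft ι
  let Λ : Submodule O (ι → O) := (W.restrictScalars O).comap ψ
  let ρ : (ι → O) →ₗ[K] (ι → K) := (PowerSeries.coeff 0 : O →ₗ[K] K).compLeft ι
  let W' : Submodule K (ι → K) := (Λ.restrictScalars K).map ρ
  refine ⟨W', ?_, ?_⟩
  swap
  · rintro _ ⟨w, hw, rfl⟩
    exact ⟨w, hw, fun i => by simp [ρ]⟩
  let b := Module.finBasis K W'
  have hb : ∀ i, ∃ w : ι → O, w ∈ Λ ∧ ρ w = b i := fun i => by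
    obtain ⟨w, hw, h⟩ := (b i).2
    exact ⟨w, hw, h⟩
  choose w hwΛ hwρ using hb
  let S : Submodule O (ι → O) := Submodule.span O (Set.range w)
  have hSΛ : S ≤ Λ := by
    rw [Submodule.span_le]; rintro _ ⟨i, rfl⟩; exact hwΛ i
  have hinj : Function.Injective (algebraMap O E) := IsFractionRing.injective O E
  have hΛS : Λ ≤ S ⊔ (IsLocalRing.maximalIdeal O) • Λ := by
    intro v hv
    have hvW : ρ v ∈ W' := ⟨v, hv, rfl⟩
    let c := b.repr ⟨ρ v, hvW⟩
    have hsum : ρ v = ∑ i, c i • (b i : ι → K) := by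
      have h := congrArg Subtype.val (b.sum_repr ⟨ρ v, hvW⟩)
      simp only [AddSubmonoidClass.coe_finset_sum, Submodule.coe_smul] at h
      exact h.symm
    let s : ι → O := ∑ i, (PowerSeries.C (c i)) • w i
    have hs : s ∈ S := Submodule.sum_mem _ fun i _ =>
      Submodule.smul_mem _ _ (Submodule.subset_span ⟨i, rfl⟩)
    have hρ : ∀ j, PowerSeries.constantCoeff (v j - s j) = 0 := by
      intro j
      have h1 : PowerSeries.constantCoeff (v j) = ∑ i, c i * (b i : ι → K) j := by
        have := congrFun hsum j
        simpa [ρ] using this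
      have h2 : PowerSeries.constantCoeff (s j) = ∑ i, c i * (b i : ι → K) j := by
        simp only [s, Finset.sum_apply, Pi.smul_apply, smul_eq_mul, map_sum, map_mul]
        refine Finset.sum_congr rfl fun i _ => ?_
        have := congrFun (hwρ i) j
        simp only [ρ, LinearMap.compLeft_apply, Function.comp_apply,
          PowerSeries.coeff_zero_eq_constantCoeff] at this
        rw [← this]; simp
      rw [map_sub, h1, h2, sub_self]
    have hX : ∀ j, ∃ t, v j - s j = PowerSeries.X * t := fun j =>
      PowerSeries.X_dvd_iff.2 (hρ j)
    choose t ht using hX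
    have htΛ : t ∈ Λ := by
      have h1 : v - s ∈ Λ := Λ.sub_mem hv (hSΛ hs)
      have h2 : v - s = (PowerSeries.X : O) • t := by ext1 j; exact ht j
      rw [h2] at h1
      have h3 : ψ ((PowerSeries.X : O) • t) ∈ W := h1
      have h4 : ψ ((PowerSeries.X : O) • t) = algebraMap O E PowerSeries.X • ψ t := by
        rw [map_smul, algebraMap_smul]
      rw [h4] at h3
      have h5 : algebraMap O E PowerSeries.X ≠ 0 := fun h =>
        PowerSeries.X_ne_zero (hinj (by rw [h, map_zero]))
      have h6 : ψ t ∈ W := (Submodule.smul_mem_iff W h5).1 h3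
      exact h6
    have : v = s + (PowerSeries.X : O) • t := by
      ext1 j; simp [← ht j]
    rw [this]
    refine Submodule.add_mem_sup hs (Submodule.smul_mem_smul ?_ htΛ)
    rw [PowerSeries.maximalIdeal_eq_span_X]
    exact Ideal.mem_span_singleton_self _
  have hle : Λ ≤ S := by
    refine Submodule.le_of_le_smul_of_le_jacobson_bot (IsNoetherian.noetherian Λ) ?_ hΛS
    rw [IsLocalRing.jacobson_eq_maximalIdeal _ bot_ne_top]
  have hspan : W ≤ Submodule.span E (Set.range fun i => ψ (w i)) := by
    intro v hv
    obtain ⟨c, hc, v', hv'⟩ := exists_clear O v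
    have hc' : algebraMap O E c ≠ 0 := fun h => hc (hinj (by rw [h, map_zero]))
    have h1 : ψ v' = algebraMap O E c • v := by ext1 i; exact hv' i
    have h2 : v' ∈ Λ := by
      change ψ v' ∈ W
      rw [h1]; exact W.smul_mem _ hv
    have h3 : ψ v' ∈ Submodule.span E (Set.range fun i => ψ (w i)) := by
      have : v' ∈ S := hle h2
      have h4 : S ≤ ((Submodule.span E (Set.range fun i => ψ (w i))).restrictScalars O).comap ψ := by
        rw [Submodule.span_le]
        rintro _ ⟨i, rfl⟩
        exact Submodule.subset_span ⟨i, rfl⟩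
      exact h4 this
    rw [h1] at h3
    exact (Submodule.smul_mem_iff _ hc').1 h3
  calc Module.finrank E W ≤ Module.finrank E (Submodule.span E (Set.range fun i => ψ (w i))) :=
        Submodule.finrank_mono hspan
    _ ≤ Fintype.card (Fin (Module.finrank K W')) := finrank_range_le_card _
    _ = _ := by simp

/-- Enlarging the lattice: a primitive vector `v` mod `p` in the radical mod `p` with
`vᵀGv ≡ 0 mod p²` can be divided by `p`. -/
theorem enlarge {R ι : Type*} [CommRing R] [IsDomain R] [Fintype ι] [DecidableEq ι]
    (G : Matrix ι ι R) (hG : G.IsSymm) (p : R) (v : ι → R) (i₀ : ι) (a b : R)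
    (hv : a * v i₀ + b * p = 1) (h1 : ∀ j, p ∣ (G *ᵥ v) j) (h2 : p ^ 2 ∣ v ⬝ᵥ G *ᵥ v) :
    ∃ G' M : Matrix ι ι R, G'.IsSymm ∧ M.det = p ∧ G = Mᵀ * G' * M := by
  -- normalise the entry `i₀` of the vector to be `1`
  obtain ⟨u, hu0, hu1, hu2⟩ : ∃ u : ι → R, u i₀ = 1 ∧ (∀ j, p ∣ (G *ᵥ u) j) ∧
      p ^ 2 ∣ u ⬝ᵥ G *ᵥ u := by
    choose q hq using h1
    obtain ⟨q2, hq2⟩ := h2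
    have hq' : G *ᵥ v = p • q := by ext j; exact hq j
    have e1 : G *ᵥ (a • v + (b * p) • Pi.single i₀ 1) =
        p • (a • q + b • (G *ᵥ Pi.single i₀ 1)) := by
      rw [mulVec_add, mulVec_smul, mulVec_smul, hq']
      simp only [smul_add, smul_smul]
      rw [mul_comm a p, mul_comm b p]
    refine ⟨a • v + (b * p) • Pi.single i₀ 1, by simp [hv], fun j => ?_, ?_⟩
    · rw [e1]; exact ⟨_, rfl⟩
    · have e2 : v ⬝ᵥ G *ᵥ Pi.single i₀ 1 = p * q i₀ := by
        rw [dotProduct_mulVec, ← mulVec_transpose, hG.eq, hq']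
        simp
      have e3 : v ⬝ᵥ q * p = p ^ 2 * q2 := by
        rw [← hq2, hq', dotProduct_smul, smul_eq_mul, mul_comm]
      rw [e1]
      simp only [add_dotProduct, dotProduct_add, smul_dotProduct, dotProduct_smul, smul_eq_mul, e2]
      refine ⟨a ^ 2 * q2 + a * b * q i₀ + b * a * (Pi.single i₀ 1 ⬝ᵥ q) +
        b ^ 2 * (Pi.single i₀ 1 ⬝ᵥ G *ᵥ Pi.single i₀ 1), ?_⟩
      linear_combination a ^ 2 * e3
  let T : Matrix ι ι R := (1 : Matrix ι ι R).updateCol i₀ u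
  have hT : T.det = 1 := by
    rw [← cramer_apply, cramer_one]; simpa using hu0
  have hTu : IsUnit T.det := by rw [hT]; exact isUnit_one
  let G1 := Tᵀ * G * T
  have hG1 : G1.IsSymm := by
    have := IsSymm.conj hG Tᵀ
    rwa [transpose_transpose] at this
  have hTc : T *ᵥ Pi.single i₀ 1 = u := by
    ext j; simp [T]
  have hp1 : ∀ j, p ∣ G1 j i₀ := by
    intro j
    have : G1 j i₀ = (Tᵀ *ᵥ (G *ᵥ u)) j := by
      have h : G1 *ᵥ Pi.single i₀ 1 = Tᵀ *ᵥ (G *ᵥ u) := by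
        simp only [G1, ← mulVec_mulVec, hTc]
      rw [← h]; simp
    rw [this]
    exact Finset.dvd_sum fun k _ => Dvd.dvd.mul_left (hu1 k) _
  have hp2 : p ^ 2 ∣ G1 i₀ i₀ := by
    have : G1 i₀ i₀ = u ⬝ᵥ G *ᵥ u := by
      have h : Pi.single i₀ 1 ⬝ᵥ G1 *ᵥ Pi.single i₀ 1 = u ⬝ᵥ G *ᵥ u := by
        simp only [G1, ← mulVec_mulVec, hTc]
        rw [dotProduct_mulVec, vecMul_transpose, hTc]
      rw [← h]; simp
    rwa [this]
  choose q hq using hp1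
  obtain ⟨q2, hq2⟩ := hp2
  let G' : Matrix ι ι R := Matrix.of fun j k =>
    if j = i₀ then (if k = i₀ then q2 else q k) else if k = i₀ then q j else G1 j k
  let Δ : ι → R := fun j => if j = i₀ then p else 1
  have hG' : diagonal Δ * G' * diagonal Δ = G1 := by
    ext j k
    rw [mul_diagonal, diagonal_mul]
    simp only [G', Δ, Matrix.of_apply]
    by_cases hj : j = i₀ <;> by_cases hk : k = i₀
    · subst hj; subst hk; simp [hq2]; ring
    · subst hj
      rw [hG1.apply k j |>.symm.symm]
      simp [hk, ← hq k, hG1.apply k j]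
    · subst hk; simp [hj, hq j]; ring
    · simp [hj, hk]
  refine ⟨G', diagonal Δ * T⁻¹, ?_, ?_, ?_⟩
  · ext j k
    simp only [G', Matrix.of_apply, transpose_apply]
    by_cases hj : j = i₀ <;> by_cases hk : k = i₀ <;> simp [hj, hk, hG1.apply]
  · have : T⁻¹.det = 1 := by
      have := congrArg det (Matrix.nonsing_inv_mul T hTu)
      rwa [det_mul, hT, mul_one, det_one] at this
    rw [det_mul, this, det_diagonal, mul_one]
    simp [Δ, Finset.prod_ite_eq']
  · have h3 : (T⁻¹)ᵀ * G1 * T⁻¹ = G := by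
      simp only [G1]
      have e1 : (T⁻¹)ᵀ * Tᵀ = 1 := by
        rw [← transpose_mul, Matrix.mul_nonsing_inv T hTu, transpose_one]
      calc (T⁻¹)ᵀ * (Tᵀ * G * T) * T⁻¹ = ((T⁻¹)ᵀ * Tᵀ) * G * (T * T⁻¹) := by
            simp only [Matrix.mul_assoc]
        _ = G := by rw [e1, Matrix.mul_nonsing_inv T hTu, Matrix.one_mul, Matrix.mul_one]
    rw [← h3, ← hG', transpose_mul, diagonal_transpose]
    simp only [Matrix.mul_assoc]

end lattice
end QBProof

namespace QBProof

/-! ### Extension to a unimodular lattice along a curve -/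

section completion
open Matrix
variable {κ : Type*} [Field κ] (π : Polynomial κ) [Fact (Irreducible π)]

/-- The completion of `κ[s]` at the prime `π`, written as a power series ring over the residue
field `κ[s]/(π)` via Taylor expansion at the root of `π`. -/
def tau : Polynomial κ →+* PowerSeries (AdjoinRoot π) :=
  (Polynomial.coeToPowerSeries.ringHom).comp
    ((Polynomial.taylorAlgHom (AdjoinRoot.root π)).toRingHom.comp
      (Polynomial.mapRingHom (AdjoinRoot.of π)))

theorem tau_apply (f : Polynomial κ) :
    tau π f = ((Polynomial.taylor (AdjoinRoot.root π) (f.map (AdjoinRoot.of π)) :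
      Polynomial (AdjoinRoot π)) : PowerSeries (AdjoinRoot π)) := rfl

theorem tau_C (c : κ) : tau π (Polynomial.C c) = PowerSeries.C (AdjoinRoot.of π c) := by
  rw [tau_apply, Polynomial.map_C, Polynomial.taylor_C, Polynomial.coe_C]

theorem tau_const (f : Polynomial κ) :
    PowerSeries.constantCoeff (tau π f) = AdjoinRoot.mk π f := by
  rw [tau_apply, ← PowerSeries.coeff_zero_eq_constantCoeff_apply, Polynomial.coeff_coe,
    Polynomial.taylor_coeff_zero, Polynomial.eval_map, ← AdjoinRoot.aeval_eq]
  rfl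

theorem tau_injective : Function.Injective (tau π) := by
  intro f g h
  rw [tau_apply, tau_apply] at h
  exact Polynomial.map_injective _ (AdjoinRoot.of π).injective
    (Polynomial.taylor_injective _ (Polynomial.coe_injective _ h))

theorem tau_coeff_one [CharZero κ] : PowerSeries.coeff 1 (tau π π) ≠ 0 := by
  have hirr : Irreducible π := Fact.out
  rw [tau_apply, Polynomial.coeff_coe, Polynomial.taylor_coeff_one, Polynomial.derivative_map,
    Polynomial.eval_map, ← AdjoinRoot.algebraMap_eq, ← Polynomial.aeval_def, AdjoinRoot.aeval_eq,
    Ne, AdjoinRoot.mk_eq_zero]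
  intro h
  have h2 := hirr.separable
  rw [Polynomial.separable_def] at h2
  exact hirr.not_isUnit (h2.isUnit_of_dvd' dvd_rfl h)

theorem dvd_of_tau (f : Polynomial κ) (h : PowerSeries.X ∣ tau π f) : π ∣ f := by
  rwa [PowerSeries.X_dvd_iff, tau_const, AdjoinRoot.mk_eq_zero] at h

theorem sq_dvd_of_tau [CharZero κ] (f : Polynomial κ) (h : PowerSeries.X ^ 2 ∣ tau π f) :
    π ^ 2 ∣ f := by
  obtain ⟨g, rfl⟩ := dvd_of_tau π f (dvd_trans (dvd_pow_self _ two_ne_zero) h)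
  rw [PowerSeries.X_pow_dvd_iff] at h
  have h1 := h 1 one_lt_two
  rw [map_mul, PowerSeries.coeff_mul, Finset.Nat.antidiagonal_succ] at h1
  simp only [Finset.Nat.antidiagonal_zero, Finset.map_singleton, Finset.sum_cons,
    Finset.sum_singleton, Function.Embedding.prodMap, Function.Embedding.coeFn_mk] at h1
  simp only [PowerSeries.coeff_zero_eq_constantCoeff, tau_const, AdjoinRoot.mk_self, zero_mul,
    zero_add, Prod.map] at h1
  have h2 : AdjoinRoot.mk π g = 0 := by
    simpa [tau_const, tau_coeff_one π] using h1
  rw [pow_two]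
  exact mul_dvd_mul_left _ (AdjoinRoot.mk_eq_zero.1 h2)

end completion

section lemmaG
open Matrix
variable {κ : Type*} [Field κ] [CharZero κ] {n r : ℕ}

theorem diag_qv {R ι : Type*} [CommRing R] [Fintype ι] [DecidableEq ι] (a v : ι → R) :
    qv (diagonal a) v = ∑ i, a i * v i ^ 2 := by
  simp only [qv, dotProduct, mulVec_diagonal]
  exact Finset.sum_congr rfl fun i _ => by ring

theorem qv_conj' {R ι : Type*} [CommRing R] [Fintype ι] (G M : Matrix ι ι R) (v : ι → R) :
    qv (Mᵀ * G * M) v = qv G (M *ᵥ v) := by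
  have := qv_conj Mᵀ G v
  rwa [transpose_transpose, vecMul_transpose] at this

/-- A subspace on which the quadratic form vanishes is totally isotropic for the bilinear form. -/
theorem bil_zero {K ι : Type*} [Field K] [CharZero K] [Fintype ι] (G : Matrix ι ι K)
    (hG : G.IsSymm) (W : Submodule K (ι → K)) (hW : ∀ w ∈ W, qv G w = 0) :
    ∀ w ∈ W, ∀ w' ∈ W, w' ⬝ᵥ G *ᵥ w = 0 := by
  intro w hw w' hw'
  have h1 := hW _ (W.add_mem hw hw')
  have h2 : w ⬝ᵥ G *ᵥ w' = w' ⬝ᵥ G *ᵥ w := by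
    rw [dotProduct_mulVec, ← mulVec_transpose, hG.eq, dotProduct_comm]
  have h3 := hW w hw
  have h4 := hW w' hw'
  simp only [qv, mulVec_add, dotProduct_add, add_dotProduct] at h1 h3 h4
  rw [h3, h4, h2] at h1
  have : 2 * (w' ⬝ᵥ G *ᵥ w) = 0 := by linear_combination h1
  simpa using this

theorem map_mulVec' {R S ι : Type*} [CommRing R] [CommRing S] [Fintype ι] (f : R →+* S)
    (G : Matrix ι ι R) (v : ι → R) (i : ι) :
    ((G.map f) *ᵥ (fun j => f (v j))) i = f ((G *ᵥ v) i) := by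
  simp [mulVec, dotProduct]

theorem map_qv {R S ι : Type*} [CommRing R] [CommRing S] [Fintype ι] (f : R →+* S)
    (G : Matrix ι ι R) (v : ι → R) :
    qv (G.map f) (fun j => f (v j)) = f (qv G v) := by
  simp only [qv, dotProduct, map_mulVec', map_sum, map_mul]

/-- One step of lattice enlargement: a prime dividing the discriminant of a lattice containing
the Pfister lattice can be removed, because at that prime the form is hyperbolic. -/
theorem Dat.step (D : Dat n r) {μ : κ} (hμ : μ ≠ 0) {w b : Fin (n+1) → Polynomial κ}
    (hb : ∑ i, b i * w i = 1) (hq : D.QIso (Polynomial.C (μ ^ 2)) w) (hw0 : ∀ i, w i ≠ 0)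
    (G M : Matrix (Fin n → Bool) (Fin n → Bool) (Polynomial κ)) (hG : G.IsSymm)
    (hM : M.det ≠ 0) (hGM : diagonal (pc w) = Mᵀ * G * M) (hdeg : G.det.natDegree ≠ 0) :
    ∃ G' M' : Matrix (Fin n → Bool) (Fin n → Bool) (Polynomial κ), G'.IsSymm ∧
      M'.det ≠ 0 ∧ diagonal (pc w) = M'ᵀ * G' * M' ∧ G'.det.natDegree < G.det.natDegree := by
  have hn : 0 < n := by have := D.two_le; omega
  have hG0 : G.det ≠ 0 := fun h => hdeg (by rw [h]; simp)
  obtain ⟨π, hπ, hπG⟩ := Polynomial.exists_irreducible_of_natDegree_ne_zero hdeg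
  haveI : Fact (Irreducible π) := ⟨hπ⟩
  haveI : CharZero (AdjoinRoot π) := charZero_of_injective_algebraMap (AdjoinRoot.of π).injective
  have hprime : Prime π := hπ.prime
  -- `π` divides one of the `w i`
  obtain ⟨i₁, hi₁⟩ : ∃ i, π ∣ w i := by
    have h1 : π ∣ (diagonal (pc w)).det := by
      rw [hGM, det_mul, det_mul]
      exact Dvd.dvd.mul_right (Dvd.dvd.mul_left hπG _) _
    rw [det_diagonal] at h1
    obtain ⟨ε, -, h2⟩ := (Prime.dvd_finset_prod_iff hprime _).1 h1
    obtain ⟨i, -, h3⟩ := (Prime.dvd_finset_prod_iff hprime _).1 h2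
    split_ifs at h3
    · exact ⟨_, h3⟩
    · exact ⟨_, h3⟩
  have hlift : PIso (fun i => tau π (w i)) := by
    refine D.piso_lift (μ := AdjoinRoot.of π μ) (by simpa using hμ) ?_ ?_ ?_
    · by_contra hcon
      push Not at hcon
      simp only [tau_const] at hcon
      have := congrArg (AdjoinRoot.mk π) hb
      rw [map_sum] at this
      simp only [map_mul, hcon, mul_zero, Finset.sum_const_zero, map_one] at this
      exact zero_ne_one this
    · have := D.sp_map (tau π) (Polynomial.C (μ^2)) w
      have h2 := Dat.QIso.map D (tau π) (tau_injective π) hq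
      rwa [tau_C, map_pow (AdjoinRoot.of π)] at h2
    · exact .of_zero hn (i := i₁) (by rw [tau_const, AdjoinRoot.mk_eq_zero]; exact hi₁)
  obtain ⟨φ, hφ⟩ : ∃ φ : Polynomial κ →+* FractionRing (PowerSeries (AdjoinRoot π)),
    φ = (algebraMap (PowerSeries (AdjoinRoot π)) (FractionRing (PowerSeries (AdjoinRoot π)))).comp
      (tau π) := ⟨_, rfl⟩
  have hainj := IsFractionRing.injective (PowerSeries (AdjoinRoot π))
    (FractionRing (PowerSeries (AdjoinRoot π)))
  have hφinj : Function.Injective φ := by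
    rw [hφ]; exact hainj.comp (tau_injective π)
  have hPE : PIso (fun i => φ (w i)) := by
    rw [hφ]; exact PIso.map _ hainj hlift
  haveI : CharZero (FractionRing (PowerSeries (AdjoinRoot π))) := by
    refine charZero_of_injective_algebraMap (R := AdjoinRoot π) ?_
    exact RingHom.injective _
  obtain ⟨W, hW, hWd⟩ := hPE.hyperbolic (fun h => hw0 0 (hφinj (by rw [h, map_zero])))
  -- transport the maximal isotropic subspace to the bigger lattice
  obtain ⟨L, hL⟩ : ∃ L, L = Matrix.mulVecLin (M.map φ) := ⟨_, rfl⟩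
  have hLinj : Function.Injective L := by
    rw [hL]
    refine (injective_iff_map_eq_zero _).2 fun v hv => ?_
    refine Matrix.eq_zero_of_mulVec_eq_zero (M := M.map φ) ?_ hv
    rw [← RingHom.mapMatrix_apply, ← RingHom.map_det]
    exact fun h => hM (hφinj (by rw [h, map_zero]))
  have hGφ : (G.map φ).IsSymm := by rw [Matrix.IsSymm, ← transpose_map, hG.eq]
  have hGMφ : diagonal (pc fun i => φ (w i)) = (M.map φ)ᵀ * (G.map φ) * (M.map φ) := by
    rw [← transpose_map, ← Matrix.map_mul, ← Matrix.map_mul, ← hGM, diagonal_map (map_zero φ)]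
    congr 1; ext ε; rw [pc_map]
  have hW2 : ∀ u ∈ W.map L, qv (G.map φ) u = 0 := by
    rintro _ ⟨v, hv, rfl⟩
    rw [hL, mulVecLin_apply, ← qv_conj', ← hGMφ, diag_qv]
    exact hW v hv
  have hbil := bil_zero _ hGφ _ hW2
  have hfin : Module.finrank _ (W.map L) = Module.finrank _ W :=
    (Submodule.equivMapOfInjective L hLinj W).finrank_eq.symm
  obtain ⟨W', hW'd, hW'⟩ := exists_reduction (W.map L)
  have hG' : G.map φ = (G.map (tau π)).map (algebraMap _ (FractionRing _)) := by
    rw [hφ]; rfl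
  have hbil' : ∀ a a' : (Fin n → Bool) → PowerSeries (AdjoinRoot π),
      (fun i => algebraMap _ (FractionRing (PowerSeries (AdjoinRoot π))) (a i)) ∈ W.map L →
      (fun i => algebraMap _ (FractionRing (PowerSeries (AdjoinRoot π))) (a' i)) ∈ W.map L →
      a' ⬝ᵥ (G.map (tau π)) *ᵥ a = 0 := by
    intro a a' ha ha'
    have := hbil _ ha _ ha'
    rw [hG'] at this
    simp only [dotProduct, map_mulVec', ← map_mul, ← map_sum] at this
    exact hainj (by rw [dotProduct, this, map_zero])
  have hres : G.map (AdjoinRoot.mk π) = (G.map (tau π)).map PowerSeries.constantCoeff := by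
    ext i j; simp [tau_const]
  have hGmk : (G.map (AdjoinRoot.mk π)).IsSymm := by rw [Matrix.IsSymm, ← transpose_map, hG.eq]
  obtain ⟨u, huW, hu0, huG⟩ := exists_mem_radical (G.map (AdjoinRoot.mk π)) hGmk (by
      rw [← RingHom.mapMatrix_apply, ← RingHom.map_det, AdjoinRoot.mk_eq_zero]
      exact hπG) W' (by
      have : Fintype.card (Fin n → Bool) = 2 ^ n := by simp
      omega) (by
      intro u hu u' hu'
      obtain ⟨a, ha, hau⟩ := hW' u hu
      obtain ⟨a', ha', hau'⟩ := hW' u' hu'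
      have h := congrArg PowerSeries.constantCoeff (hbil' a a' ha ha')
      rw [dotProduct, map_sum, map_zero] at h
      rw [← h, hres, dotProduct]
      refine Finset.sum_congr rfl fun i _ => ?_
      rw [map_mul, ← map_mulVec', hau']
      simp only [hau])
  obtain ⟨a, ha, hau⟩ := hW' u huW
  have hv : ∀ i, ∃ v : Polynomial κ, AdjoinRoot.mk π v = u i := fun i =>
    AdjoinRoot.mk_surjective (u i)
  choose v hv using hv
  obtain ⟨i₀, hi₀⟩ := Function.ne_iff.1 hu0
  have hcop : IsCoprime π (v i₀) := by
    rw [hπ.coprime_iff_not_dvd, ← AdjoinRoot.mk_eq_zero, hv]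
    exact hi₀
  obtain ⟨p, q, hpq⟩ := hcop
  have hGv : ∀ j, π ∣ (G *ᵥ v) j := by
    intro j
    rw [← AdjoinRoot.mk_eq_zero, ← map_mulVec']
    simp only [hv]
    exact congrFun huG j
  have hsq : π ^ 2 ∣ v ⬝ᵥ G *ᵥ v := by
    refine sq_dvd_of_tau π _ ?_
    have h1 : ∀ i, ∃ t, tau π (v i) - a i = PowerSeries.X * t := fun i => by
      refine PowerSeries.X_dvd_iff.2 ?_
      rw [map_sub, tau_const, hv, hau, sub_self]
    choose t ht using h1
    have h2 : (fun i => tau π (v i)) = a + (PowerSeries.X : PowerSeries (AdjoinRoot π)) • t := by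
      ext1 i; simp [← ht i]
    have h3 : ∀ i, PowerSeries.X ∣ ((G.map (tau π)) *ᵥ a) i := fun i => by
      rw [PowerSeries.X_dvd_iff, ← map_mulVec', ← hres]
      simp only [hau]
      exact congrFun huG i
    choose s hs using h3
    have hs' : (G.map (tau π)) *ᵥ a = (PowerSeries.X : PowerSeries (AdjoinRoot π)) • s := by
      ext1 i; exact hs i
    have hGτ : (G.map (tau π)).IsSymm := by rw [Matrix.IsSymm, ← transpose_map, hG.eq]
    have h4 : a ⬝ᵥ (G.map (tau π)) *ᵥ t = t ⬝ᵥ (G.map (tau π)) *ᵥ a := by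
      rw [dotProduct_mulVec, ← mulVec_transpose, hGτ.eq, dotProduct_comm]
    have h5 : tau π (v ⬝ᵥ G *ᵥ v) = qv (G.map (tau π)) (fun i => tau π (v i)) :=
      (map_qv _ _ _).symm
    rw [h5, h2, qv]
    simp only [mulVec_add, dotProduct_add, add_dotProduct, mulVec_smul, dotProduct_smul,
      smul_dotProduct, h4]
    rw [hbil' a a ha ha, hs', dotProduct_smul]
    simp only [smul_eq_mul]
    exact ⟨2 * (t ⬝ᵥ s) + t ⬝ᵥ (G.map (tau π)) *ᵥ t, by ring⟩
  obtain ⟨G', M', hG'S, hM', hGM'⟩ := enlarge G hG π v i₀ q p (by rw [← hpq]; ring) hGv hsq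
  have hdet : G.det = π * (G'.det * π) := by
    rw [hGM', det_mul, det_mul, det_transpose, hM']; ring
  have hG'0 : G'.det ≠ 0 := fun h => hG0 (by rw [hdet, h]; ring)
  refine ⟨G', M' * M, hG'S, ?_, ?_, ?_⟩
  · rw [det_mul, hM']; exact mul_ne_zero hπ.ne_zero hM
  · rw [hGM, hGM', transpose_mul]; simp only [Matrix.mul_assoc]
  · rw [hdet, Polynomial.natDegree_mul hπ.ne_zero (mul_ne_zero hG'0 hπ.ne_zero)]
    rw [Polynomial.natDegree_mul hG'0 hπ.ne_zero]
    have := hπ.natDegree_pos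
    omega

/-- Iterating `Dat.step`: along a curve over which the special quadric has a point, the lattice of
the Pfister form is contained in a unimodular one. -/
theorem Dat.unimodular (D : Dat n r) {μ : κ} (hμ : μ ≠ 0) {w b : Fin (n+1) → Polynomial κ}
    (hb : ∑ i, b i * w i = 1) (hq : D.QIso (Polynomial.C (μ ^ 2)) w) (hw0 : ∀ i, w i ≠ 0) :
    ∃ G M : Matrix (Fin n → Bool) (Fin n → Bool) (Polynomial κ), G.IsSymm ∧
      M.det ≠ 0 ∧ diagonal (pc w) = Mᵀ * G * M ∧ G.det.natDegree = 0 := by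
  suffices H : ∀ (N : ℕ) (G M : Matrix (Fin n → Bool) (Fin n → Bool) (Polynomial κ)),
      G.det.natDegree = N → G.IsSymm → M.det ≠ 0 → diagonal (pc w) = Mᵀ * G * M →
      ∃ G M : Matrix (Fin n → Bool) (Fin n → Bool) (Polynomial κ), G.IsSymm ∧
      M.det ≠ 0 ∧ diagonal (pc w) = Mᵀ * G * M ∧ G.det.natDegree = 0 from
    H _ (diagonal (pc w)) 1 rfl (isSymm_diagonal _) (by simp) (by simp)
  intro N
  induction N using Nat.strong_induction_on with
  | _ N ih =>
    intro G M hN hG hM hGM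
    by_cases h : G.det.natDegree = 0
    · exact ⟨G, M, hG, hM, hGM, h⟩
    · obtain ⟨G', M', h1, h2, h3, h4⟩ := D.step hμ hb hq hw0 G M hG hM hGM h
      exact ih _ (hN ▸ h4) G' M' rfl h1 h2 h3

/-- Along a curve `w` over which the special quadric has a point, the Pfister form, if anisotropic,
is constant by `harder`. Hence it remains anisotropic in the completion `ψ` at any rational point of
the projective line, infinity included. -/
theorem Dat.lemmaG (D : Dat n r) {μ : κ} (hμ : μ ≠ 0) {w b : Fin (n+1) → Polynomial κ}
    (hb : ∑ i, b i * w i = 1) (hq : D.QIso (Polynomial.C (μ ^ 2)) w)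
    (ψ : Polynomial κ →+* FractionRing (PowerSeries κ)) (hψ : Function.Injective ψ)
    (hψC : ∀ c, ψ (Polynomial.C c) = algebraMap (PowerSeries κ) _ (PowerSeries.C c))
    (hP : PIso (fun i => ψ (w i))) : PIso w := by
  have hn : 0 < n := by have := D.two_le; omega
  by_contra hcon
  have hw0 : ∀ i, w i ≠ 0 := fun i hi => hcon (.of_zero hn hi)
  obtain ⟨G, M, hG, hM, hGM, hd⟩ := D.unimodular hμ hb hq hw0
  have hA0 : MAniso (diagonal (pc w)) := by
    intro v hv
    rw [diag_qv] at hv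
    by_contra hne
    exact hcon ⟨v, hne, hv⟩
  have hA : MAniso G := by
    intro v hv
    have h1 : M *ᵥ (M.adjugate *ᵥ v) = M.det • v := by
      rw [mulVec_mulVec, mul_adjugate, smul_mulVec, one_mulVec]
    have h2 : M.adjugate *ᵥ v = 0 := by
      refine hA0 _ ?_
      rw [hGM, qv_conj', h1]
      have : qv G (M.det • v) = M.det ^ 2 * qv G v := by
        simp only [qv, mulVec_smul, dotProduct_smul, smul_dotProduct, smul_eq_mul]; ring
      rw [this, hv, mul_zero]
    rw [h2, mulVec_zero] at h1
    exact (smul_eq_zero.1 h1.symm).resolve_left hM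
  -- reindex by `Fin N`
  obtain ⟨e⟩ : Nonempty ((Fin n → Bool) ≃ Fin (Fintype.card (Fin n → Bool))) :=
    ⟨Fintype.equivFin _⟩
  have hqe : ∀ v, qv (G.submatrix e.symm e.symm) v = qv G (v ∘ e) := by
    intro v
    simp only [qv, dotProduct, mulVec, submatrix_apply, Function.comp_apply]
    rw [← e.sum_comp]
    refine Finset.sum_congr rfl fun i _ => ?_
    rw [← e.sum_comp]
    simp
  obtain ⟨P, hP1, c, hc⟩ := harder _ (G.submatrix e.symm e.symm) (hG.submatrix _) (by
    intro v hv
    rw [hqe] at hv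
    have := hA _ hv
    ext1 i
    simpa using congrFun this (e.symm i)) (by rwa [det_submatrix_equiv_self])
  have hcan : ∀ u : Fin (Fintype.card (Fin n → Bool)) → κ, ∑ i, c i * u i ^ 2 = 0 → u = 0 := by
    intro u hu
    have h1 : qv (P * G.submatrix e.symm e.symm * Pᵀ) (fun i => Polynomial.C (u i)) = 0 := by
      rw [hc, diag_qv]
      simp only [← map_pow, ← map_mul, ← map_sum, hu, map_zero]
    rw [qv_conj, hqe] at h1
    have h2 := hA _ h1
    have h3 : (fun i => Polynomial.C (u i)) ᵥ* P = 0 := by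
      ext1 i; simpa using congrFun h2 (e.symm i)
    have h4 := eq_zero_of_vecMul_eq_zero hP1.ne_zero h3
    ext1 i
    simpa using congrFun h4 i
  obtain ⟨v, hv, hv0⟩ := hP
  have hψM : (M.map ψ).det ≠ 0 := by
    rw [← RingHom.mapMatrix_apply, ← RingHom.map_det]
    exact fun h => hM (hψ (by rw [h, map_zero]))
  have hv1 : qv (G.map ψ) ((M.map ψ) *ᵥ v) = 0 := by
    rw [← qv_conj', ← transpose_map, ← Matrix.map_mul, ← Matrix.map_mul, ← hGM,
      diagonal_map (map_zero ψ)]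
    rw [diag_qv, ← hv0]
    exact Finset.sum_congr rfl fun i _ => by simp [pc_map]
  have hv2 : (M.map ψ) *ᵥ v ≠ 0 := fun h => hv (eq_zero_of_mulVec_eq_zero hψM h)
  have hqe' : ∀ v, qv ((G.map ψ).submatrix e.symm e.symm) v = qv (G.map ψ) (v ∘ e) := by
    intro v
    simp only [qv, dotProduct, mulVec, submatrix_apply, Function.comp_apply]
    rw [← e.sum_comp]
    refine Finset.sum_congr rfl fun i _ => ?_
    rw [← e.sum_comp]
    simp
  have hPu : IsUnit (P.map ψ).det := by
    rw [← RingHom.mapMatrix_apply, ← RingHom.map_det]; exact hP1.map ψ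
  obtain ⟨u, hu⟩ : ∃ u, u ᵥ* (P.map ψ) = ((M.map ψ) *ᵥ v) ∘ e.symm :=
    ⟨(((M.map ψ) *ᵥ v) ∘ e.symm) ᵥ* (P.map ψ)⁻¹, by
      rw [vecMul_vecMul, nonsing_inv_mul _ hPu, vecMul_one]⟩
  have hu0 : u ≠ 0 := by
    rintro rfl
    rw [zero_vecMul] at hu
    refine hv2 ?_
    ext1 i
    simpa using (congrFun hu (e i)).symm
  have hfin : ∑ i, algebraMap (PowerSeries κ) (FractionRing (PowerSeries κ))
      (PowerSeries.C (c i)) * u i ^ 2 = 0 := by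
    have h1 : qv (P.map ψ * (G.map ψ).submatrix e.symm e.symm * (P.map ψ)ᵀ) u = 0 := by
      rw [qv_conj, hqe', hu]
      have : (((M.map ψ) *ᵥ v) ∘ e.symm) ∘ e = (M.map ψ) *ᵥ v := by ext1 i; simp
      rw [this, hv1]
    have h2 : P.map ψ * (G.map ψ).submatrix e.symm e.symm * (P.map ψ)ᵀ =
        diagonal (fun i => algebraMap (PowerSeries κ) (FractionRing (PowerSeries κ))
          (PowerSeries.C (c i))) := by
      rw [submatrix_map, ← transpose_map, ← Matrix.map_mul, ← Matrix.map_mul, hc,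
        diagonal_map (map_zero ψ)]
      simp only [hψC]
    rw [h2, diag_qv] at h1
    exact h1
  obtain ⟨u', hu', hu'0⟩ := diag_clear (PowerSeries κ) _ u hu0 hfin
  obtain ⟨u'', hu'', h0⟩ := ps_diag_reduce _ u' hu' hu'0
  simp only [PowerSeries.constantCoeff_C] at h0
  exact hu'' (hcan _ h0)

end lemmaG
end QBProof

namespace QBProof

/-! ### Constancy along rational curves -/

section lemmaA
variable {κ : Type*} [Field κ] [CharZero κ] {n r : ℕ}

/-- Along a curve `w` over which the special quadric has a point, isotropy of the Pfister form over
`κ(s)` can be read off from its reduction at a rational point of the projective line. The completion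
at this point is given by `ψ`, and `y` is a primitive multiple of the image of `w`. -/
theorem Dat.lemmaA (D : Dat n r) {μ : κ} (hμ : μ ≠ 0) {w : Fin (n+1) → Polynomial κ}
    (hw : w ≠ 0) (hq : D.QIso (Polynomial.C (μ ^ 2)) w)
    (ψ : Polynomial κ →+* FractionRing (PowerSeries κ)) (hψ : Function.Injective ψ)
    (hψC : ∀ c, ψ (Polynomial.C c) = algebraMap (PowerSeries κ) _ (PowerSeries.C c))
    (e : FractionRing (PowerSeries κ)) (he : e ≠ 0) (y : Fin (n+1) → PowerSeries κ)
    (hy : ∀ i, ψ (w i) = e * algebraMap _ _ (y i))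
    (hy0 : ∃ i, PowerSeries.constantCoeff (y i) ≠ 0) :
    PIso w ↔ PIso (fun i => PowerSeries.constantCoeff (y i)) := by
  have hainj := IsFractionRing.injective (PowerSeries κ) (FractionRing (PowerSeries κ))
  constructor
  · intro h
    have h1 := PIso.map ψ hψ h
    simp only [hy] at h1
    exact (PIso.of_frac _ ((PIso.smul_iff he _).1 h1)).reduce
  · intro h
    have hqy : D.QIso (PowerSeries.C (μ ^ 2)) y := by
      have h1 := Dat.QIso.map D ψ hψ hq
      simp only [hy, hψC] at h1
      exact Dat.QIso.of_frac D _ (Dat.QIso.of_smul D he h1)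
    have h2 : PIso (fun i => ψ (w i)) := by
      simp only [hy]
      exact (PIso.smul_iff he _).2 (PIso.map _ hainj (D.piso_lift hμ hy0 hqy h))
    obtain ⟨g, hg⟩ := (IsPrincipalIdealRing.principal (Ideal.span (Set.range w))).principal
    have hwg : ∀ i, ∃ w' , w i = g * w' := fun i => by
      have h3 : w i ∈ Ideal.span (Set.range w) := Ideal.subset_span ⟨i, rfl⟩
      rw [hg] at h3
      exact Ideal.mem_span_singleton.1 h3
    choose w' hw' using hwg
    have hg0 : g ≠ 0 := by
      rintro rfl
      exact hw (by ext1 i; simp [hw' i])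
    have hgm : g ∈ Ideal.span (Set.range w) := by
      rw [hg]; exact Ideal.mem_span_singleton_self g
    obtain ⟨b, hb⟩ := Ideal.mem_span_range_iff_exists_fun.1 hgm
    have hb1 : ∑ i, b i * w' i = 1 := by
      refine mul_left_cancel₀ hg0 ?_
      rw [mul_one, Finset.mul_sum]
      conv_rhs => rw [← hb]
      exact Finset.sum_congr rfl fun i _ => by rw [hw' i]; ring
    have hweq : w = fun i => g * w' i := funext hw'
    rw [hweq] at hq ⊢
    rw [PIso.smul_iff hg0]
    refine D.lemmaG hμ hb1 (Dat.QIso.of_smul D hg0 hq) ψ hψ hψC ?_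
    simp only [hw', map_mul] at h2
    exact (PIso.smul_iff (fun h => hg0 (hψ (by rw [h, map_zero]))) _).1 h2

/-- The reduction at `s = 0` is given by the lowest coefficients. -/
theorem Dat.lowA (D : Dat n r) {μ : κ} (hμ : μ ≠ 0) {w : Fin (n+1) → Polynomial κ}
    (hq : D.QIso (Polynomial.C (μ ^ 2)) w) (j : ℕ) (hj : ∀ i, ∀ k < j, (w i).coeff k = 0)
    (hj0 : ∃ i, (w i).coeff j ≠ 0) : PIso w ↔ PIso (fun i => (w i).coeff j) := by
  have hX : ∀ i, ∃ w', w i = Polynomial.X ^ j * w' := fun i =>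
    Polynomial.X_pow_dvd_iff.2 (hj i)
  choose w' hw' using hX
  have hc : ∀ i, (w i).coeff j = PowerSeries.constantCoeff (w' i : PowerSeries κ) := fun i => by
    rw [hw' i, ← PowerSeries.coeff_zero_eq_constantCoeff_apply, Polynomial.coeff_coe]
    simpa using Polynomial.coeff_X_pow_mul (w' i) j 0
  simp only [hc] at hj0 ⊢
  refine D.lemmaA hμ ?_ hq
    ((algebraMap (PowerSeries κ) (FractionRing (PowerSeries κ))).comp
      Polynomial.coeToPowerSeries.ringHom) ?_ ?_
    (algebraMap (PowerSeries κ) _ (PowerSeries.X ^ j)) ?_ (fun i => (w' i : PowerSeries κ)) ?_ hj0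
  · rintro rfl
    obtain ⟨i, hi⟩ := hj0
    rw [← hc] at hi
    simp at hi
  · exact (IsFractionRing.injective (PowerSeries κ) (FractionRing (PowerSeries κ))).comp
      (Polynomial.coe_injective κ)
  · intro c
    simp
  · rw [Ne, IsFractionRing.to_map_eq_zero_iff]
    exact pow_ne_zero _ PowerSeries.X_ne_zero
  · intro i
    rw [← map_mul, hw' i]
    simp

/-- The reduction at `s = ∞` is given by the leading coefficients. -/
theorem Dat.topA (D : Dat n r) {μ : κ} (hμ : μ ≠ 0) {w : Fin (n+1) → Polynomial κ}
    (hq : D.QIso (Polynomial.C (μ ^ 2)) w) (j : ℕ) (hj : ∀ i, (w i).natDegree ≤ j)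
    (hj0 : ∃ i, (w i).coeff j ≠ 0) : PIso w ↔ PIso (fun i => (w i).coeff j) := by
  obtain ⟨t, ht⟩ : ∃ t : FractionRing (PowerSeries κ),
    t = algebraMap (PowerSeries κ) (FractionRing (PowerSeries κ)) PowerSeries.X := ⟨_, rfl⟩
  have ht0 : t ≠ 0 := by
    rw [ht, Ne, IsFractionRing.to_map_eq_zero_iff]; exact PowerSeries.X_ne_zero
  letI : Invertible t := invertibleOfNonzero ht0
  obtain ⟨ι, hι⟩ : ∃ ι : κ →+* FractionRing (PowerSeries κ), ι =
    (algebraMap (PowerSeries κ) (FractionRing (PowerSeries κ))).comp PowerSeries.C := ⟨_, rfl⟩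
  have hev : ∀ f : Polynomial κ, Polynomial.eval₂ ι t f = algebraMap _ _ (f : PowerSeries κ) := by
    intro f
    have : Polynomial.eval₂RingHom ι t = (algebraMap (PowerSeries κ)
        (FractionRing (PowerSeries κ))).comp Polynomial.coeToPowerSeries.ringHom := by
      ext <;> simp [hι, ht]
    exact congrArg (fun g : Polynomial κ →+* _ => g f) this
  have key : ∀ (f : Polynomial κ) (N : ℕ), f.natDegree ≤ N → Polynomial.eval₂ ι t⁻¹ f =
      (t ^ N)⁻¹ * algebraMap _ _ ((f.reflect N : Polynomial κ) : PowerSeries κ) := by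
    intro f N hN
    have h1 := Polynomial.eval₂_reflect_mul_pow ι t N (f.reflect N)
      (le_trans (Polynomial.natDegree_reflect_le) (by simp [hN]))
    rw [Polynomial.reflect_reflect, hev, invOf_eq_inv] at h1
    rw [← h1]; field_simp
  have hc : ∀ i, (w i).coeff j =
      PowerSeries.constantCoeff (((w i).reflect j : Polynomial κ) : PowerSeries κ) := fun i => by
    rw [← PowerSeries.coeff_zero_eq_constantCoeff_apply, Polynomial.coeff_coe,
      Polynomial.coeff_reflect, Polynomial.revAt_zero]
  simp only [hc] at hj0 ⊢
  refine D.lemmaA hμ ?_ hq (Polynomial.eval₂RingHom ι t⁻¹) ?_ ?_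
    ((t ^ j)⁻¹) (inv_ne_zero (pow_ne_zero _ ht0)) _ ?_ hj0
  · rintro rfl
    obtain ⟨i, hi⟩ := hj0
    rw [← hc] at hi
    simp at hi
  · refine (injective_iff_map_eq_zero _).2 fun f hf => ?_
    rw [Polynomial.coe_eval₂RingHom, key f _ le_rfl, mul_eq_zero,
      IsFractionRing.to_map_eq_zero_iff] at hf
    have h2 := hf.resolve_left (inv_ne_zero (pow_ne_zero _ ht0))
    rw [← Polynomial.coe_zero, Polynomial.coe_inj, Polynomial.reflect_eq_zero_iff] at h2
    exact h2
  · intro c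
    simp [hι]
  · intro i
    rw [Polynomial.coe_eval₂RingHom, key _ j (hj i)]

end lemmaA

section shift
variable {κ : Type*} [Field κ] {n : ℕ}

theorem comp_inj {p q : Polynomial κ} (h : p.comp (Polynomial.X + 1) = q.comp (Polynomial.X + 1)) :
    p = q := by
  have := congrArg (fun f => f.comp (Polynomial.X - 1)) h
  simpa [Polynomial.comp_assoc] using this

theorem piso_comp (w : Fin (n+1) → Polynomial κ) :
    PIso w ↔ PIso (fun i => (w i).comp (Polynomial.X + 1)) := by
  constructor
  · intro h
    have := PIso.map (Polynomial.compRingHom (Polynomial.X + 1)) (fun p q h => comp_inj (by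
      simpa only [Polynomial.coe_compRingHom_apply] using h)) h
    simpa only [Polynomial.coe_compRingHom_apply] using this
  · intro h
    have := PIso.map (Polynomial.compRingHom (Polynomial.X - 1)) (fun p q h => by
      simp only [Polynomial.coe_compRingHom_apply] at h
      have := congrArg (fun f => f.comp (Polynomial.X + 1)) h
      simpa [Polynomial.comp_assoc] using this) h
    simpa [Polynomial.comp_assoc] using this

end shift

section path
variable {F : Type*} [Field F] (B : ValuationSubring F) [CharZero (IsLocalRing.ResidueField B)]
  {n r : ℕ}

/-- For a nonzero vector `y` over the valued field `F`, the Pfister form at the reduction of the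
point `[y]` of projective space is isotropic. -/
def ZF (y : Fin (n+1) → F) : Prop :=
  ∃ c : F, c ≠ 0 ∧ ∃ y' : Fin (n+1) → B, (∀ i, y i = c * y' i) ∧
    (∃ i, IsLocalRing.residue B (y' i) ≠ 0) ∧ PIso (fun i => IsLocalRing.residue B (y' i))

theorem ZF_iff {y : Fin (n+1) → F} {c : F} (hc : c ≠ 0) {y' : Fin (n+1) → B}
    (hy : ∀ i, y i = c * y' i) (hy0 : ∃ i, IsLocalRing.residue B (y' i) ≠ 0) :
    ZF B y ↔ PIso (fun i => IsLocalRing.residue B (y' i)) := by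
  constructor
  · rintro ⟨c2, hc2, y2, hy2, hy20, h⟩
    -- the two normalisations differ by a unit
    have hle : ∀ (c c2 : F) (y' y2 : Fin (n+1) → B), c ≠ 0 → c2 ≠ 0 →
        (∀ i, c * y' i = c2 * y2 i) → (∃ i, IsLocalRing.residue B (y' i) ≠ 0) →
        c / c2 ∈ B := by
      intro c c2 y' y2 hc hc2 h ⟨i, hi⟩
      rw [IsLocalRing.residue_ne_zero_iff_isUnit] at hi
      obtain ⟨u, hu⟩ := hi.exists_right_inv
      have hu' : (y' i : F) * u = 1 := by exact_mod_cast congrArg Subtype.val hu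
      have : c / c2 = y2 i * u := by
        rw [div_eq_iff hc2]
        linear_combination (-c) * hu' + u * h i
      rw [this]; exact (y2 i * u).2
    have h1 : c2 / c ∈ B := hle c2 c y2 y' hc2 hc (fun i => by rw [← hy, ← hy2]) hy20
    have h2 : ∀ i, y' i = ⟨c2 / c, h1⟩ * y2 i := fun i => by
      apply Subtype.ext
      have := hy i
      rw [hy2 i] at this
      simp only [MulMemClass.coe_mul]
      field_simp
      rw [this, mul_comm]
    have h3 : IsLocalRing.residue B ⟨c2 / c, h1⟩ ≠ 0 := by
      intro h
      obtain ⟨i, hi⟩ := hy0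
      rw [h2, map_mul, h, zero_mul] at hi
      exact hi rfl
    simp only [h2, map_mul]
    exact (PIso.smul_iff h3 _).2 h
  · intro h
    exact ⟨c, hc, y', hy, hy0, h⟩

theorem ZF_smul {y : Fin (n+1) → F} {c : F} (hc : c ≠ 0) (h : ZF B y) :
    ZF B (fun i => c * y i) := by
  obtain ⟨c', hc', y', h1, h2, h3⟩ := h
  exact ⟨c * c', mul_ne_zero hc hc', y', fun i => by simp only [h1]; ring, h2, h3⟩

/-- Reductions of the family of points `x(s)` support a point of the special quadric bundle. -/
def QF (D : Dat n r) (μ : IsLocalRing.ResidueField B) (x : Fin (n+1) → Polynomial F) : Prop :=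
  ∀ (c : F) (x' : Fin (n+1) → Polynomial B), c ≠ 0 →
    (∀ i, x i = Polynomial.C c * (x' i).map (algebraMap B F)) →
    (∃ i, (x' i).map (IsLocalRing.residue B) ≠ 0) →
    D.QIso (Polynomial.C (μ ^ 2)) (fun i => (x' i).map (IsLocalRing.residue B))

theorem QF_smul {D : Dat n r} {μ : IsLocalRing.ResidueField B} {x : Fin (n+1) → Polynomial F}
    {c : F} (hc : c ≠ 0) (h : QF B D μ x) : QF B D μ (fun i => Polynomial.C c * x i) := by
  intro c' x' hc' hx hx0
  refine h (c⁻¹ * c') x' (mul_ne_zero (inv_ne_zero hc) hc') (fun i => ?_) hx0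
  rw [map_mul, mul_assoc, ← hx i, ← mul_assoc, ← map_mul, inv_mul_cancel₀ hc, map_one, one_mul]

/-- For a curve over the valued field `F` whose reduction has lowest term of order `j`, the Pfister
form at that term is isotropic precisely when it is so at the reduction of the value at `s = 0`.
The proof is by induction on `j`: rescaling `s` by the first slope of the Newton polygon turns the
term of order `j` into the leading one, and `Dat.topA`, `Dat.lowA` pass to a term of lower order.
Divisibility of the value group provides an element of the required slope. -/
theorem path_aux (hdiv : ∀ f : F, f ≠ 0 → ∀ m : ℕ, 0 < m → ∃ a : F, B.valuation a ^ m = B.valuation f)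
    (D : Dat n r) {μ : IsLocalRing.ResidueField B} (hμ : μ ≠ 0) (j : ℕ) :
    ∀ x : Fin (n+1) → Polynomial B,
      (∀ a : F, a ≠ 0 → QF B D μ
        (fun i => ((x i).map (algebraMap B F)).comp (Polynomial.C a * Polynomial.X))) →
      (∃ i, (x i).coeff 0 ≠ 0) →
      (∀ i, ∀ k < j, IsLocalRing.residue B ((x i).coeff k) = 0) →
      (∃ i, IsLocalRing.residue B ((x i).coeff j) ≠ 0) →
      (PIso (fun i => IsLocalRing.residue B ((x i).coeff j)) ↔
        ZF B (fun i => ((x i).coeff 0 : F))) := by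
  induction j using Nat.strong_induction_on with
  | _ j ih =>
  intro x hQ hx0 hlow hj
  rcases Nat.eq_zero_or_pos j with rfl | hjpos
  · rw [ZF_iff B one_ne_zero (fun i => (one_mul _).symm) hj]
  -- slopes of the Newton polygon
  have hb : ∀ p : Fin (n+1) × Fin j, ∃ b : F,
      B.valuation b ^ (j - p.2) = B.valuation ((x p.1).coeff p.2 : F) := by
    intro p
    by_cases h : ((x p.1).coeff p.2 : F) = 0
    · refine ⟨0, ?_⟩
      rw [h, map_zero, zero_pow]; have := p.2.2; omega
    · exact hdiv _ h _ (by have := p.2.2; omega)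
  choose b hb using hb
  haveI : Nonempty (Fin (n+1) × Fin j) := ⟨(0, ⟨0, hjpos⟩)⟩
  obtain ⟨p, hp⟩ := Finite.exists_max (fun p => B.valuation (b p))
  obtain ⟨a, ha⟩ : ∃ a, a = b p := ⟨_, rfl⟩
  rw [← ha] at hp
  have ha0 : a ≠ 0 := by
    rintro rfl
    obtain ⟨i, hi⟩ := hx0
    have h1 := hp (i, ⟨0, hjpos⟩)
    rw [map_zero, le_zero_iff] at h1
    have h2 := hb (i, ⟨0, hjpos⟩)
    rw [h1, zero_pow (by simp; omega), eq_comm, map_eq_zero] at h2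
    exact hi (Subtype.ext h2)
  have hva0 : B.valuation a ≠ 0 := (map_ne_zero _).2 ha0
  have ha1 : B.valuation a < 1 := by
    have h1 : B.valuation ((x p.1).coeff p.2 : F) < 1 := by
      rw [← ValuationSubring.valuation_lt_one_iff, ← IsLocalRing.residue_eq_zero_iff]
      exact hlow _ _ p.2.2
    rw [← hb p, ← ha] at h1
    by_contra hge
    exact absurd (one_le_pow₀ (not_lt.1 hge)) (not_le.2 h1)
  have hcoef : ∀ i k, (Polynomial.C (a ^ j)⁻¹ * ((x i).map (algebraMap B F)).comp
      (Polynomial.C a * Polynomial.X)).coeff k = (a ^ j)⁻¹ * ((x i).coeff k * a ^ k) := by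
    intro i k
    rw [Polynomial.coeff_C_mul, Polynomial.comp_C_mul_X_coeff, Polynomial.coeff_map]; rfl
  have hvj : B.valuation (a ^ j) ≠ 0 := by rw [map_pow]; exact pow_ne_zero _ hva0
  have hvle : ∀ i k, k < j → B.valuation (((x i).coeff k : F) * a ^ k) ≤ B.valuation (a ^ j) := by
    intro i k hk
    rw [map_mul, ← hb (i, ⟨k, hk⟩), map_pow, map_pow]
    calc _ ≤ B.valuation a ^ (j - k) * B.valuation a ^ k := by
          gcongr; exact hp (i, ⟨k, hk⟩)
      _ = _ := by rw [← pow_add]; congr 1; omega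
  have hvlt : ∀ i k, j < k → B.valuation (((x i).coeff k : F) * a ^ k) < B.valuation (a ^ j) := by
    intro i k hk
    rw [map_mul, map_pow, map_pow]
    calc _ ≤ 1 * B.valuation a ^ k := by
          gcongr; exact (B.valuation_le_one_iff _).2 ((x i).coeff k).2
      _ < _ := by
        rw [one_mul]
        exact pow_lt_pow_right_of_lt_one₀ (zero_lt_iff.2 hva0) ha1 hk
  have hmem : ∀ i k, (a ^ j)⁻¹ * ((x i).coeff k * a ^ k) ∈ B := by
    intro i k
    rcases lt_trichotomy k j with h | rfl | h
    · rw [← B.valuation_le_one_iff, map_mul, map_inv₀]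
      exact (inv_mul_le_one₀ (zero_lt_iff.2 hvj)).2 (hvle i k h)
    · rw [mul_comm, mul_assoc, mul_inv_cancel₀ (pow_ne_zero _ ha0), mul_one]
      exact ((x i).coeff k).2
    · rw [← B.valuation_le_one_iff, map_mul, map_inv₀]
      exact (inv_mul_le_one₀ (zero_lt_iff.2 hvj)).2 (hvlt i k h).le
  have hlift : ∀ i, ∃ y : Polynomial B, y.map (algebraMap B F) =
      Polynomial.C (a ^ j)⁻¹ * ((x i).map (algebraMap B F)).comp
      (Polynomial.C a * Polynomial.X) := by
    intro i
    have : Polynomial.C (a ^ j)⁻¹ * ((x i).map (algebraMap B F)).comp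
      (Polynomial.C a * Polynomial.X) ∈ Polynomial.lifts (algebraMap B F) := by
      rw [Polynomial.lifts_iff_coeff_lifts]
      intro k
      rw [hcoef]
      exact ⟨⟨_, hmem i k⟩, rfl⟩
    exact (Polynomial.mem_lifts _).1 this
  choose y hy using hlift
  have hyc : ∀ i k, ((y i).coeff k : F) = (a ^ j)⁻¹ * ((x i).coeff k * a ^ k) := by
    intro i k
    rw [← hcoef, ← hy, Polynomial.coeff_map]; rfl
  have hyj : ∀ i, (y i).coeff j = (x i).coeff j := fun i => Subtype.ext (by
    rw [hyc, mul_comm, mul_assoc, mul_inv_cancel₀ (pow_ne_zero _ ha0), mul_one])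
  have hytop : ∀ i k, j < k → IsLocalRing.residue B ((y i).coeff k) = 0 := by
    intro i k hk
    rw [IsLocalRing.residue_eq_zero_iff, ValuationSubring.valuation_lt_one_iff, hyc, map_mul,
      map_inv₀]
    exact (inv_mul_lt_one₀ (zero_lt_iff.2 hvj)).2 (hvlt i k hk)
  have hyp : IsLocalRing.residue B ((y p.1).coeff p.2) ≠ 0 := by
    rw [IsLocalRing.residue_ne_zero_iff_isUnit, ValuationSubring.valuation_eq_one_iff, hyc, map_mul, map_inv₀, map_mul,
      ← hb p, ← ha, map_pow, map_pow, ← pow_add]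
    have : j - (p.2 : ℕ) + p.2 = j := by have := p.2.2; omega
    rw [this]
    exact inv_mul_cancel₀ (pow_ne_zero _ hva0)
  have hQy : D.QIso (Polynomial.C (μ ^ 2)) (fun i => (y i).map (IsLocalRing.residue B)) := by
    refine hQ a ha0 (a ^ j) y (pow_ne_zero _ ha0) (fun i => ?_) ⟨p.1, fun h => hyp ?_⟩
    · rw [hy, ← mul_assoc, ← map_mul, mul_inv_cancel₀ (pow_ne_zero _ ha0), map_one, one_mul]
    · have := congrArg (fun f => Polynomial.coeff f p.2) h
      simpa using this
  have e1 := D.topA hμ hQy j (fun i => Polynomial.natDegree_le_iff_coeff_eq_zero.2 fun k hk => by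
    rw [Polynomial.coeff_map]; exact hytop i k hk) (by
    simp only [Polynomial.coeff_map, hyj]; exact hj)
  simp only [Polynomial.coeff_map, hyj] at e1
  -- lowest index of the reduction of `y`
  have hex : ∃ k, ∃ i, IsLocalRing.residue B ((y i).coeff k) ≠ 0 := ⟨p.2, p.1, hyp⟩
  classical
  obtain ⟨k, hk, hkmin⟩ : ∃ k, (∃ i, IsLocalRing.residue B ((y i).coeff k) ≠ 0) ∧
      ∀ k' < k, ∀ i, IsLocalRing.residue B ((y i).coeff k') = 0 :=
    ⟨Nat.find hex, Nat.find_spec hex, fun k' hk' i => by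
      have := Nat.find_min hex hk'
      push Not at this
      exact this i⟩
  have hkj : k < j := by
    by_contra hge
    exact hyp (hkmin _ (lt_of_lt_of_le p.2.2 (not_lt.1 hge)) _)
  have e2 := D.lowA hμ hQy k (fun i k' hk' => by
    rw [Polynomial.coeff_map]; exact hkmin k' hk' i) (by
    simpa only [Polynomial.coeff_map] using hk)
  simp only [Polynomial.coeff_map] at e2
  have e3 := ih k hkj y (by
    intro a' ha'
    have h1 := QF_smul B (inv_ne_zero (pow_ne_zero j ha0)) (hQ (a * a') (mul_ne_zero ha0 ha'))
    convert h1 using 2 with i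
    rw [hy, Polynomial.mul_comp, Polynomial.C_comp, Polynomial.comp_assoc]
    simp [mul_assoc]) (by
    obtain ⟨i, hi⟩ := hx0
    refine ⟨i, fun h => hi ?_⟩
    have := hyc i 0
    rw [h, pow_zero, mul_one, ZeroMemClass.coe_zero, eq_comm, mul_eq_zero] at this
    exact Subtype.ext (this.resolve_left (inv_ne_zero (pow_ne_zero _ ha0)))) (fun i k' hk' => hkmin k' hk' i) hk
  rw [← e1, e2, e3]
  have hsc : (fun i => ((y i).coeff 0 : F)) = fun i => (a ^ j)⁻¹ * ((x i).coeff 0 : F) := by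
    ext1 i; rw [hyc, pow_zero, mul_one]
  constructor
  · intro h
    rw [hsc] at h
    have := ZF_smul B (pow_ne_zero j ha0) h
    simpa only [mul_inv_cancel_left₀ (pow_ne_zero j ha0)] using this
  · intro h
    rw [hsc]
    exact ZF_smul B (inv_ne_zero (pow_ne_zero j ha0)) h

/-- Families of polynomials in one variable over a valued field can be scaled to become primitive. -/
theorem poly_normalize {ι : Type*} [Finite ι] (x : ι → Polynomial F) (hx : x ≠ 0) :
    ∃ c : F, c ≠ 0 ∧ ∃ x' : ι → Polynomial B,
      (∀ i, x i = Polynomial.C c * (x' i).map (algebraMap B F)) ∧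
      ∃ i, (x' i).map (IsLocalRing.residue B) ≠ 0 := by
  haveI := Fintype.ofFinite ι
  obtain ⟨N, hN⟩ : ∃ N, ∀ i, (x i).natDegree ≤ N :=
    ⟨Finset.univ.sup fun i => (x i).natDegree, fun i =>
      Finset.le_sup (f := fun i => (x i).natDegree) (Finset.mem_univ i)⟩
  obtain ⟨i₁, hi₁⟩ := Function.ne_iff.1 hx
  obtain ⟨p, hp0, v', hp1, hv'⟩ := exists_normalize B
    (fun p : ι × Fin (N+1) => (x p.1).coeff p.2) (by
      intro h
      refine hi₁ ?_
      ext k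
      by_cases hk : k < N + 1
      · simpa using congrFun h (i₁, ⟨k, hk⟩)
      · simpa using Polynomial.coeff_eq_zero_of_natDegree_lt (by have := hN i₁; omega))
  obtain ⟨c, hc⟩ : ∃ c, c = (x p.1).coeff p.2 := ⟨_, rfl⟩
  simp only [← hc] at hp0 hv'
  have hlift : ∀ i, ∃ y : Polynomial B, y.map (algebraMap B F) = Polynomial.C c⁻¹ * x i := by
    intro i
    have : Polynomial.C c⁻¹ * x i ∈ Polynomial.lifts (algebraMap B F) := by
      rw [Polynomial.lifts_iff_coeff_lifts]
      intro k
      rw [Polynomial.coeff_C_mul]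
      by_cases hk : k < N + 1
      · refine ⟨v' (i, ⟨k, hk⟩), ?_⟩
        have := hv' (i, ⟨k, hk⟩)
        simp only at this
        rw [this, inv_mul_cancel_left₀ hp0]
      · refine ⟨0, ?_⟩
        rw [Polynomial.coeff_eq_zero_of_natDegree_lt (by have := hN i; omega), mul_zero, map_zero]
    exact (Polynomial.mem_lifts _).1 this
  choose y hy using hlift
  refine ⟨c, hp0, y, fun i => ?_, p.1, fun h => ?_⟩
  · rw [hy, ← mul_assoc, ← map_mul, mul_inv_cancel₀ hp0, map_one, one_mul]
  · have h1 := congrArg (fun f => Polynomial.coeff f p.2) h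
    have h2 : (y p.1).coeff p.2 = 1 := by
      have := congrArg (fun f => Polynomial.coeff f p.2) (hy p.1)
      simp only [Polynomial.coeff_map, Polynomial.coeff_C_mul, ← hc, inv_mul_cancel₀ hp0] at this
      exact Subtype.ext this
    simp [Polynomial.coeff_map, h2] at h1

/-- Along a rational curve that lifts to the quadric bundle, the Pfister form has the same isotropy
behaviour at the reductions of the points `s = 0` and `s = 1`, although these reductions are not
points of the reduced curve in general. Reparametrizations are needed to reach them. -/
theorem path (hdiv : ∀ f : F, f ≠ 0 → ∀ m : ℕ, 0 < m → ∃ a : F, B.valuation a ^ m = B.valuation f)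
    (D : Dat n r) {μ : IsLocalRing.ResidueField B} (hμ : μ ≠ 0) (x : Fin (n+1) → Polynomial F)
    (hQ : ∀ a b : F, a ≠ 0 → QF B D μ
        (fun i => (x i).comp (Polynomial.C a * Polynomial.X + Polynomial.C b)))
    (hx0 : ∃ i, (x i).eval 0 ≠ 0) (hx1 : ∃ i, (x i).eval 1 ≠ 0) :
    ZF B (fun i => (x i).eval 0) ↔ ZF B (fun i => (x i).eval 1) := by
  obtain ⟨c, hc, x', hxx', hx'⟩ := poly_normalize B x (by
    rintro rfl; simp at hx0)
  -- the value at the origin of a normalised family agrees with its generic value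
  have key : ∀ y : Fin (n+1) → Polynomial B,
      (∀ a : F, a ≠ 0 → QF B D μ
        (fun i => ((y i).map (algebraMap B F)).comp (Polynomial.C a * Polynomial.X))) →
      (∃ i, (y i).coeff 0 ≠ 0) → (∃ i, (y i).map (IsLocalRing.residue B) ≠ 0) →
      (PIso (fun i => (y i).map (IsLocalRing.residue B)) ↔
        ZF B (fun i => ((y i).coeff 0 : F))) := by
    intro y hQy hy0 hy
    have hex : ∃ k, ∃ i, IsLocalRing.residue B ((y i).coeff k) ≠ 0 := by
      obtain ⟨i, hi⟩ := hy
      by_contra hcon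
      push Not at hcon
      exact hi (by ext k; simp [Polynomial.coeff_map, hcon])
    classical
    obtain ⟨k, hk, hkmin⟩ : ∃ k, (∃ i, IsLocalRing.residue B ((y i).coeff k) ≠ 0) ∧
        ∀ k' < k, ∀ i, IsLocalRing.residue B ((y i).coeff k') = 0 :=
      ⟨Nat.find hex, Nat.find_spec hex, fun k' hk' i => by
        have := Nat.find_min hex hk'
        push Not at this
        exact this i⟩
    have h1 := path_aux B hdiv D hμ k y hQy hy0 (fun i k' hk' => hkmin k' hk' i) hk
    have hQ1 : D.QIso (Polynomial.C (μ ^ 2)) (fun i => (y i).map (IsLocalRing.residue B)) := by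
      refine hQy 1 one_ne_zero 1 y one_ne_zero (fun i => ?_) hy
      simp
    have h2 := D.lowA hμ hQ1 k (fun i k' hk' => by
      rw [Polynomial.coeff_map]; exact hkmin k' hk' i) (by
      simpa only [Polynomial.coeff_map] using hk)
    simp only [Polynomial.coeff_map] at h2
    rw [h2, h1]
  have hx'e : ∀ i, (x' i).map (algebraMap B F) = Polynomial.C c⁻¹ * x i := fun i => by
    rw [hxx', ← mul_assoc, ← map_mul, inv_mul_cancel₀ hc, map_one, one_mul]
  have hA := key x' (by
    intro a ha
    have h1 := QF_smul B (inv_ne_zero hc) (hQ a 0 ha)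
    convert h1 using 2 with i
    rw [hx'e, Polynomial.mul_comp, Polynomial.C_comp]; simp) (by
    obtain ⟨i, hi⟩ := hx0
    refine ⟨i, fun h => hi ?_⟩
    rw [hxx', Polynomial.eval_mul, ← Polynomial.coeff_zero_eq_eval_zero,
      ← Polynomial.coeff_zero_eq_eval_zero, Polynomial.coeff_map, h, map_zero, mul_zero]) hx'
  have hev1 : ∀ i, (((x' i).comp (Polynomial.X + 1)).coeff 0 : F) = c⁻¹ * (x i).eval 1 := by
    intro i
    rw [Polynomial.coeff_zero_eq_eval_zero, Polynomial.eval_comp]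
    simp only [Polynomial.eval_add, Polynomial.eval_X, Polynomial.eval_one, zero_add]
    have h1 := congrArg (Polynomial.eval 1) (hx'e i)
    rw [Polynomial.eval_mul, Polynomial.eval_C, ← map_one (algebraMap B F),
      Polynomial.eval_map_apply] at h1
    simpa using h1
  have hev0 : ∀ i, ((x' i).coeff 0 : F) = c⁻¹ * (x i).eval 0 := by
    intro i
    have h1 := congrArg (fun f => Polynomial.coeff f 0) (hx'e i)
    simp only [Polynomial.coeff_map, Polynomial.coeff_C_mul] at h1
    rw [← Polynomial.coeff_zero_eq_eval_zero]
    exact h1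
  have hres1 : ∀ i, ((x' i).comp (Polynomial.X + 1)).map (IsLocalRing.residue B) =
      ((x' i).map (IsLocalRing.residue B)).comp (Polynomial.X + 1) := by
    intro i
    rw [Polynomial.map_comp]
    simp
  have hB := key (fun i => (x' i).comp (Polynomial.X + 1)) (by
    intro a ha
    have h1 := QF_smul B (inv_ne_zero hc) (hQ a 1 ha)
    convert h1 using 2 with i
    rw [Polynomial.map_comp, Polynomial.comp_assoc, hx'e, Polynomial.mul_comp, Polynomial.C_comp]
    simp) (by
    obtain ⟨i, hi⟩ := hx1
    refine ⟨i, fun h => hi ?_⟩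
    have := hev1 i
    rw [h, ZeroMemClass.coe_zero, eq_comm, mul_eq_zero] at this
    exact this.resolve_left (inv_ne_zero hc)) (by
    obtain ⟨i, hi⟩ := hx'
    refine ⟨i, ?_⟩
    rw [hres1]
    exact fun h => hi (comp_inj (by rw [h, Polynomial.zero_comp])))
  simp only [hev1, hres1] at hB
  simp only [hev0] at hA
  have hZ : ∀ y : Fin (n+1) → F, ZF B (fun i => c⁻¹ * y i) ↔ ZF B y := fun y =>
    ⟨fun h => by simpa only [mul_inv_cancel_left₀ hc] using ZF_smul B hc h,
      fun h => ZF_smul B (inv_ne_zero hc) h⟩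
  rw [hZ] at hA hB
  rw [← hA, ← hB]
  exact piso_comp _

end path
end QBProof

namespace QBProof

/-! ### Reduction of curves on quadric bundles -/

section quadric

/-- `p` is homogeneous of the (possibly negative) degree `e`. -/
def HomZ {σ R : Type*} [CommSemiring R] (e : ℤ) (p : MvPolynomial σ R) : Prop :=
  ∀ m, coeff m p ≠ 0 → (m.degree : ℤ) = e

theorem HomZ.eval₂_smul {σ R S F : Type*} [CommRing R] [CommRing S] [Field F] [Algebra F S]
    {e : ℤ} {p : MvPolynomial σ R} (hp : HomZ e p) (φ : R →+* S) {c : F} (hc : c ≠ 0) (x : σ → S) :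
    eval₂ φ (fun i => algebraMap F S c * x i) p = algebraMap F S (c ^ e) * eval₂ φ x p := by
  rw [eval₂_eq, eval₂_eq, Finset.mul_sum]
  refine Finset.sum_congr rfl fun m hm => ?_
  have h := hp m (mem_support_iff.1 hm)
  rw [← h, zpow_natCast]
  simp only [mul_pow, Finset.prod_mul_distrib, Finset.prod_pow_eq_pow_sum, map_pow]
  rw [Finsupp.degree_apply]
  ring

variable {F : Type*} [Field F] (B : ValuationSubring F) [CharZero (IsLocalRing.ResidueField B)]
variable {n r : ℕ}

/-- If a curve lifts to a quadric bundle that reduces to the special one, then its reduction lifts to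
the special quadric bundle. -/
theorem QF_of_quadric (D : Dat n r) (μ : IsLocalRing.ResidueField B) (l : Fin (r+2) → ℤ) (l₀ : ℤ)
    (AO : Fin (r+2) → Fin (r+2) → MvPolynomial (Fin (n+1)) B)
    (hhom : ∀ i j, HomZ (l i + l j + l₀) (AO i j))
    (hred : ∀ i j, MvPolynomial.map (IsLocalRing.residue B) (AO i j) =
      if i = j then D.sp (C (μ ^ 2)) X i else 0)
    (x : Fin (n+1) → Polynomial F) (z : Fin (r+2) → Polynomial F) (hz : z ≠ 0)
    (hq : ∑ i, ∑ j, eval₂ (Polynomial.C.comp (algebraMap B F)) x (AO i j) * z i * z j = 0) :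
    QF B D μ x := by
  intro c x' hc hx _
  obtain ⟨e, he, z', hz', i₀, hi₀⟩ := poly_normalize B
    (fun i => Polynomial.C (c ^ l i) * z i) (by
      obtain ⟨i, hi⟩ := Function.ne_iff.1 hz
      refine Function.ne_iff.2 ⟨i, mul_ne_zero ?_ hi⟩
      simpa using zpow_ne_zero _ hc)
  have hx2 : x = fun i => algebraMap F (Polynomial F) c * (x' i).map (algebraMap B F) := by
    funext i; exact hx i
  have h1 : ∑ i, ∑ j, eval₂ (Polynomial.C.comp (algebraMap B F))
      (fun i => (x' i).map (algebraMap B F)) (AO i j) *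
      (z' i).map (algebraMap B F) * (z' j).map (algebraMap B F) = 0 := by
    have h2 : Polynomial.C (e ^ 2) * ∑ i, ∑ j, eval₂ (Polynomial.C.comp (algebraMap B F))
      (fun i => (x' i).map (algebraMap B F)) (AO i j) *
      (z' i).map (algebraMap B F) * (z' j).map (algebraMap B F) = 0 := by
      have h3 : Polynomial.C (c ^ (-l₀)) * ∑ i, ∑ j,
        eval₂ (Polynomial.C.comp (algebraMap B F)) x (AO i j) * z i * z j = 0 := by rw [hq, mul_zero]
      rw [← h3, Finset.mul_sum, Finset.mul_sum]
      refine Finset.sum_congr rfl fun i _ => ?_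
      rw [Finset.mul_sum, Finset.mul_sum]
      refine Finset.sum_congr rfl fun j _ => ?_
      rw [hx2, (hhom i j).eval₂_smul _ hc]
      have hi := hz' i
      have hj := hz' j
      have h4 : Polynomial.C (c ^ (-l₀)) * algebraMap F (Polynomial F) (c ^ (l i + l j + l₀)) =
          Polynomial.C (c ^ l i) * Polynomial.C (c ^ l j) := by
        rw [Polynomial.algebraMap_eq, ← map_mul, ← map_mul, ← zpow_add₀ hc, ← zpow_add₀ hc]
        congr 2; ring
      calc _ = eval₂ (Polynomial.C.comp (algebraMap B F))
            (fun i => (x' i).map (algebraMap B F)) (AO i j) *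
            (Polynomial.C e * (z' i).map (algebraMap B F)) *
            (Polynomial.C e * (z' j).map (algebraMap B F)) := by rw [map_pow]; ring
        _ = _ := by rw [← hi, ← hj]; linear_combination (- z i * z j * eval₂ (Polynomial.C.comp (algebraMap B F))
            (fun i => (x' i).map (algebraMap B F)) (AO i j)) * h4
    exact (mul_eq_zero.1 h2).resolve_left (by simpa using he)
  have h5 : ∑ i, ∑ j, eval₂ Polynomial.C x' (AO i j) * z' i * z' j = 0 := by
    apply Polynomial.map_injective (algebraMap B F) Subtype.val_injective
    rw [← Polynomial.coe_mapRingHom]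
    simp only [map_sum, map_mul, map_zero]
    rw [← h1]
    refine Finset.sum_congr rfl fun i _ => Finset.sum_congr rfl fun j _ => ?_
    rw [MvPolynomial.hom_eval₂]
    simp only [Polynomial.coe_mapRingHom]
    congr 3
    ext a; simp
  have h6 := congrArg (Polynomial.mapRingHom (IsLocalRing.residue B)) h5
  simp only [map_sum, map_mul, map_zero] at h6
  refine ⟨fun i => (z' i).map (IsLocalRing.residue B), fun h => hi₀ (congrFun h i₀), ?_⟩
  rw [← h6]
  refine Finset.sum_congr rfl fun i _ => ?_
  have h7 : ∀ j, Polynomial.mapRingHom (IsLocalRing.residue B) (eval₂ Polynomial.C x' (AO i j)) =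
      if i = j then D.sp (Polynomial.C (μ ^ 2))
        (fun i => (x' i).map (IsLocalRing.residue B)) i else 0 := by
    intro j
    have h8 : Polynomial.mapRingHom (IsLocalRing.residue B) (eval₂ Polynomial.C x' (AO i j)) =
        eval₂Hom Polynomial.C (fun i => (x' i).map (IsLocalRing.residue B))
          (MvPolynomial.map (IsLocalRing.residue B) (AO i j)) := by
      rw [MvPolynomial.hom_eval₂, coe_eval₂Hom, MvPolynomial.eval₂_map]
      congr 1
      ext a; simp
    rw [h8, hred]
    split_ifs with h
    · rw [← D.sp_map]
      simp
    · simp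
  simp only [h7, ite_mul, zero_mul, Finset.sum_ite_eq, Finset.mem_univ, if_true,
    Polynomial.coe_mapRingHom]
  ring

end quadric

/-- Specialisation of a ring is dominated by a valuation ring. -/
theorem dom {R K K' : Type*} [CommRing R] [Field K] [Field K'] (Ψ : R →+* K) (θ : R →+* K')
    (h : ∀ f, Ψ f = 0 → θ f = 0) : ∃ B : ValuationSubring K,
      ∀ f, B.valuation (Ψ f) ≤ 1 ∧ (B.valuation (Ψ f) < 1 ↔ θ f = 0) := by
  have hs : Function.Surjective Ψ.rangeRestrict := Ψ.rangeRestrict_surjective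
  have hk : RingHom.ker Ψ.rangeRestrict ≤ RingHom.ker θ := fun f hf => h f (by
    rw [RingHom.mem_ker] at hf
    exact congrArg Subtype.val hf)
  haveI : (RingHom.ker θ).IsPrime := RingHom.ker_isPrime θ
  obtain ⟨P, hP⟩ : ∃ P, P = Ideal.map Ψ.rangeRestrict (RingHom.ker θ) := ⟨_, rfl⟩
  haveI hPp : P.IsPrime := hP ▸ Ideal.map_isPrime_of_surjective hs hk
  have hmem : ∀ f, Ψ.rangeRestrict f ∈ P ↔ θ f = 0 := by
    intro f
    have := Ideal.comap_map_of_surjective Ψ.rangeRestrict hs (RingHom.ker θ)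
    have h2 : Ideal.comap Ψ.rangeRestrict ⊥ ≤ RingHom.ker θ := hk
    rw [sup_eq_left.2 h2] at this
    rw [hP, ← Ideal.mem_comap, this, RingHom.mem_ker]
  obtain ⟨B, hB⟩ := LocalSubring.exists_le_valuationSubring (LocalSubring.ofPrime Ψ.range P)
  obtain ⟨hle, hloc⟩ := hB
  refine ⟨B, fun f => ?_⟩
  have hA : Ψ.range ≤ (LocalSubring.ofPrime Ψ.range P).toSubring := LocalSubring.le_ofPrime _ _
  have hm1 : Ψ f ∈ (LocalSubring.ofPrime Ψ.range P).toSubring := hA ⟨f, rfl⟩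
  have hm2 : Ψ f ∈ B := hle hm1
  refine ⟨(B.valuation_le_one_iff _).2 hm2, ?_⟩
  have h1 : B.valuation (Ψ f) < 1 ↔ ¬ IsUnit (⟨Ψ f, hm2⟩ : B) := by
    rw [← ValuationSubring.valuation_lt_one_iff B ⟨Ψ f, hm2⟩, IsLocalRing.mem_maximalIdeal, mem_nonunits_iff]
  have h2 : IsUnit (⟨Ψ f, hm2⟩ : B) ↔
      IsUnit (⟨Ψ f, hm1⟩ : (LocalSubring.ofPrime Ψ.range P).toSubring) := by
    constructor
    · intro hu
      exact hloc.map_nonunit _ hu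
    · intro hu
      exact hu.map (Subring.inclusion hle)
  have h3 : IsUnit (⟨Ψ f, hm1⟩ : (LocalSubring.ofPrime Ψ.range P).toSubring) ↔
      Ψ.rangeRestrict f ∉ P := by
    have := IsLocalization.AtPrime.isUnit_to_map_iff
      (LocalSubring.ofPrime Ψ.range P).toSubring P (Ψ.rangeRestrict f)
    exact this
  rw [h1, h2, h3, not_not, hmem]

end QBProof

namespace QBProof

/-! ### Gauss valuations on quadratic extensions -/

/-- Families of polynomials over a valued field can be scaled to become primitive. -/
theorem mv_normalize {L : Type*} [Field L] (O : ValuationSubring L) {ι V : Type*} [Finite ι]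
    (p : ι → MvPolynomial V L) (hp : p ≠ 0) :
    ∃ c : L, c ≠ 0 ∧ ∃ p' : ι → MvPolynomial V O,
      (∀ i, p i = C c * MvPolynomial.map (algebraMap O L) (p' i)) ∧
      ∃ i, MvPolynomial.map (IsLocalRing.residue O) (p' i) ≠ 0 := by
  classical
  haveI := Fintype.ofFinite ι
  obtain ⟨i₁, hi₁⟩ := Function.ne_iff.1 hp
  obtain ⟨m₁, hm₁⟩ := MvPolynomial.ne_zero_iff.1 hi₁
  obtain ⟨S, hS⟩ : ∃ S, S = Finset.univ.biUnion fun i => (p i).support := ⟨_, rfl⟩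
  have hSm : ∀ i m, coeff m (p i) ≠ 0 → m ∈ S := fun i m h => by
    rw [hS, Finset.mem_biUnion]; exact ⟨i, Finset.mem_univ _, mem_support_iff.2 h⟩
  obtain ⟨⟨i₀, m₀⟩, h0, v', hv', hv⟩ := exists_normalize O
    (fun q : ι × S => coeff q.2.1 (p q.1)) (fun h => hm₁ (congrFun h (i₁, ⟨m₁, hSm _ _ hm₁⟩)))
  refine ⟨_, h0, fun i => ∑ m : S, monomial m.1 (v' (i, m)), fun i => ?_, i₀, ?_⟩
  · ext m
    rw [coeff_C_mul, map_sum, coeff_sum]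
    simp only [map_monomial, coeff_monomial]
    by_cases hm : m ∈ S
    · rw [Finset.sum_eq_single ⟨m, hm⟩]
      · rw [if_pos rfl]; exact hv (i, ⟨m, hm⟩)
      · rintro b - hb
        rw [if_neg]; rintro rfl; exact hb rfl
      · simp
    · rw [Finset.sum_eq_zero, mul_zero]
      · by_contra h; exact hm (hSm _ _ h)
      · rintro b -
        rw [if_neg]; rintro rfl; exact hm b.2
  · intro h
    have h2 := congrArg (coeff m₀.1) h
    rw [map_sum, coeff_sum] at h2
    simp only [map_monomial, coeff_monomial] at h2
    rw [Finset.sum_eq_single m₀, if_pos rfl, hv'] at h2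
    · simp at h2
    · rintro b - hb
      rw [if_neg]; rintro h; exact hb (Subtype.ext h)
    · simp

/-- Reduction of coefficients to the residue field. -/
abbrev rdm {L V : Type*} [Field L] (O : ValuationSubring L) :
    MvPolynomial V O →+* MvPolynomial V (IsLocalRing.ResidueField O) :=
  MvPolynomial.map (IsLocalRing.residue O)

/-- Inclusion of the polynomials with integral coefficients. -/
abbrev icm {L V : Type*} [Field L] (O : ValuationSubring L) :
    MvPolynomial V O →+* MvPolynomial V L :=
  MvPolynomial.map (algebraMap O L)

theorem exists_closure_hom.{u} (R : Type u) [CommRing R] [IsDomain R] :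
    ∃ (Ω : Type u) (_ : Field Ω) (_ : IsAlgClosed Ω) (ψ : R →+* Ω), Function.Injective ψ :=
  ⟨AlgebraicClosure (FractionRing R), inferInstance, inferInstance,
    (algebraMap (FractionRing R) (AlgebraicClosure (FractionRing R))).comp (algebraMap R (FractionRing R)), by
      rw [RingHom.coe_comp]
      exact (RingHom.injective _).comp (IsFractionRing.injective _ _)⟩

section place

variable {L : Type*} [Field L] (O : ValuationSubring L) {V F : Type*} [Field F]


theorem ic_inj : Function.Injective (icm O : MvPolynomial V O →+* MvPolynomial V L) :=
  MvPolynomial.map_injective _ Subtype.val_injective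

/-- A polynomial is not a square up to squares if its reduction is not. -/
theorem nonsq_lift (Δ : MvPolynomial V O)
    (hΔ : ∀ f0 f1 : MvPolynomial V (IsLocalRing.ResidueField O), f0 ^ 2 = rdm O Δ * f1 ^ 2 → f1 = 0)
    (f0 f1 : MvPolynomial V L) (h : f0 ^ 2 = icm O Δ * f1 ^ 2) : f0 = 0 ∧ f1 = 0 := by
  by_contra hne
  obtain ⟨c, hc, p', hp', i, hi⟩ := mv_normalize O ![f0, f1] (fun h => hne
    ⟨congrFun h 0, congrFun h 1⟩)
  have h0 := hp' 0
  have h1 := hp' 1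
  simp only [Matrix.cons_val_zero, Matrix.cons_val_one] at h0 h1
  have h2 : p' 0 ^ 2 = Δ * p' 1 ^ 2 := by
    apply ic_inj O
    have hC : (C c : MvPolynomial V L) ≠ 0 := by simpa using hc
    apply mul_left_cancel₀ (pow_ne_zero 2 hC)
    rw [map_mul, map_pow, map_pow]
    rw [h0, h1] at h
    linear_combination h
  have h3 := congrArg (rdm O) h2
  rw [map_mul, map_pow, map_pow] at h3
  have h4 := hΔ _ _ h3
  have h5 : rdm O (p' 0) = 0 := by
    rw [h4] at h3
    simpa using h3
  fin_cases i
  · exact hi h5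
  · exact hi h4

/-- The Gauss extension of a valuation to `L(V)` extends further to the quadratic extension generated
by `ω`, in such a way that `1, ω` remain independent after reduction. -/
theorem place (j : MvPolynomial V L →+* F) (hj : Function.Injective j) (ω : F)
    (Δ : MvPolynomial V O) (hω : ω ^ 2 = j (icm O Δ))
    (hΔ : ∀ f0 f1 : MvPolynomial V (IsLocalRing.ResidueField O),
      f0 ^ 2 = rdm O Δ * f1 ^ 2 → f1 = 0) : ∃ B : ValuationSubring F, ∀ f0 f1 : MvPolynomial V O,
    B.valuation (j (icm O f0) + ω * j (icm O f1)) ≤ 1 ∧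
    (B.valuation (j (icm O f0) + ω * j (icm O f1)) < 1 ↔ rdm O f0 = 0 ∧ rdm O f1 = 0) := by
  obtain ⟨Ω, _, _, ψ, hψ⟩ := exists_closure_hom (MvPolynomial V (IsLocalRing.ResidueField O))
  obtain ⟨δ, hδ⟩ := IsAlgClosed.exists_pow_nat_eq (ψ (rdm O Δ)) (n := 2) (by norm_num)
  obtain ⟨Ψ, hΨ⟩ : ∃ Ψ : Polynomial (MvPolynomial V O) →+* F, Ψ = Polynomial.eval₂RingHom (j.comp (icm O)) ω := ⟨_, rfl⟩
  obtain ⟨θ, hθ⟩ : ∃ θ : Polynomial (MvPolynomial V O) →+* Ω, θ = Polynomial.eval₂RingHom (ψ.comp (rdm O)) δ := ⟨_, rfl⟩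
  have hΨl : ∀ f0 f1, Ψ (Polynomial.C f1 * Polynomial.X + Polynomial.C f0) =
      j (icm O f0) + ω * j (icm O f1) := by
    intro f0 f1
    rw [hΨ]; simp; ring
  have hθl : ∀ f0 f1, θ (Polynomial.C f1 * Polynomial.X + Polynomial.C f0) =
      ψ (rdm O f0) + δ * ψ (rdm O f1) := by
    intro f0 f1
    rw [hθ]; simp; ring
  have hmon : (Polynomial.X ^ 2 - Polynomial.C Δ).Monic :=
    Polynomial.monic_X_pow_sub_C _ (by norm_num)
  have hdeg : (Polynomial.X ^ 2 - Polynomial.C Δ).degree = 2 :=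
    Polynomial.degree_X_pow_sub_C (by norm_num) _
  have hker : ∀ p, Ψ p = 0 → θ p = 0 := by
    intro p hp
    have h1 := Polynomial.modByMonic_add_div p (Polynomial.X ^ 2 - Polynomial.C Δ)
    have h2 : (p %ₘ (Polynomial.X ^ 2 - Polynomial.C Δ)).degree ≤ 1 := by
      have := Polynomial.degree_modByMonic_lt p hmon
      rw [hdeg] at this
      exact Order.le_of_lt_succ this
    have h3 := Polynomial.eq_X_add_C_of_degree_le_one h2
    have hz : Ψ (Polynomial.X ^ 2 - Polynomial.C Δ) = 0 := by
      rw [hΨ]; simp [hω]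
    have hz' : θ (Polynomial.X ^ 2 - Polynomial.C Δ) = 0 := by
      rw [hθ]; simp [hδ]
    rw [h3] at h1
    rw [← h1, map_add, map_mul, hz, zero_mul, add_zero, hΨl] at hp
    have h4 := nonsq_lift O Δ hΔ (icm O ((p %ₘ (Polynomial.X ^ 2 - Polynomial.C Δ)).coeff 0))
      (icm O ((p %ₘ (Polynomial.X ^ 2 - Polynomial.C Δ)).coeff 1)) (by
        apply hj
        rw [map_pow, map_mul, map_pow, ← hω]
        linear_combination (j (icm O ((p %ₘ (Polynomial.X ^ 2 - Polynomial.C Δ)).coeff 0)) -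
          ω * j (icm O ((p %ₘ (Polynomial.X ^ 2 - Polynomial.C Δ)).coeff 1))) * hp)
    have h5 := ic_inj O (h4.1.trans (map_zero _).symm)
    have h6 := ic_inj O (h4.2.trans (map_zero _).symm)
    rw [← h1, map_add, map_mul, hz', zero_mul, add_zero, hθl, h5, h6]
    simp
  obtain ⟨B, hB⟩ := dom (R := Polynomial (MvPolynomial V O)) (K := F) (K' := Ω) Ψ θ hker
  refine ⟨B, fun f0 f1 => ?_⟩
  have h := hB (Polynomial.C f1 * Polynomial.X + Polynomial.C f0)
  rw [hΨl, hθl] at h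
  refine ⟨h.1, h.2.trans ⟨fun h => ?_, fun h => by rw [h.1, h.2]; simp⟩⟩
  have h1 : rdm O f0 ^ 2 = rdm O Δ * rdm O f1 ^ 2 := by
    apply hψ
    rw [map_pow, map_mul, map_pow, ← hδ]
    linear_combination (ψ (rdm O f0) - δ * ψ (rdm O f1)) * h
  have h2 := hΔ _ _ h1
  refine ⟨?_, h2⟩
  rw [h2] at h1
  simpa using h1

end place

section place2

variable {L : Type*} [Field L] (O : ValuationSubring L) {V F : Type*} [Field F]


variable (j : MvPolynomial V L →+* F) (ω : F) (B : ValuationSubring F)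

/-- The valuation ring `B` of `F` restricts to the Gauss valuation on `L[V] + ω L[V]`: the
value of `f₀ + ω f₁` is the maximum of the values of `f₀` and `f₁`. -/
def GaussLike : Prop := ∀ f0 f1 : MvPolynomial V O,
    B.valuation (j (icm O f0) + ω * j (icm O f1)) ≤ 1 ∧
    (B.valuation (j (icm O f0) + ω * j (icm O f1)) < 1 ↔ rdm O f0 = 0 ∧ rdm O f1 = 0)

variable {O j ω B}

theorem GaussLike.eq_one (hB : GaussLike O j ω B) {f0 f1 : MvPolynomial V O} (h : ¬ (rdm O f0 = 0 ∧ rdm O f1 = 0)) :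
    B.valuation (j (icm O f0) + ω * j (icm O f1)) = 1 :=
  le_antisymm (hB f0 f1).1 (not_lt.1 fun h' => h ((hB f0 f1).2.1 h'))

theorem GaussLike.le_one' (hB : GaussLike O j ω B) (f : MvPolynomial V O) : B.valuation (j (icm O f)) ≤ 1 := by
  simpa using (hB f 0).1

theorem GaussLike.lt_one' (hB : GaussLike O j ω B) (f : MvPolynomial V O) : B.valuation (j (icm O f)) < 1 ↔ rdm O f = 0 := by
  simpa using (hB f 0).2

theorem GaussLike.eq_one' (hB : GaussLike O j ω B) {f : MvPolynomial V O} (h : rdm O f ≠ 0) : B.valuation (j (icm O f)) = 1 :=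
  le_antisymm (hB.le_one' f) (not_lt.1 fun h' => h ((hB.lt_one' f).1 h'))

theorem GaussLike.charZero (hB : GaussLike O j ω B)
    [CharZero (IsLocalRing.ResidueField O)] : CharZero (IsLocalRing.ResidueField B) := by
  refine charZero_of_inj_zero fun N hN => ?_
  by_contra h0
  have h1 : B.valuation (j (icm O (N : MvPolynomial V O))) = 1 := by
    refine hB.eq_one' ?_
    rw [map_natCast]
    exact_mod_cast h0
  rw [map_natCast, map_natCast] at h1
  have h2 : IsLocalRing.residue B (N : B) = 0 := by rw [map_natCast]; exact hN
  rw [IsLocalRing.residue_eq_zero_iff, ValuationSubring.valuation_lt_one_iff] at h2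
  have h3 : ((N : B) : F) = N := by simp
  rw [h3, h1] at h2
  exact lt_irrefl _ h2

/-- The value group of `B` is that of `O`. -/
theorem GaussLike.exists_const (hB : GaussLike O j ω B)
    (hgen : ∀ f : F, ∃ f0 f1 g : MvPolynomial V L, g ≠ 0 ∧ f * j g = j f0 + ω * j f1)
    (f : F) (hf : f ≠ 0) (hj : Function.Injective j) :
    ∃ c : L, B.valuation f = B.valuation (j (C c)) := by
  obtain ⟨f0, f1, g, hg, h⟩ := hgen f
  have hjg : j g ≠ 0 := by rwa [Ne, map_eq_zero_iff j hj]
  obtain ⟨c, hc, p', hp', i, hi⟩ := mv_normalize O ![f0, f1] (fun h' => by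
    have h0 : f0 = 0 := congrFun h' 0
    have h1 : f1 = 0 := congrFun h' 1
    rw [h0, h1] at h
    simp [hf, hjg] at h)
  obtain ⟨e, he, g', hg', i', hi'⟩ := mv_normalize O (fun _ : Unit => g) (fun h' => hg (congrFun h' ()))
  have h0 := hp' 0
  have h1 := hp' 1
  simp only [Matrix.cons_val_zero, Matrix.cons_val_one] at h0 h1
  have hg1 := hg' ()
  refine ⟨c * e⁻¹, ?_⟩
  have hv := congrArg B.valuation h
  have e1 : j f0 + ω * j f1 = j (C c) * (j (icm O (p' 0)) + ω * j (icm O (p' 1))) := by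
    rw [h0, h1, map_mul, map_mul]; ring
  have hv1 : B.valuation (j (icm O (p' 0)) + ω * j (icm O (p' 1))) = 1 := by
    refine hB.eq_one ?_
    rintro ⟨ha, hb⟩
    fin_cases i
    · exact hi ha
    · exact hi hb
  rw [e1, map_mul, map_mul, hv1, mul_one, hg1, map_mul, map_mul, hB.eq_one' hi', mul_one] at hv
  rw [map_mul, map_mul, map_mul, ← hv, mul_assoc, ← map_mul, ← map_mul, ← map_mul,
    ← map_mul, mul_inv_cancel₀ he]
  simp

/-- The value group of `B` is divisible when `L` is algebraically closed. -/
theorem GaussLike.hdiv (hB : GaussLike O j ω B)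
    (hgen : ∀ f : F, ∃ f0 f1 g : MvPolynomial V L, g ≠ 0 ∧ f * j g = j f0 + ω * j f1)
    [IsAlgClosed L] (hj : Function.Injective j) (f : F) (hf : f ≠ 0) (m : ℕ)
    (hm : 0 < m) : ∃ a : F, B.valuation a ^ m = B.valuation f := by
  obtain ⟨c, hc⟩ := hB.exists_const hgen f hf hj
  obtain ⟨a, ha⟩ := IsAlgClosed.exists_pow_nat_eq c hm
  exact ⟨j (C a), by rw [hc, ← ha, map_pow, map_pow, map_pow]⟩

/-- Writing finitely many elements of `F` with a common denominator. -/
theorem exists_common (hB : GaussLike O j ω B)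
    (hgen : ∀ f : F, ∃ f0 f1 g : MvPolynomial V L, g ≠ 0 ∧ f * j g = j f0 + ω * j f1)
    {ι : Type*} [Finite ι] (b : ι → F) (hj : Function.Injective j) :
    ∃ (f0 f1 : ι → MvPolynomial V L) (g : MvPolynomial V L), g ≠ 0 ∧
      ∀ i, b i * j g = j (f0 i) + ω * j (f1 i) := by
  classical
  haveI := Fintype.ofFinite ι
  choose f0 f1 g hg h using fun i => hgen (b i)
  refine ⟨fun i => f0 i * ∏ t ∈ Finset.univ.erase i, g t, fun i => f1 i * ∏ t ∈ Finset.univ.erase i, g t,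
    ∏ i, g i, Finset.prod_ne_zero_iff.2 fun i _ => hg i, fun i => ?_⟩
  rw [← Finset.mul_prod_erase Finset.univ g (Finset.mem_univ i), map_mul, ← mul_assoc, h]
  simp only [map_mul]; ring

/-- Isotropy of a diagonal form over the residue field of `B` gives a polynomial identity. -/
theorem GaussLike.isotropic (hB : GaussLike O j ω B)
    (hgen : ∀ f : F, ∃ f0 f1 g : MvPolynomial V L, g ≠ 0 ∧ f * j g = j f0 + ω * j f1)
    (Δ : MvPolynomial V O) (hω : ω ^ 2 = j (icm O Δ)) [CharZero (IsLocalRing.ResidueField O)]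
    (hj : Function.Injective j) {ι : Type*} [Fintype ι] (a : ι → MvPolynomial V O) (b : ι → F)
    (hb : ∃ i, B.valuation (b i) = 1)
    (hs : B.valuation (∑ i, j (icm O (a i)) * b i ^ 2) < 1) :
    ∃ f0 f1 : ι → MvPolynomial V (IsLocalRing.ResidueField O), (∃ i, f0 i ≠ 0 ∨ f1 i ≠ 0) ∧
      ∑ i, rdm O (a i) * (f0 i ^ 2 + rdm O Δ * f1 i ^ 2) = 0 ∧ ∑ i, rdm O (a i) * (f0 i * f1 i) = 0 := by
  obtain ⟨f0, f1, g, hg, h⟩ := exists_common (ω := ω) hB hgen b hj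
  have hjg : j g ≠ 0 := by rwa [Ne, map_eq_zero_iff j hj]
  obtain ⟨i₁, hi₁⟩ := hb
  have hb1 : b i₁ ≠ 0 := by
    rintro h; rw [h, map_zero] at hi₁; exact zero_ne_one hi₁
  obtain ⟨c, hc, p', hp', i, hi⟩ := mv_normalize O (Sum.elim f0 f1) (fun h' => by
    have h0 : f0 i₁ = 0 := congrFun h' (Sum.inl i₁)
    have h1 : f1 i₁ = 0 := congrFun h' (Sum.inr i₁)
    have := h i₁
    rw [h0, h1] at this
    simp [hb1, hjg] at this)
  obtain ⟨e, he, g', hg', i', hi'⟩ := mv_normalize O (fun _ : Unit => g) (fun h' => hg (congrFun h' ()))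
  have h0 : ∀ i, f0 i = C c * icm O (p' (Sum.inl i)) := fun i => hp' (Sum.inl i)
  have h1 : ∀ i, f1 i = C c * icm O (p' (Sum.inr i)) := fun i => hp' (Sum.inr i)
  have hg1 := hg' ()
  have hCc : j (C c) ≠ 0 := by rw [Ne, map_eq_zero_iff j hj]; simpa using hc
  obtain ⟨u, hu⟩ : ∃ u, u = j (icm O (g' ())) * j (C e) / j (C c) := ⟨_, rfl⟩
  have hbu : ∀ i, b i * u = j (icm O (p' (Sum.inl i))) + ω * j (icm O (p' (Sum.inr i))) := by
    intro i
    have := h i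
    rw [h0, h1, hg1, map_mul, map_mul, map_mul] at this
    rw [hu]; field_simp
    linear_combination this
  have hule : B.valuation u ≤ 1 := by
    have := (hB (p' (Sum.inl i₁)) (p' (Sum.inr i₁))).1
    rwa [← hbu, map_mul, hi₁, one_mul] at this
  have hexp : (∑ i, j (icm O (a i)) * b i ^ 2) * u ^ 2 =
      j (icm O (∑ i, a i * (p' (Sum.inl i) ^ 2 + Δ * p' (Sum.inr i) ^ 2))) +
        ω * j (icm O (2 * ∑ i, a i * (p' (Sum.inl i) * p' (Sum.inr i)))) := by
    rw [map_mul, map_mul, map_sum, map_sum, map_sum, map_sum, Finset.sum_mul, Finset.mul_sum,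
      Finset.mul_sum, ← Finset.sum_add_distrib]
    refine Finset.sum_congr rfl fun i _ => ?_
    simp only [map_mul, map_add, map_pow, map_ofNat, ← hω]
    linear_combination j (icm O (a i)) * (b i * u + j (icm O (p' (Sum.inl i))) + ω * j (icm O (p' (Sum.inr i)))) * hbu i
  have hlt : B.valuation ((∑ i, j (icm O (a i)) * b i ^ 2) * u ^ 2) < 1 := by
    rw [map_mul, map_pow]
    calc _ ≤ B.valuation (∑ i, j (icm O (a i)) * b i ^ 2) * 1 := by
          gcongr; exact pow_le_one₀ zero_le hule
      _ < 1 := by rwa [mul_one]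
  rw [hexp, (hB _ _).2] at hlt
  obtain ⟨hA, hC⟩ := hlt
  refine ⟨fun i => rdm O (p' (Sum.inl i)), fun i => rdm O (p' (Sum.inr i)), ?_, ?_, ?_⟩
  · rcases i with i | i
    · exact ⟨i, Or.inl hi⟩
    · exact ⟨i, Or.inr hi⟩
  · rw [← hA, map_sum]
    simp only [map_mul, map_add, map_pow]
  · rw [map_mul, map_ofNat, mul_eq_zero] at hC
    have := hC.resolve_left two_ne_zero
    rw [← this, map_sum]
    simp only [map_mul]

end place2

end QBProof

namespace QBProof

/-! ### Anisotropy over the function field of the special quadric -/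

/-- Distinct monomials modulo squares are linearly independent over squares. -/
theorem parity {k V ι : Type*} [Field k] [Finite V] [Fintype ι] (m : ι → V →₀ ℕ)
    (hm : ∀ i j, i ≠ j → ∃ a, m i a % 2 ≠ m j a % 2) (v : ι → MvPolynomial V k)
    (h : ∑ i, monomial (m i) (1 : k) * v i ^ 2 = 0) : v = 0 := by
  classical
  by_contra hv
  obtain ⟨i₁, hi₁⟩ := Function.ne_iff.1 hv
  letI : LinearOrder V := LinearOrder.lift' (Finite.equivFin V) (Finite.equivFin V).injective
  obtain ⟨M, hM⟩ : ∃ M : MonomialOrder V, M = MonomialOrder.lex := ⟨_, rfl⟩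
  obtain ⟨S, hS⟩ : ∃ S : Finset ι, S = Finset.univ.filter fun i => v i ≠ 0 := ⟨_, rfl⟩
  have hSm : ∀ i, i ∈ S ↔ v i ≠ 0 := fun i => by rw [hS]; simp
  obtain ⟨i₀, hi₀, hmax⟩ := S.exists_max_image
    (fun i => M.toSyn (m i + (M.degree (v i) + M.degree (v i)))) ⟨i₁, (hSm _).2 hi₁⟩
  have hne : ∀ i, (monomial (m i) (1 : k)) ≠ 0 := fun i => by simp
  have hdeg : ∀ i, v i ≠ 0 → M.degree (monomial (m i) (1 : k) * v i ^ 2) =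
      m i + (M.degree (v i) + M.degree (v i)) := by
    intro i hi
    rw [sq, M.degree_mul (hne i) (mul_ne_zero hi hi), M.degree_mul hi hi, M.degree_monomial,
      if_neg one_ne_zero]
  have h1 := congrArg (coeff (m i₀ + (M.degree (v i₀) + M.degree (v i₀)))) h
  rw [coeff_sum, Finset.sum_eq_single i₀, ← hdeg i₀ ((hSm _).1 hi₀), coeff_zero] at h1
  · have h2 := M.coeff_degree_ne_zero_iff.2 (mul_ne_zero (hne i₀) (pow_ne_zero 2 ((hSm _).1 hi₀)))
    exact h2 h1
  · rintro j - hj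
    by_cases hvj : v j = 0
    · simp [hvj]
    refine M.coeff_eq_zero_of_lt ?_
    rw [hdeg j hvj]
    refine lt_of_le_of_ne (hmax j ((hSm j).2 hvj)) fun h => ?_
    have h3 := M.toSyn.injective h
    obtain ⟨a, ha⟩ := hm j i₀ hj
    have := DFunLike.congr_fun h3 a
    simp only [Finsupp.add_apply] at this
    omega
  · simp

/-- Isotropy over the quadratic extension with discriminant `α X² + β` implies, on taking leading
coefficients, isotropy over the one with discriminant `α`. -/
theorem top_coeff {A ι : Type*} [CommRing A] [IsDomain A] [Fintype ι] (c : ι → A) (α β : A)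
    (P Q : ι → Polynomial A) (hne : ∃ i, P i ≠ 0 ∨ Q i ≠ 0)
    (h1 : ∑ i, Polynomial.C (c i) * (P i ^ 2 +
      (Polynomial.C α * Polynomial.X ^ 2 + Polynomial.C β) * Q i ^ 2) = 0) :
    ∃ F0 F1 : ι → A, (∃ i, F0 i ≠ 0 ∨ F1 i ≠ 0) ∧ ∑ i, c i * (F0 i ^ 2 + α * F1 i ^ 2) = 0 ∧
      (∑ i, Polynomial.C (c i) * (P i * Q i) = 0 → ∑ i, c i * (F0 i * F1 i) = 0) := by
  classical
  obtain ⟨G, hG⟩ : ∃ G : ι ⊕ ι → Polynomial A, G = Sum.elim P (fun i => Polynomial.X * Q i) := ⟨_, rfl⟩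
  have hGne : ∃ t, G t ≠ 0 := by
    obtain ⟨i, hi | hi⟩ := hne
    · exact ⟨Sum.inl i, by rw [hG]; exact hi⟩
    · exact ⟨Sum.inr i, by rw [hG]; exact mul_ne_zero Polynomial.X_ne_zero hi⟩
  obtain ⟨t₁, ht₁⟩ := hGne
  obtain ⟨t, ht, hmax⟩ := (Finset.univ.filter fun t => G t ≠ 0).exists_max_image
    (fun t => (G t).natDegree) ⟨t₁, by simpa using ht₁⟩
  obtain ⟨N, hN⟩ : ∃ N, N = (G t).natDegree := ⟨_, rfl⟩
  have hle : ∀ s, (G s).natDegree ≤ N := by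
    intro s
    by_cases hs : G s = 0
    · simp [hs]
    · rw [hN]; exact hmax s (by simpa using hs)
  have hP : ∀ i, (P i).natDegree ≤ N := fun i => by simpa [hG] using hle (Sum.inl i)
  have hQ : ∀ i, (Polynomial.X * Q i).natDegree ≤ N := fun i => by simpa [hG] using hle (Sum.inr i)
  refine ⟨fun i => (P i).coeff N, fun i => (Polynomial.X * Q i).coeff N, ?_, ?_, ?_⟩
  · have h2 : (G t).coeff N ≠ 0 := by
      rw [hN]; simpa using ht
    rcases t with i | i
    · exact ⟨i, Or.inl (by simpa [hG] using h2)⟩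
    · exact ⟨i, Or.inr (by simpa [hG] using h2)⟩
  · have h2 := congrArg (fun p => Polynomial.coeff p (N + N)) h1
    simp only [Polynomial.finset_sum_coeff, Polynomial.coeff_zero] at h2
    rw [← h2]
    refine Finset.sum_congr rfl fun i _ => ?_
    have e1 : Polynomial.C (c i) * (P i ^ 2 +
      (Polynomial.C α * Polynomial.X ^ 2 + Polynomial.C β) * Q i ^ 2) =
        Polynomial.C (c i) * (P i * P i + Polynomial.C α * ((Polynomial.X * Q i) * (Polynomial.X * Q i)) +
          Polynomial.C β * (Q i ^ 2)) := by ring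
    have e2 : (Q i ^ 2).coeff (N + N) = 0 := by
      have e3 : (Q i ^ 2).coeff (N + N) =
          ((Polynomial.X * Q i) * (Polynomial.X * Q i)).coeff (N + N + 2) := by
        rw [show (Polynomial.X * Q i) * (Polynomial.X * Q i) = Q i ^ 2 * Polynomial.X ^ 2 by ring,
          Polynomial.coeff_mul_X_pow]
      rw [e3]
      refine Polynomial.coeff_eq_zero_of_natDegree_lt (lt_of_le_of_lt Polynomial.natDegree_mul_le ?_)
      have := hQ i
      omega
    rw [e1, Polynomial.coeff_C_mul, Polynomial.coeff_add, Polynomial.coeff_add,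
      Polynomial.coeff_C_mul, Polynomial.coeff_C_mul, e2,
      Polynomial.coeff_mul_add_eq_of_natDegree_le (hP i) (hP i),
      Polynomial.coeff_mul_add_eq_of_natDegree_le (hQ i) (hQ i)]
    ring
  · intro h3
    have h2 := congrArg (fun p => Polynomial.coeff p (N + N)) (show
      ∑ i, Polynomial.C (c i) * (P i * (Polynomial.X * Q i)) = 0 by
        have : ∑ i, Polynomial.C (c i) * (P i * (Polynomial.X * Q i)) =
          Polynomial.X * ∑ i, Polynomial.C (c i) * (P i * Q i) := by
            rw [Finset.mul_sum]; exact Finset.sum_congr rfl fun i _ => by ring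
        rw [this, h3, mul_zero])
    simp only [Polynomial.finset_sum_coeff, Polynomial.coeff_zero] at h2
    rw [← h2]
    refine Finset.sum_congr rfl fun i _ => ?_
    rw [Polynomial.coeff_C_mul, Polynomial.coeff_mul_add_eq_of_natDegree_le (hP i) (hQ i)]

section

variable {k V : Type*} [Field k]

/-- Scaling of the variable `t` by a new parameter. -/
def scaleVar [DecidableEq V] (t : V) : MvPolynomial V k →ₐ[k] Polynomial (MvPolynomial V k) :=
  aeval fun a => if a = t then Polynomial.C (X a) * Polynomial.X else Polynomial.C (X a)

variable [DecidableEq V]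

theorem scaleVar_inj (t : V) : Function.Injective (scaleVar (k := k) t) := by
  have h : ((Polynomial.aeval (R := MvPolynomial V k) (1 : MvPolynomial V k)).restrictScalars k).comp
      (scaleVar t) = AlgHom.id k (MvPolynomial V k) := by
    ext a
    simp only [scaleVar, AlgHom.comp_apply, aeval_X, AlgHom.id_apply]
    split_ifs <;> simp
  intro p q hpq
  have := congrArg ((Polynomial.aeval (R := MvPolynomial V k) (1 : MvPolynomial V k)).restrictScalars k) hpq
  rw [← AlgHom.comp_apply, ← AlgHom.comp_apply, h] at this
  exact this

/-- The version of `top_coeff` for a variable `t` of a multivariate polynomial ring: the discriminant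
`α t² + β` may be replaced by `α t²`. -/
theorem top_var {ι : Type*} [Fintype ι] (t : V) (c : ι → MvPolynomial V k) (α β : MvPolynomial V k)
    (hc : ∀ i, scaleVar t (c i) = Polynomial.C (c i)) (hα : scaleVar t α = Polynomial.C α)
    (hβ : scaleVar t β = Polynomial.C β)
    (P Q : ι → MvPolynomial V k) (hne : ∃ i, P i ≠ 0 ∨ Q i ≠ 0)
    (h1 : ∑ i, c i * (P i ^ 2 + (α * X t ^ 2 + β) * Q i ^ 2) = 0) :
    ∃ F0 F1 : ι → MvPolynomial V k, (∃ i, F0 i ≠ 0 ∨ F1 i ≠ 0) ∧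
      ∑ i, c i * (F0 i ^ 2 + α * X t ^ 2 * F1 i ^ 2) = 0 ∧
      (∑ i, c i * (P i * Q i) = 0 → ∑ i, c i * (F0 i * F1 i) = 0) := by
  have hX : scaleVar t (X t : MvPolynomial V k) = Polynomial.C (X t) * Polynomial.X := by
    simp [scaleVar]
  obtain ⟨F0, F1, h2, h3, h4⟩ := top_coeff c (α * X t ^ 2) β (fun i => scaleVar t (P i))
    (fun i => scaleVar t (Q i)) (by
      obtain ⟨i, hi⟩ := hne
      refine ⟨i, hi.imp ?_ ?_⟩ <;>
      · intro h h'
        exact h ((map_eq_zero_iff _ (scaleVar_inj t)).1 h'))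
    (by
      rw [← map_zero (scaleVar t), ← h1, map_sum]
      refine Finset.sum_congr rfl fun i _ => ?_
      simp only [map_mul, map_add, map_pow, hc, hα, hβ, hX]
      ring)
  refine ⟨F0, F1, h2, h3, fun h => h4 ?_⟩
  rw [← map_zero (scaleVar t), ← h, map_sum]
  refine Finset.sum_congr rfl fun i _ => ?_
  simp only [map_mul, hc]

end

section disc

variable {n r : ℕ}

/-- The discriminant, with respect to `z₀`, of the special quadric. -/
def Dat.disc (D : Dat n r) {R : Type*} [CommRing R] (ν : R) (x : Fin (n+1) → R)
    (z : Fin (r+1) → R) : R :=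
  -(D.sp ν x 0 * ∑ i : Fin (r+1), D.sp ν x i.succ * z i ^ 2)

theorem Dat.disc_map (D : Dat n r) {R S : Type*} [CommRing R] [CommRing S] (f : R →+* S)
    (ν : R) (x : Fin (n+1) → R) (z : Fin (r+1) → R) :
    D.disc (f ν) (fun i => f (x i)) (fun i => f (z i)) = f (D.disc ν x z) := by
  simp only [Dat.disc, D.sp_map, map_neg, map_mul, map_sum, map_pow]

variable {k V : Type*} [Field k]

/-- The exponent of the monomial `pc x ε`. -/
def pcExp (xi : Fin (n+1) → V) (ε : Fin n → Bool) : V →₀ ℕ :=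
  ∑ i, Finsupp.single (if ε i then xi i.succ else xi 0) 1

theorem pc_monomial (xi : Fin (n+1) → V) (ε : Fin n → Bool) :
    pc (fun i => (X (xi i) : MvPolynomial V k)) ε = monomial (pcExp xi ε) 1 := by
  rw [pcExp, monomial_sum_one, pc]
  refine Finset.prod_congr rfl fun i _ => ?_
  split_ifs <;> rfl

theorem pcExp_apply {xi : Fin (n+1) → V} (hxi : Function.Injective xi) (ε : Fin n → Bool) (j : Fin n) :
    pcExp xi ε (xi j.succ) = if ε j then 1 else 0 := by
  classical
  rw [pcExp, Finsupp.finset_sum_apply, Finset.sum_eq_single j]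
  · split_ifs with h
    · simp
    · rw [Finsupp.single_apply, if_neg]
      exact fun h' => absurd (hxi h') (Fin.succ_ne_zero j).symm
  · intro b _ hb
    rw [Finsupp.single_apply, if_neg]
    split_ifs
    · exact fun h' => hb (Fin.succ_injective _ (hxi h'))
    · exact fun h' => absurd (hxi h') (Fin.succ_ne_zero j).symm
  · simp

/-- The generic Pfister form is anisotropic. -/
theorem pc_indep [Finite V] {xi : Fin (n+1) → V} (hxi : Function.Injective xi)
    (v : (Fin n → Bool) → MvPolynomial V k)
    (h : ∑ ε, pc (fun i => (X (xi i) : MvPolynomial V k)) ε * v ε ^ 2 = 0) : v = 0 := by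
  refine parity (pcExp xi) (fun ε ε' hne => ?_) v (by simpa only [pc_monomial] using h)
  obtain ⟨j, hj⟩ := Function.ne_iff.1 hne
  refine ⟨xi j.succ, ?_⟩
  rw [pcExp_apply hxi, pcExp_apply hxi]
  revert hj
  cases ε j <;> cases ε' j <;> simp

variable [DecidableEq V]

theorem scaleVar_sp (D : Dat n r) (ν : k) (xi : Fin (n+1) → V) (t : V) (ht : ∀ i, xi i ≠ t) (i) :
    scaleVar t (D.sp (C ν) (fun i => (X (xi i) : MvPolynomial V k)) i) =
      Polynomial.C (D.sp (C ν) (fun i => (X (xi i) : MvPolynomial V k)) i) := by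
  have h1 := D.sp_map (scaleVar t).toRingHom (C ν) (fun i => (X (xi i) : MvPolynomial V k)) i
  have h2 := D.sp_map (Polynomial.C) (C ν) (fun i => (X (xi i) : MvPolynomial V k)) i
  have h3 : ∀ i, (scaleVar t).toRingHom (X (xi i) : MvPolynomial V k) = Polynomial.C (X (xi i)) := by
    intro i
    simp [scaleVar, ht i]
  have h4 : (scaleVar t).toRingHom (C ν : MvPolynomial V k) = Polynomial.C (C ν) := by
    have := (scaleVar (k := k) t).commutes ν
    simpa using this
  rw [← h2]
  simp only [h3, h4] at h1
  exact h1.symm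

/-- The discriminant is `α t² + β` in each fibre variable `t`. -/
theorem disc_split (D : Dat n r) (ν : k) {xi : Fin (n+1) → V} {ze : Fin (r+1) → V}
    (hinj : Function.Injective (Sum.elim xi ze)) (s : Fin (r+1)) :
    ∃ α β : MvPolynomial V k, scaleVar (ze s) α = Polynomial.C α ∧
      scaleVar (ze s) β = Polynomial.C β ∧
      α = -(D.sp (C ν) (fun i => X (xi i)) 0 * D.sp (C ν) (fun i => X (xi i)) s.succ) ∧
      D.disc (C ν) (fun i => X (xi i)) (fun i => X (ze i)) = α * X (ze s) ^ 2 + β := by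
  have ht : ∀ i, xi i ≠ ze s := fun i h => by
    have := @hinj (Sum.inl i) (Sum.inr s) h
    simp at this
  refine ⟨_, -(D.sp (C ν) (fun i => X (xi i)) 0 * ∑ i ∈ Finset.univ.erase s,
    D.sp (C ν) (fun i => X (xi i)) i.succ * X (ze i) ^ 2), ?_, ?_, rfl, ?_⟩
  · rw [map_neg, map_mul, scaleVar_sp D ν xi _ ht, scaleVar_sp D ν xi _ ht]; simp
  · rw [map_neg, map_mul, map_sum, map_neg, map_mul, map_sum, scaleVar_sp D ν xi _ ht]
    congr 2
    refine Finset.sum_congr rfl fun i hi => ?_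
    have : ze i ≠ ze s := fun h => (Finset.ne_of_mem_erase hi) (by
      have := @hinj (Sum.inr i) (Sum.inr s) h
      simpa using this)
    rw [map_mul, scaleVar_sp D ν xi _ ht, map_pow, map_mul, map_pow]
    simp [scaleVar, this]
  · rw [Dat.disc, ← Finset.add_sum_erase _ _ (Finset.mem_univ s)]
    ring

/-- The discriminant of the special quadric is not a square: its leading coefficient in a suitable
fibre variable is, up to squares, a monomial having an odd exponent. -/
theorem disc_nonsq [Finite V] (D : Dat n r) (hr : 0 < r) (ν : k) {xi : Fin (n+1) → V} {ze : Fin (r+1) → V}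
    (hinj : Function.Injective (Sum.elim xi ze)) (f0 f1 : MvPolynomial V k)
    (h : f0 ^ 2 = D.disc (C ν) (fun i => X (xi i)) (fun i => X (ze i)) * f1 ^ 2) : f1 = 0 := by
  by_contra hf1
  have hxi : Function.Injective xi := fun a b h => by
    have := @hinj (Sum.inl a) (Sum.inl b) h
    simpa using this
  obtain ⟨s, hs⟩ : ∃ s : Fin (r+1), s = ⟨1, by omega⟩ := ⟨_, rfl⟩
  have hs1 : s.succ ≠ 1 := by rw [hs]; simp [Fin.ext_iff]
  have hs0 : s.succ ≠ 0 := Fin.succ_ne_zero s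
  obtain ⟨α, β, h1, h2, h3, h4⟩ := disc_split D ν hinj s
  obtain ⟨F0, F1, h5, h6, -⟩ := top_var (ι := Unit) (ze s) (fun _ => 1) (-α) (-β) (fun _ => by simp)
    (by rw [map_neg, h1, map_neg]) (by rw [map_neg, h2, map_neg]) (fun _ => f0) (fun _ => f1)
    ⟨(), Or.inr hf1⟩ (by simp; rw [h, h4]; ring)
  -- the product of two different slots is not a square
  obtain ⟨j, hj⟩ : ∃ j, D.ε s.succ j = false := by
    by_contra hall
    push Not at hall
    apply hs0
    apply D.inj
    rw [D.ε0]
    funext j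
    simpa using hall j
  have hsp : ∀ i, i ≠ 1 → D.sp (C ν) (fun i => (X (xi i) : MvPolynomial V k)) i =
      monomial (Finsupp.single (xi 0) (D.d i - n) + pcExp xi (D.ε i)) 1 := by
    intro i hi
    rw [Dat.sp, if_neg hi, pc_monomial, X_pow_eq_monomial, monomial_mul, one_mul]
  have hval : ∀ i, (Finsupp.single (xi 0) (D.d i - n) + pcExp xi (D.ε i)) (xi j.succ) =
      if D.ε i j then 1 else 0 := by
    intro i
    rw [Finsupp.add_apply, pcExp_apply hxi, Finsupp.single_apply, if_neg, zero_add]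
    exact fun h' => absurd (hxi h') (Fin.succ_ne_zero j).symm
  rw [hsp _ hs1, hsp 0 (by simp [Fin.ext_iff]), monomial_mul, one_mul] at h3
  obtain ⟨M, hM⟩ : ∃ M, M = Finsupp.single (xi 0) (D.d 0 - n) + pcExp xi (D.ε 0) +
    (Finsupp.single (xi 0) (D.d s.succ - n) + pcExp xi (D.ε s.succ)) := ⟨_, rfl⟩
  have hMj : M (xi j.succ) = 1 := by
    rw [hM, Finsupp.add_apply, hval, hval, hj, D.ε0]; simp
  rw [← hM] at h3
  have h7 := parity (k := k) (V := V) (![0, M]) (by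
      intro a b hab
      refine ⟨xi j.succ, ?_⟩
      fin_cases a <;> fin_cases b <;> simp_all) ![F0 (), X (ze s) * F1 ()] (by
      rw [Fin.sum_univ_two]
      simp only [Finset.univ_unique, Finset.sum_singleton, one_mul, h3, neg_neg] at h6
      simp only [Matrix.cons_val_zero, Matrix.cons_val_one, monomial_zero', C_1]
      rw [← h6]
      simp
      ring)
  have h8 : F0 () = 0 := congrFun h7 0
  have h9 : X (ze s) * F1 () = 0 := congrFun h7 1
  have h10 : F1 () = 0 := (mul_eq_zero.1 h9).resolve_left (X_ne_zero _)
  obtain ⟨⟨⟩, h | h⟩ := h5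
  · exact h h8
  · exact h h10

/-- The generic Pfister form stays anisotropic over the function field of the special quadric with
`ν = 0`. In this case the discriminant has, in one of the fibre variables, a leading coefficient
which is a square, so that isotropy would descend to the field of rational functions, where
`pc_indep` applies. -/
theorem nonvanish_zero [Finite V] [CharZero k] (D : Dat n r) {xi : Fin (n+1) → V} {ze : Fin (r+1) → V}
    (hinj : Function.Injective (Sum.elim xi ze)) (f0 f1 : (Fin n → Bool) → MvPolynomial V k)
    (hne : ∃ ε, f0 ε ≠ 0 ∨ f1 ε ≠ 0)
    (h1 : ∑ ε, pc (fun i => X (xi i)) ε * (f0 ε ^ 2 +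
      D.disc (C 0) (fun i => X (xi i)) (fun i => X (ze i)) * f1 ε ^ 2) = 0)
    (h2 : ∑ ε, pc (fun i => X (xi i)) ε * (f0 ε * f1 ε) = 0) : False := by
  have hxi : Function.Injective xi := fun a b h => by
    have := @hinj (Sum.inl a) (Sum.inl b) h
    simpa using this
  have ht : ∀ i, xi i ≠ ze 0 := fun i h => by
    have := @hinj (Sum.inl i) (Sum.inr 0) h
    simp at this
  obtain ⟨α, β, hα, hβ, hα', hsplit⟩ := disc_split D (0 : k) hinj 0
  rw [hsplit] at h1
  obtain ⟨F0, F1, h3, h4, h5⟩ := top_var (ze 0) (fun ε => pc (fun i => X (xi i)) ε) α β (by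
    intro ε
    rw [pc, map_prod, map_prod]
    refine Finset.prod_congr rfl fun i _ => ?_
    split_ifs <;> simp [scaleVar, ht]) hα hβ f0 f1 hne h1
  have h6 := h5 h2
  obtain ⟨g, hg0, hg⟩ : ∃ g : MvPolynomial V k, g ≠ 0 ∧ α = g ^ 2 := by
    refine ⟨X (xi 0) ^ ((D.d 0 - n + (D.d 1 - 2 * n) + n) / 2) * ∏ j : Fin n, X (xi j.succ), ?_, ?_⟩
    · exact mul_ne_zero (pow_ne_zero _ (X_ne_zero _)) (Finset.prod_ne_zero_iff.2 fun j _ => X_ne_zero _)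
    · have e : (D.d 0 - n + (D.d 1 - 2 * n) + n) / 2 * 2 = D.d 0 - n + (D.d 1 - 2 * n) + n := by
        have := D.par 0 1
        have := D.le_d 0
        have := D.le_d 1
        omega
      rw [hα', mul_pow, ← pow_mul, e]
      have e1 : Fin.succ (0 : Fin (r+1)) = 1 := rfl
      rw [e1, Dat.sp, if_neg (by simp [Fin.ext_iff]), Dat.sp, if_pos rfl, D.ε0]
      simp only [pc, if_true, C_0, zero_mul, zero_sub]
      ring
  have key : ∀ s : MvPolynomial V k, s ^ 2 = 1 → ∀ ε, F0 ε + s * (g * X (ze 0) * F1 ε) = 0 := by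
    intro s hs ε
    refine congrFun (pc_indep (k := k) hxi (fun ε => F0 ε + s * (g * X (ze 0) * F1 ε)) ?_) ε
    rw [hg] at h4
    have : ∑ ε, pc (fun i => X (xi i)) ε * (F0 ε + s * (g * X (ze 0) * F1 ε)) ^ 2 =
        ∑ ε, pc (fun i => X (xi i)) ε * (F0 ε ^ 2 + g ^ 2 * X (ze 0) ^ 2 * F1 ε ^ 2) +
        2 * s * g * X (ze 0) * ∑ ε, pc (fun i => X (xi i)) ε * (F0 ε * F1 ε) := by
      rw [Finset.mul_sum, ← Finset.sum_add_distrib]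
      refine Finset.sum_congr rfl fun ε _ => ?_
      linear_combination (pc (fun i => X (xi i)) ε * (g * X (ze 0) * F1 ε) ^ 2) * hs
    rw [this, h4, h6]; ring
  obtain ⟨ε, hε⟩ := h3
  have k1 := key 1 (by ring) ε
  have k2 := key (-1) (by ring) ε
  have k3 : F0 ε = 0 := by
    have : (2 : MvPolynomial V k) * F0 ε = 0 := by linear_combination k1 + k2
    exact (mul_eq_zero.1 this).resolve_left two_ne_zero
  have k4 : F1 ε = 0 := by
    rw [k3, zero_add, one_mul] at k1
    exact (mul_eq_zero.1 k1).resolve_left (mul_ne_zero hg0 (X_ne_zero _))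
  rcases hε with h | h
  · exact h k3
  · exact h k4

/-- The generic Pfister form stays anisotropic over the function field of the special quadric with
transcendental parameter `ν`, which is seen by specializing `ν` to `0`. The two equations are the
components of an isotropy relation with respect to the basis `1, ω`, where `ω` is a square root of
the discriminant. -/
theorem nonvanish [Finite V] [CharZero k] (D : Dat n r) {xi : Fin (n+1) → V} {ze : Fin (r+1) → V}
    (hinj : Function.Injective (Sum.elim xi ze)) (ν : k)
    (hν : ∀ p : Polynomial ℤ, p ≠ 0 → Polynomial.aeval ν p ≠ 0)
    (f0 f1 : (Fin n → Bool) → MvPolynomial V k)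
    (hne : ∃ ε, f0 ε ≠ 0 ∨ f1 ε ≠ 0)
    (h1 : ∑ ε, pc (fun i => X (xi i)) ε * (f0 ε ^ 2 +
      D.disc (C ν) (fun i => X (xi i)) (fun i => X (ze i)) * f1 ε ^ 2) = 0)
    (h2 : ∑ ε, pc (fun i => X (xi i)) ε * (f0 ε * f1 ε) = 0) : False := by
  obtain ⟨Ψ, hΨ⟩ : ∃ Ψ : Polynomial ℤ →+* k, Ψ = (Polynomial.aeval ν).toRingHom := ⟨_, rfl⟩
  obtain ⟨θ, hθ⟩ : ∃ θ : Polynomial ℤ →+* ℚ, θ = (Polynomial.aeval (0 : ℚ)).toRingHom := ⟨_, rfl⟩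
  obtain ⟨O, hO⟩ := dom (R := Polynomial ℤ) (K := k) (K' := ℚ) Ψ θ (by
    intro p hp
    by_cases hp0 : p = 0
    · rw [hp0, map_zero]
    · rw [hΨ] at hp
      exact absurd hp (hν p hp0))
  have hνv : O.valuation ν < 1 := by
    have := (hO Polynomial.X).2
    rw [hΨ, hθ] at this
    simpa using this
  have hνO : ν ∈ O := (O.valuation_le_one_iff _).1 hνv.le
  haveI : CharZero (IsLocalRing.ResidueField O) := by
    refine charZero_of_inj_zero fun N hN => ?_
    have h3 := (hO (N : Polynomial ℤ)).2
    rw [map_natCast Ψ, map_natCast θ] at h3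
    have h4 : IsLocalRing.residue O (N : O) = 0 := by rw [map_natCast]; exact hN
    rw [IsLocalRing.residue_eq_zero_iff, ValuationSubring.valuation_lt_one_iff] at h4
    have h5 : ((N : O) : k) = N := by simp
    rw [h5, h3] at h4
    exact_mod_cast h4
  have hν0 : IsLocalRing.residue O ⟨ν, hνO⟩ = 0 := by
    rw [IsLocalRing.residue_eq_zero_iff, ValuationSubring.valuation_lt_one_iff]
    exact hνv
  obtain ⟨c, hc, p', hp', i, hi⟩ := mv_normalize O (Sum.elim f0 f1) (fun h' => by
    obtain ⟨ε, hε | hε⟩ := hne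
    · exact hε (congrFun h' (Sum.inl ε))
    · exact hε (congrFun h' (Sum.inr ε)))
  have h0 : ∀ i, f0 i = C c * icm O (p' (Sum.inl i)) := fun i => hp' (Sum.inl i)
  have h1' : ∀ i, f1 i = C c * icm O (p' (Sum.inr i)) := fun i => hp' (Sum.inr i)
  have hC : (C c : MvPolynomial V k) ≠ 0 := by simpa using hc
  have hpcm : ∀ {R S : Type _} [CommRing R] [CommRing S] (f : R →+* S) (ε : Fin n → Bool),
      pc (fun i => (X (xi i) : MvPolynomial V S)) ε =
        MvPolynomial.map f (pc (fun i => (X (xi i) : MvPolynomial V R)) ε) := by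
    intro R S _ _ f ε
    rw [← pc_map]; simp
  have hdm : ∀ {R S : Type _} [CommRing R] [CommRing S] (f : R →+* S) (a : R),
      D.disc (C (f a)) (fun i => (X (xi i) : MvPolynomial V S)) (fun i => X (ze i)) =
        MvPolynomial.map f (D.disc (C a) (fun i => (X (xi i) : MvPolynomial V R)) (fun i => X (ze i))) := by
    intro R S _ _ f a
    rw [← D.disc_map]; simp
  have e1 : ∑ ε, pc (fun i => X (xi i)) ε * (p' (Sum.inl ε) ^ 2 +
      D.disc (C ⟨ν, hνO⟩) (fun i => X (xi i)) (fun i => X (ze i)) * p' (Sum.inr ε) ^ 2) = 0 := by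
    apply ic_inj O
    apply mul_left_cancel₀ (pow_ne_zero 2 hC)
    rw [map_zero, mul_zero, ← h1, map_sum, Finset.mul_sum]
    refine Finset.sum_congr rfl fun ε _ => ?_
    have hd := hdm (algebraMap O k) ⟨ν, hνO⟩
    have hν' : algebraMap O k ⟨ν, hνO⟩ = ν := rfl
    rw [hν'] at hd
    rw [h0, h1', hpcm (algebraMap O k), hd]
    simp only [map_mul, map_add, map_pow]
    ring
  have e2 : ∑ ε, pc (fun i => X (xi i)) ε * (p' (Sum.inl ε) * p' (Sum.inr ε)) = 0 := by
    apply ic_inj O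
    apply mul_left_cancel₀ (pow_ne_zero 2 hC)
    rw [map_zero, mul_zero, ← h2, map_sum, Finset.mul_sum]
    refine Finset.sum_congr rfl fun ε _ => ?_
    rw [h0, h1', hpcm (algebraMap O k)]
    simp only [map_mul]
    ring
  refine nonvanish_zero D hinj (fun ε => rdm O (p' (Sum.inl ε))) (fun ε => rdm O (p' (Sum.inr ε))) ?_ ?_ ?_
  · rcases i with i | i
    · exact ⟨i, Or.inl hi⟩
    · exact ⟨i, Or.inr hi⟩
  · rw [← map_zero (rdm O), ← e1, map_sum]
    refine Finset.sum_congr rfl fun ε _ => ?_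
    rw [hpcm (IsLocalRing.residue O), ← hν0, hdm]
    simp only [map_mul, map_add, map_pow]
  · rw [← map_zero (rdm O), ← e2, map_sum]
    refine Finset.sum_congr rfl fun ε _ => ?_
    rw [hpcm (IsLocalRing.residue O)]
    simp only [map_mul]

end disc

end QBProof

namespace QBProof

/-! ### Very general matrices and specialization -/

variable {n r : ℕ} {l : Fin (r+2) → ℤ} {l₀ : ℤ}

/-- Indices of the independent coefficients of a symmetric matrix of forms of the prescribed
degrees. -/
def Idx (n r : ℕ) (l : Fin (r+2) → ℤ) (l₀ : ℤ) : Type :=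
  {p : Fin (r+2) × Fin (r+2) × (Fin (n+1) →₀ ℕ) //
    p.1 ≤ p.2.1 ∧ (p.2.2.degree : ℤ) = l p.1 + l p.2.1 + l₀}

instance : Countable (Idx n r l l₀) := inferInstanceAs (Countable {p : Fin (r+2) × Fin (r+2) × (Fin (n+1) →₀ ℕ) //
    p.1 ≤ p.2.1 ∧ (p.2.2.degree : ℤ) = l p.1 + l p.2.1 + l₀})

/-- A symmetric matrix of forms of degrees `l i + l j + l₀` over an arbitrary ring. -/
structure IsMat {S : Type*} [CommRing S] (l : Fin (r+2) → ℤ) (l₀ : ℤ)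
    (a : Fin (r+2) → Fin (r+2) → MvPolynomial (Fin (n+1)) S) : Prop where
  symm : ∀ i j, a i j = a j i
  hom : ∀ i j, HomZ (l i + l j + l₀) (a i j)

/-- The independent coefficients of a symmetric matrix of forms. -/
def cf {S : Type*} [CommRing S] (a : Fin (r+2) → Fin (r+2) → MvPolynomial (Fin (n+1)) S)
    (p : Idx n r l l₀) : S := coeff p.1.2.2 (a p.1.1 p.1.2.1)

theorem HomZ.map {σ R S : Type*} [CommSemiring R] [CommSemiring S] (f : R →+* S) {e : ℤ}
    {p : MvPolynomial σ R} (hp : HomZ e p) : HomZ e (MvPolynomial.map f p) := fun m hm =>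
  hp m fun h => hm (by rw [coeff_map, h, map_zero])

theorem IsMat.map {S T : Type*} [CommRing S] [CommRing T]
    {a : Fin (r+2) → Fin (r+2) → MvPolynomial (Fin (n+1)) S} (ha : IsMat l l₀ a) (f : S →+* T) :
    IsMat l l₀ fun i j => MvPolynomial.map f (a i j) :=
  ⟨fun i j => by rw [ha.symm], fun i j => (ha.hom i j).map f⟩

/-- A symmetric matrix of forms is determined by its independent coefficients. -/
theorem mat_ext {S : Type*} [CommRing S]
    {a b : Fin (r+2) → Fin (r+2) → MvPolynomial (Fin (n+1)) S} (ha : IsMat l l₀ a)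
    (hb : IsMat l l₀ b) (h : ∀ p : Idx n r l l₀, cf a p = cf b p) (i j : Fin (r+2)) :
    a i j = b i j := by
  wlog hij : i ≤ j generalizing i j
  · rw [ha.symm, hb.symm]; exact this j i (le_of_not_ge hij)
  ext m
  by_cases hm : (m.degree : ℤ) = l i + l j + l₀
  · exact h ⟨(i, j, m), hij, hm⟩
  · rw [not_imp_comm.1 (ha.hom i j m) hm, not_imp_comm.1 (hb.hom i j m) hm]

/-- The independent coefficients of a symmetric matrix of forms can be prescribed. -/
theorem exists_mat {S : Type*} [CommRing S] (pt : Idx n r l l₀ → S) :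
    ∃ a : Fin (r+2) → Fin (r+2) → MvPolynomial (Fin (n+1)) S, IsMat l l₀ a ∧ ∀ p, cf a p = pt p := by
  classical
  obtain ⟨g, hg⟩ : ∃ g : Fin (r+2) → Fin (r+2) → (Fin (n+1) →₀ ℕ) → S, g = fun i j m =>
    if h : i ≤ j ∧ (m.degree : ℤ) = l i + l j + l₀ then pt ⟨(i, j, m), h⟩ else 0 := ⟨_, rfl⟩
  obtain ⟨a, ha⟩ : ∃ a : Fin (r+2) → Fin (r+2) → MvPolynomial (Fin (n+1)) S, a = fun i j =>
    ∑ m ∈ Finset.finsuppAntidiag Finset.univ (l i + l j + l₀).toNat,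
      monomial m (g (min i j) (max i j) m) := ⟨_, rfl⟩
  have hco : ∀ i j m, coeff m (a i j) = g (min i j) (max i j) m := by
    intro i j m
    rw [ha]
    simp only [coeff_sum, coeff_monomial, Finset.sum_ite_eq', Finset.mem_finsuppAntidiag,
      Finset.subset_univ, and_true]
    split_ifs with h
    · rfl
    · rw [hg]
      simp only
      rw [dif_neg]
      rintro ⟨-, h2⟩
      apply h
      have h3 : l (min i j) + l (max i j) = l i + l j := by
        rcases le_total i j with h | h
        · rw [min_eq_left h, max_eq_right h]
        · rw [min_eq_right h, max_eq_left h, add_comm]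
      rw [h3] at h2
      rw [Finsupp.degree_eq_sum] at h2
      show ∑ i, m i = _
      omega
  refine ⟨a, ⟨fun i j => ?_, fun i j m hm => ?_⟩, ?_⟩
  · ext m; rw [hco, hco, min_comm, max_comm]
  · rw [hco, hg] at hm
    simp only at hm
    split_ifs at hm with h
    · rw [h.2]
      rcases le_total i j with h | h
      · rw [min_eq_left h, max_eq_right h]
      · rw [min_eq_right h, max_eq_left h]; ring
    · exact absurd rfl hm
  · rintro ⟨⟨i, j, m⟩, h⟩
    show coeff m (a i j) = _
    rw [hco, min_eq_left h.1, max_eq_right h.1, hg]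
    simp only
    rw [dif_pos h]

theorem mem_homComp (e : ℤ) (p : QB.PolyP n) : p ∈ QB.homComp n e ↔ HomZ e p := by
  rw [QB.homComp]
  split_ifs with h
  · rw [mem_homogeneousSubmodule]
    constructor
    · intro hp m hm
      have := hp hm
      rw [Finsupp.degree_eq_weight_one]
      show ((Finsupp.weight 1 m : ℕ) : ℤ) = e
      rw [this]; omega
    · intro hp m hm
      have := hp m hm
      rw [Finsupp.degree_eq_weight_one] at this
      change ((Finsupp.weight 1 m : ℕ) : ℤ) = e at this
      omega
  · rw [Submodule.mem_bot]
    constructor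
    · rintro rfl m hm; simp at hm
    · intro hp
      ext m
      by_contra h2
      have := hp m (by simpa using h2)
      omega

theorem isMat (A : QB.SymMat n r l l₀) : IsMat l l₀ A.1 :=
  ⟨A.2.1, fun i j => (mem_homComp _ _).1 (A.2.2 i j)⟩

/-- A property holds very generally as soon as it holds for the matrices whose independent
coefficients are algebraically independent over `ℤ`. -/
theorem veryGeneral_of (P : QB.SymMat n r l l₀ → Prop)
    (h : ∀ A : QB.SymMat n r l l₀, (∀ p : MvPolynomial (Idx n r l l₀) ℤ, aeval (cf A.1) p = (0:ℂ) → p = 0) → P A) :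
    VeryGenerallyOn (QB.symMatCoords n r l l₀) P := by
  obtain ⟨g, hg⟩ : ∃ g : ℕ → {p : MvPolynomial (Idx n r l l₀) ℤ // p ≠ 0}, Function.Surjective g := by
    haveI : Nonempty {p : MvPolynomial (Idx n r l l₀) ℤ // p ≠ 0} := ⟨⟨1, one_ne_zero⟩⟩
    haveI : Countable (MvPolynomial (Idx n r l l₀) ℤ) := by
      rw [← Cardinal.mk_le_aleph0_iff]
      refine (MvPolynomial.cardinalMk_le_max).trans ?_
      simp
    exact exists_surjective_nat _
  refine ⟨fun m => {A | aeval (cf A.1) (g m).1 = (0:ℂ)}, fun m => ⟨⟨{fun A => aeval (cf A.1) (g m).1}, ?_, ?_⟩, ?_⟩, ?_⟩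
  · rw [Set.singleton_subset_iff, SetLike.mem_coe]
    generalize (g m).1 = p
    induction p using MvPolynomial.induction_on with
    | C c =>
      simp only [MvPolynomial.algHom_C]
      exact intCast_mem _ c
    | add p q hp hq => simp only [map_add]; exact add_mem hp hq
    | mul_X p i hp =>
      simp only [map_mul, aeval_X]
      exact mul_mem hp (Algebra.subset_adjoin ⟨_, _, _, rfl⟩)
  · ext A; simp
  · intro hu
    have h0 : MvPolynomial.map (Int.castRingHom ℂ) (g m).1 ≠ 0 := fun h =>
      (g m).2 (map_injective _ Int.cast_injective (by rw [h, map_zero]))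
    apply h0
    apply MvPolynomial.funext
    intro pt
    obtain ⟨a, ha, hpt⟩ := exists_mat pt
    have := Set.eq_univ_iff_forall.1 hu ⟨a, ha.symm, fun i j => (mem_homComp _ _).2 (ha.hom i j)⟩
    replace this : aeval (cf a) (g m).1 = (0:ℂ) := this
    rw [map_zero, eval_map, ← this]
    rw [aeval_def]
    rw [show (cf a : Idx n r l l₀ → ℂ) = pt from funext hpt]
    rfl
  · intro A hA
    refine h A fun p hp => ?_
    by_contra hne
    obtain ⟨m, hm⟩ := hg ⟨p, hne⟩
    exact hA m (by rw [Set.mem_setOf_eq, hm]; exact hp)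

/-- A matrix with algebraically independent coefficients specializes, along a place of `ℂ`,
to any matrix of the same type over a finitely generated domain of coefficients. -/
theorem spec {S : Type*} [CommRing S] [IsDomain S]
    {a : Fin (r+2) → Fin (r+2) → MvPolynomial (Fin (n+1)) ℂ} (ha : IsMat l l₀ a)
    (hinj : ∀ p : MvPolynomial (Idx n r l l₀) ℤ, aeval (cf a) p = (0:ℂ) → p = 0)
    {a' : Fin (r+2) → Fin (r+2) → MvPolynomial (Fin (n+1)) S} (ha' : IsMat l l₀ a')
    (hs : Function.Surjective (aeval (cf a') : MvPolynomial (Idx n r l l₀) ℤ →ₐ[ℤ] S)) :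
    ∃ (O : ValuationSubring ℂ) (φ : S →+* IsLocalRing.ResidueField O)
      (AO : Fin (r+2) → Fin (r+2) → MvPolynomial (Fin (n+1)) O), Function.Injective φ ∧
      IsMat l l₀ AO ∧ (∀ i j, icm O (AO i j) = a i j) ∧
      (∀ i j, rdm O (AO i j) = MvPolynomial.map φ (a' i j)) := by
  obtain ⟨θ, hθ⟩ : ∃ θ : MvPolynomial (Idx n r l l₀) ℤ →+* S, θ = (aeval (cf a') : MvPolynomial (Idx n r l l₀) ℤ →ₐ[ℤ] S).toRingHom := ⟨_, rfl⟩
  obtain ⟨Ψ, hΨ⟩ : ∃ Ψ : MvPolynomial (Idx n r l l₀) ℤ →+* ℂ, Ψ = (aeval (cf a) : MvPolynomial (Idx n r l l₀) ℤ →ₐ[ℤ] ℂ).toRingHom := ⟨_, rfl⟩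
  have hθs : Function.Surjective θ := by rw [hθ]; exact hs
  have hΨX : ∀ p, Ψ (X p) = cf a p := fun p => by rw [hΨ]; exact aeval_X _ _
  have hθX : ∀ p, θ (X p) = cf a' p := fun p => by rw [hθ]; exact aeval_X _ _
  obtain ⟨O, hO⟩ := dom (R := MvPolynomial (Idx n r l l₀) ℤ) (K := ℂ) (K' := FractionRing S) Ψ
    ((algebraMap S (FractionRing S)).comp θ) (fun f hf => by
      rw [hinj f (by rw [← hf, hΨ]; rfl), map_zero])
  have hO1 : ∀ f, Ψ f ∈ O := fun f => (O.valuation_le_one_iff _).1 (hO f).1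
  obtain ⟨Ψ', hΨ'⟩ : ∃ Ψ' : MvPolynomial (Idx n r l l₀) ℤ →+* O, Ψ' = Ψ.codRestrict O hO1 := ⟨_, rfl⟩
  have hΨ'v : ∀ f, ((Ψ' f : O) : ℂ) = Ψ f := fun f => by rw [hΨ']; rfl
  have hker : ∀ f, IsLocalRing.residue O (Ψ' f) = 0 ↔ θ f = 0 := by
    intro f
    rw [IsLocalRing.residue_eq_zero_iff, ValuationSubring.valuation_lt_one_iff, hΨ'v, (hO f).2]
    rw [RingHom.comp_apply, map_eq_zero_iff _ (IsFractionRing.injective S (FractionRing S))]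
  obtain ⟨φ, hφ⟩ : ∃ φ : S →+* IsLocalRing.ResidueField O, ∀ f, φ (θ f) = IsLocalRing.residue O (Ψ' f) :=
    ⟨θ.liftOfSurjective hθs ⟨(IsLocalRing.residue O).comp Ψ', fun f hf => by
      rw [RingHom.mem_ker] at hf ⊢; rw [RingHom.comp_apply, hker, hf]⟩, fun f => by
      rw [RingHom.liftOfRightInverse_comp_apply]; rfl⟩
  obtain ⟨AO, hAO, hcf⟩ := exists_mat (fun p : Idx n r l l₀ => Ψ' (X p))
  refine ⟨O, φ, AO, ?_, hAO, ?_, ?_⟩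
  · rw [injective_iff_map_eq_zero]
    intro s hs0
    obtain ⟨f, rfl⟩ := hθs s
    rwa [hφ, hker] at hs0
  · refine mat_ext (hAO.map _) ha fun p => ?_
    have := hcf p
    rw [cf] at this ⊢
    rw [coeff_map, this]
    exact (hΨ'v _).trans (hΨX p)
  · refine mat_ext (hAO.map _) (ha'.map _) fun p => ?_
    have := hcf p
    have h2 := hθX p
    rw [cf] at this h2 ⊢
    rw [cf, coeff_map, coeff_map, this, ← h2, hφ]

/-- Residue fields of valuation rings of algebraically closed fields are algebraically closed. -/
theorem residue_algClosed {L : Type*} [Field L] [IsAlgClosed L] (O : ValuationSubring L) :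
    IsAlgClosed (IsLocalRing.ResidueField O) := by
  apply IsAlgClosed.of_exists_root
  intro p hp hirr
  have hdeg : p.degree ≠ 0 := fun h => hirr.not_isUnit (Polynomial.isUnit_iff_degree_eq_zero.2 h)
  have hl : p ∈ Polynomial.lifts (IsLocalRing.residue O) := by
    rw [Polynomial.mem_lifts]
    exact Polynomial.map_surjective _ IsLocalRing.residue_surjective p
  obtain ⟨q, hq, hqd, hqm⟩ := Polynomial.lifts_and_degree_eq_and_monic hl hp
  obtain ⟨x, hx⟩ := IsAlgClosed.exists_root (q.map (algebraMap O L)) (by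
    rw [hqm.degree_map, hqd]; exact hdeg)
  have hxint : IsIntegral O x := ⟨q, hqm, by rw [← Polynomial.eval_map]; exact hx⟩
  obtain ⟨y, rfl⟩ := IsIntegrallyClosed.isIntegral_iff.1 hxint
  refine ⟨IsLocalRing.residue O y, ?_⟩
  have h2 : q.eval y = 0 := by
    rw [Polynomial.IsRoot.def, Polynomial.eval_map, Polynomial.eval₂_at_apply] at hx
    exact Subtype.val_injective hx
  rw [← hq, Polynomial.eval_map, Polynomial.eval₂_at_apply, h2, map_zero]

end QBProof

namespace QBProof

/-! ### Specialization to diagonal bundles -/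

variable {n r : ℕ} {l : Fin (r+2) → ℤ} {l₀ : ℤ}

/-- The combinatorial data of the special quadric bundle exist in the range of the theorem. -/
theorem exists_dat (hn : 2 ≤ n) (hr2 : r + 2 ≤ 2 ^ n) (d : Fin (r+2) → ℕ)
    (hpar : ∀ i j, d i % 2 = d j % 2) (hd : ∀ i, 2 * n ≤ d i) : ∃ D : Dat n r, D.d = d := by
  classical
  obtain ⟨f⟩ : Nonempty (Fin (r+2) ↪ (Fin n → Bool)) :=
    Function.Embedding.nonempty_of_card_le (by simpa using hr2)
  obtain ⟨g, hg⟩ : ∃ g : Fin (r+2) → (Fin n → Bool), g = fun i => Equiv.swap (f 0) (fun _ => true) (f i) := ⟨_, rfl⟩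
  have hgi : Function.Injective g := by
    rw [hg]; exact (Equiv.injective _).comp f.injective
  have hg0 : g 0 = fun _ => true := by rw [hg]; simp
  refine ⟨⟨d, fun i => Equiv.swap (g 1) (fun _ => false) (g i), (Equiv.injective _).comp hgi, ?_, ?_, hpar, hd, hn⟩, rfl⟩
  · rw [Equiv.swap_apply_of_ne_of_ne, hg0]
    · exact fun h => absurd (hgi h) (by simp)
    · rw [hg0]
      intro h
      exact absurd (congrFun h ⟨0, by omega⟩) (by simp)
  · simp

theorem homZ_of {σ R : Type*} [CommSemiring R] {e : ℕ} {p : MvPolynomial σ R}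
    (h : p.IsHomogeneous e) : HomZ e p := fun m hm => by
  have := h hm
  rw [Finsupp.degree_eq_weight_one]
  exact congrArg Nat.cast this

theorem pc_homog {R : Type*} [CommRing R] (ε : Fin n → Bool) :
    (pc (X : Fin (n+1) → MvPolynomial (Fin (n+1)) R) ε).IsHomogeneous n := by
  have := IsHomogeneous.prod (R := R) Finset.univ (fun i : Fin n => if ε i then (X i.succ : MvPolynomial (Fin (n+1)) R) else X 0)
    (fun _ => 1) (fun i _ => by
      split_ifs
      · exact isHomogeneous_X _ _
      · exact isHomogeneous_X _ _)
  simpa [pc] using this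

theorem Dat.sp_homog (D : Dat n r) {R : Type*} [CommRing R] (ν : R) (i : Fin (r+2)) :
    (D.sp (C ν) (X : Fin (n+1) → MvPolynomial (Fin (n+1)) R) i).IsHomogeneous (D.d i) := by
  have h1 := D.le_d i
  unfold Dat.sp
  split_ifs with h
  · subst h
    have h2 : ((∑ j, X j : MvPolynomial (Fin (n+1)) R)).IsHomogeneous 1 :=
      IsHomogeneous.sum _ _ _ fun i _ => isHomogeneous_X _ _
    have h3 : (∏ j : Fin n, (X j.succ : MvPolynomial (Fin (n+1)) R)).IsHomogeneous n := by
      simpa using IsHomogeneous.prod (R := R) Finset.univ (fun j : Fin n => (X j.succ : MvPolynomial (Fin (n+1)) R))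
        (fun _ => 1) (fun i _ => isHomogeneous_X _ _)
    have h4 : (C ν * (∑ j, X j : MvPolynomial (Fin (n+1)) R) ^ (2 * n)).IsHomogeneous (2 * n) := by
      simpa using (isHomogeneous_C (Fin (n+1)) ν).mul (h2.pow (2 * n))
    have h5 : ((X 0 : MvPolynomial (Fin (n+1)) R) ^ n * ∏ j : Fin n, X j.succ).IsHomogeneous (2 * n) := by
      rw [two_mul]
      exact (isHomogeneous_X_pow 0 n).mul h3
    have := (isHomogeneous_X_pow (R := R) (0 : Fin (n+1)) (D.d 1 - 2 * n)).mul (h4.sub h5)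
    rwa [Nat.sub_add_cancel h1] at this
  · have := (isHomogeneous_X_pow (R := R) (0 : Fin (n+1)) (D.d i - n)).mul (pc_homog (R := R) (D.ε i))
    rwa [Nat.sub_add_cancel (by omega)] at this

theorem diag_isMat {S : Type*} [CommRing S] (f : Fin (r+2) → MvPolynomial (Fin (n+1)) S)
    (hf : ∀ i, HomZ (2 * l i + l₀) (f i)) : IsMat l l₀ fun i j => if i = j then f i else 0 := by
  refine ⟨fun i j => ?_, fun i j => ?_⟩
  · by_cases h : i = j
    · subst h; rfl
    · rw [if_neg h, if_neg (Ne.symm h)]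
  · by_cases h : i = j
    · subst h; simp only [if_true]; rw [← two_mul]; exact hf i
    · rw [if_neg h]; intro m hm; simp at hm

/-- Specialization of a generic quadric bundle to the special one. -/
theorem spec_sp {a : Fin (r+2) → Fin (r+2) → MvPolynomial (Fin (n+1)) ℂ} (ha : IsMat l l₀ a)
    (hinj : ∀ p : MvPolynomial (Idx n r l l₀) ℤ, aeval (cf a) p = (0:ℂ) → p = 0)
    (D : Dat n r) (hD : ∀ i, (D.d i : ℤ) = 2 * l i + l₀) :
    ∃ (O : ValuationSubring ℂ) (μ : IsLocalRing.ResidueField O)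
      (AO : Fin (r+2) → Fin (r+2) → MvPolynomial (Fin (n+1)) O),
      CharZero (IsLocalRing.ResidueField O) ∧
      (∀ p : Polynomial ℤ, p ≠ 0 → Polynomial.aeval (μ ^ 2) p ≠ 0) ∧
      IsMat l l₀ AO ∧ (∀ i j, icm O (AO i j) = a i j) ∧
      (∀ i j, rdm O (AO i j) = if i = j then D.sp (C (μ ^ 2)) X i else 0) := by
  obtain ⟨a', ha'⟩ : ∃ a' : Fin (r+2) → Fin (r+2) → MvPolynomial (Fin (n+1)) (Polynomial ℤ),
    a' = fun i j => if i = j then D.sp (C Polynomial.X) X i else 0 := ⟨_, rfl⟩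
  have hm : IsMat l l₀ a' := by
    rw [ha']
    refine diag_isMat _ fun i => ?_
    rw [← hD]
    exact homZ_of (D.sp_homog _ i)
  have hs : Function.Surjective (aeval (cf a') : MvPolynomial (Idx n r l l₀) ℤ →ₐ[ℤ] Polynomial ℤ) := by
    rw [← AlgHom.range_eq_top, ← top_le_iff, ← Polynomial.adjoin_X, Algebra.adjoin_le_iff,
      Set.singleton_subset_iff, SetLike.mem_coe]
    have hco : ∀ m, coeff m (a' 1 1) ∈ (aeval (cf a') : MvPolynomial (Idx n r l l₀) ℤ →ₐ[ℤ] Polynomial ℤ).range := by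
      intro m
      by_cases h : coeff m (a' 1 1) = 0
      · rw [h]; exact zero_mem _
      · refine ⟨X ⟨(1, 1, m), le_rfl, hm.hom 1 1 m h⟩, ?_⟩
        exact aeval_X _ _
    have hev : eval (fun i : Fin (n+1) => if i = 0 then (1 : Polynomial ℤ) else 0) (a' 1 1) = Polynomial.X := by
      rw [ha']
      simp only [if_true]
      rw [← D.sp_map]
      have hn := D.two_le
      simp only [eval_C, eval_X, Dat.sp, if_true, Fin.succ_ne_zero, if_false]
      simp [show n ≠ 0 by omega]
    rw [← hev, eval_eq]
    refine sum_mem fun m _ => mul_mem (hco m) (prod_mem fun i _ => pow_mem ?_ _)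
    split_ifs
    · exact one_mem _
    · exact zero_mem _
  obtain ⟨O, φ, AO, hφ, hAO, h1, h2⟩ := spec ha hinj hm hs
  haveI := residue_algClosed O
  obtain ⟨μ, hμ⟩ := IsAlgClosed.exists_pow_nat_eq (φ Polynomial.X) (n := 2) (by norm_num)
  refine ⟨O, μ, AO, charZero_of_injective_ringHom hφ, fun p hp h => hp ?_, hAO, h1, fun i j => ?_⟩
  · rw [hμ] at h
    have h3 := Polynomial.aeval_algHom_apply φ.toIntAlgHom (Polynomial.X : Polynomial ℤ) p
    rw [Polynomial.aeval_X_left_apply] at h3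
    exact (map_eq_zero_iff φ hφ).1 (h3.symm.trans h)
  · rw [h2, ha', hμ]
    by_cases h : i = j
    · simp only [if_pos h]
      rw [← D.sp_map]
      simp only [map_C, map_X]
    · simp only [if_neg h, map_zero]

/-- Specialization of a generic quadric bundle to a diagonal one with monomial entries. -/
theorem spec_mon {a : Fin (r+2) → Fin (r+2) → MvPolynomial (Fin (n+1)) ℂ} (ha : IsMat l l₀ a)
    (hinj : ∀ p : MvPolynomial (Idx n r l l₀) ℤ, aeval (cf a) p = (0:ℂ) → p = 0)
    (d : Fin (r+2) → ℕ) (hd : ∀ i, (d i : ℤ) = 2 * l i + l₀) (g : Fin (r+2) → Fin (n+1)) :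
    ∃ (O : ValuationSubring ℂ)
      (AO : Fin (r+2) → Fin (r+2) → MvPolynomial (Fin (n+1)) O),
      IsMat l l₀ AO ∧ (∀ i j, icm O (AO i j) = a i j) ∧
      (∀ i j, rdm O (AO i j) = if i = j then X (g i) ^ d i else 0) := by
  have hm : IsMat l l₀ fun i j => if i = j then (X (g i) ^ d i : MvPolynomial (Fin (n+1)) ℤ) else 0 :=
    diag_isMat _ fun i => by rw [← hd]; exact homZ_of (isHomogeneous_X_pow _ _)
  obtain ⟨O, φ, AO, hφ, hAO, h1, h2⟩ := spec ha hinj hm (fun c => ⟨C c, by simp⟩)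
  refine ⟨O, AO, hAO, h1, fun i j => ?_⟩
  rw [h2]
  split_ifs <;> simp

/-- A generic matrix defines a quadric bundle: it specializes to a diagonal matrix of powers of the
coordinates in which every coordinate occurs, and this one has nonzero determinant and no common
zero of its entries. -/
theorem quadricBundle {a : Fin (r+2) → Fin (r+2) → MvPolynomial (Fin (n+1)) ℂ} (ha : IsMat l l₀ a)
    (hinj : ∀ p : MvPolynomial (Idx n r l l₀) ℤ, aeval (cf a) p = (0:ℂ) → p = 0)
    (d : Fin (r+2) → ℕ) (hd : ∀ i, (d i : ℤ) = 2 * l i + l₀) (hnr : n + 1 ≤ r + 2) :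
    (Matrix.det (Matrix.of fun i j => a i j) ≠ 0) ∧
    ∀ x : Fin (n+1) → ℂ, x ≠ 0 → ∃ i j, eval x (a i j) ≠ 0 := by
  classical
  obtain ⟨g, hg⟩ : ∃ g : Fin (r+2) → Fin (n+1), Function.Surjective g :=
    ⟨Function.invFun (Fin.castLE hnr), Function.invFun_surjective (Fin.castLE_injective hnr)⟩
  obtain ⟨O, AO, hAO, h1, h2⟩ := spec_mon ha hinj d hd g
  constructor
  · intro hdet
    have h3 : Matrix.det (Matrix.of fun i j => AO i j) = 0 := by
      apply ic_inj O
      rw [RingHom.map_det, map_zero, ← hdet]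
      congr 1
      ext1 i j
      exact h1 i j
    have h4 := congrArg (rdm O) h3
    rw [RingHom.map_det, map_zero] at h4
    have h5 : (rdm O).mapMatrix (Matrix.of fun i j => AO i j) = Matrix.diagonal fun i => X (g i) ^ d i := by
      ext1 i j
      rw [Matrix.diagonal_apply]
      exact h2 i j
    rw [h5, Matrix.det_diagonal, Finset.prod_eq_zero_iff] at h4
    obtain ⟨i, -, hi⟩ := h4
    exact pow_ne_zero _ (X_ne_zero _) hi
  · intro x hx
    by_contra! hcon
    obtain ⟨i₀, h0, x', hx', hxx⟩ := exists_normalize O x hx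
    obtain ⟨j, hj⟩ := hg i₀
    have h3 : eval x' (AO j j) = 0 := by
      have h4 := hcon j j
      rw [← h1, eval_map, show x = fun i => algebraMap ℂ ℂ (x i₀) * algebraMap O ℂ (x' i) from funext hxx,
        (hAO.hom j j).eval₂_smul _ h0] at h4
      have h5 := (mul_eq_zero.1 h4).resolve_left (by simpa using zpow_ne_zero _ h0)
      have h6 : algebraMap O ℂ (eval x' (AO j j)) = 0 := by
        rw [← h5, ← eval₂_id, eval₂_comp_left, RingHom.comp_id]
        rfl
      exact (map_eq_zero_iff _ (IsFractionRing.injective O ℂ)).1 h6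
    have h7 : eval (fun i => IsLocalRing.residue O (x' i)) (rdm O (AO j j)) = 0 := by
      have := congrArg (IsLocalRing.residue O) h3
      rw [map_zero, ← eval₂_id, eval₂_comp_left, RingHom.comp_id] at this
      rw [eval_map, ← this]
      rfl
    rw [h2, if_pos rfl, hj] at h7
    simp [hx'] at h7
end QBProof

namespace QBProof

/-! ### The quadratic form as a polynomial in one variable -/

variable {n r : ℕ} {l : Fin (r+2) → ℤ} {l₀ : ℤ}

section coeffs
variable {S T V W : Type*} [CommRing S] [CommRing T]

/-- The coefficient of `z₀ ^ 2` in the quadratic form with matrix `a`. -/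
def qa (a : Fin (r+2) → Fin (r+2) → MvPolynomial (Fin (n+1)) S) (xi : Fin (n+1) → V) :
    MvPolynomial V S := rename xi (a 0 0)

/-- Half of the coefficient of `z₀` in the quadratic form with matrix `a`. -/
def qb (a : Fin (r+2) → Fin (r+2) → MvPolynomial (Fin (n+1)) S) (xi : Fin (n+1) → V)
    (ze : Fin (r+1) → V) : MvPolynomial V S := ∑ s, rename xi (a 0 s.succ) * X (ze s)

/-- The part of the quadratic form with matrix `a` not involving `z₀`. -/
def qc (a : Fin (r+2) → Fin (r+2) → MvPolynomial (Fin (n+1)) S) (xi : Fin (n+1) → V)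
    (ze : Fin (r+1) → V) : MvPolynomial V S :=
  ∑ s, ∑ t, rename xi (a s.succ t.succ) * X (ze s) * X (ze t)

/-- A quarter of the discriminant with respect to `z₀` of the quadratic form with matrix `a`. -/
def qD (a : Fin (r+2) → Fin (r+2) → MvPolynomial (Fin (n+1)) S) (xi : Fin (n+1) → V)
    (ze : Fin (r+1) → V) : MvPolynomial V S := qb a xi ze ^ 2 - qa a xi * qc a xi ze

variable (a : Fin (r+2) → Fin (r+2) → MvPolynomial (Fin (n+1)) S) (xi : Fin (n+1) → V)
    (ze : Fin (r+1) → V)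

theorem qa_map (f : S →+* T) :
    MvPolynomial.map f (qa a xi) = qa (fun i j => MvPolynomial.map f (a i j)) xi := by
  simp [qa, map_rename]

theorem qc_map (f : S →+* T) :
    MvPolynomial.map f (qc a xi ze) = qc (fun i j => MvPolynomial.map f (a i j)) xi ze := by
  simp [qc, map_rename]

theorem qD_map (f : S →+* T) :
    MvPolynomial.map f (qD a xi ze) = qD (fun i j => MvPolynomial.map f (a i j)) xi ze := by
  simp [qD, qa, qb, qc, map_rename]

theorem qD_rename (τ : V → W) :
    rename τ (qD a xi ze) = qD a (τ ∘ xi) (τ ∘ ze) := by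
  simp [qD, qa, qb, qc, rename_rename]

theorem qc_diag (f : Fin (r+2) → MvPolynomial (Fin (n+1)) S) :
    qc (fun i j => if i = j then f i else 0) xi ze = ∑ s : Fin (r+1), rename xi (f s.succ) * X (ze s) ^ 2 := by
  simp only [qc, Fin.succ_inj, apply_ite (rename xi), map_zero, ite_mul, zero_mul,
    Finset.sum_ite_eq, Finset.mem_univ, if_true]
  exact Finset.sum_congr rfl fun s _ => by ring

theorem qD_sp (D : Dat n r) (ν : S) :
    qD (fun i j => if i = j then D.sp (C ν) X i else 0) xi ze =
      D.disc (C ν) (fun i => X (xi i)) (fun i => X (ze i)) := by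
  have h : ∀ i, rename xi (D.sp (C ν) X i) = D.sp (C ν) (fun i => X (xi i)) i := fun i => by
    have := D.sp_map (rename xi : MvPolynomial (Fin (n+1)) S →ₐ[S] MvPolynomial V S).toRingHom (C ν) X i
    rw [AlgHom.toRingHom_eq_coe, RingHom.coe_coe] at this
    rw [← this]
    simp
  rw [qD, qc_diag, Dat.disc]
  simp only [qb, qa, if_true, (Fin.succ_ne_zero _).symm, if_false, map_zero, zero_mul,
    Finset.sum_const_zero, h]
  ring

end coeffs

/-- Lifting divisibility from the field to the valuation ring (Gauss lemma). -/
theorem dvd_lift {L V : Type*} [Field L] (O : ValuationSubring L) (p f : MvPolynomial V O)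
    (hp : rdm O p ≠ 0) (h : MvPolynomial V L) (hh : icm O f = icm O p * h) : ∃ h', f = p * h' := by
  by_cases h0 : h = 0
  · refine ⟨0, ic_inj O ?_⟩
    rw [hh, h0]; simp
  obtain ⟨c, hc, h', hh', i, hi⟩ := mv_normalize O (fun _ : Unit => h) (fun h1 => h0 (congrFun h1 ()))
  have hne : rdm O (p * h' i) ≠ 0 := by rw [map_mul]; exact mul_ne_zero hp hi
  obtain ⟨m, hm⟩ := ne_zero_iff.1 hne
  rw [coeff_map] at hm
  have hu : IsUnit (coeff m (p * h' i)) := by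
    by_contra hu
    exact hm ((IsLocalRing.residue_eq_zero_iff _).2 ((IsLocalRing.mem_maximalIdeal _).2 hu))
  obtain ⟨u, hu⟩ := hu
  have h1 : icm O f = C c * icm O (p * h' i) := by rw [hh, hh' i, map_mul]; ring
  have h2 : c = algebraMap O L (coeff m f * (u⁻¹ : Oˣ)) := by
    have h3 := congrArg (coeff m) h1
    rw [coeff_map, coeff_C_mul, coeff_map, ← hu] at h3
    rw [map_mul, h3, mul_assoc, ← map_mul, Units.mul_inv, map_one, mul_one]
  refine ⟨C (coeff m f * (u⁻¹ : Oˣ)) * h' i, ic_inj O ?_⟩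
  rw [h1, h2, map_mul (icm O), map_mul (icm O), map_mul (icm O), map_C]; ring

/-- Two polynomials are coprime if the reduction of the first is a power of a variable, of the same
degree, that does not divide the reduction of the second. -/
theorem prim_lemma {L V : Type*} [Field L] (O : ValuationSubring L) (fa fc : MvPolynomial V O)
    (v : V) (e : ℕ) (ha : rdm O fa = X v ^ e) (hdeg : fa.totalDegree ≤ e) (hc : ¬ X v ∣ rdm O fc)
    (p : MvPolynomial V L) (h1 : p ∣ icm O fa) (h2 : p ∣ icm O fc) : IsUnit p := by
  have hp0 : p ≠ 0 := by
    rintro rfl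
    rw [zero_dvd_iff] at h1
    have : fa = 0 := ic_inj O (by rw [h1, map_zero])
    rw [this, map_zero] at ha
    exact pow_ne_zero e (X_ne_zero v) ha.symm
  obtain ⟨c, hc0, p', hp', i, hi⟩ := mv_normalize O (fun _ : Unit => p) (fun h1 => hp0 (congrFun h1 ()))
  obtain ⟨h, hh⟩ := h1
  obtain ⟨k, hk⟩ := h2
  have hpi : p = C c * icm O (p' i) := hp' i
  obtain ⟨h', hh'⟩ := dvd_lift O (p' i) fa hi (C c * h) (by rw [hh, hpi]; ring)
  obtain ⟨k', hk'⟩ := dvd_lift O (p' i) fc hi (C c * k) (by rw [hk, hpi]; ring)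
  have hX : Prime (X v : MvPolynomial V (IsLocalRing.ResidueField O)) := X_prime
  have h3 : rdm O (p' i) ∣ X v ^ e := ⟨rdm O h', by rw [← ha, hh', map_mul]⟩
  obtain ⟨j, hj, hass⟩ := (dvd_prime_pow hX e).1 h3
  have hj0 : j = 0 := by
    by_contra hj0
    apply hc
    rw [hk', map_mul]
    exact ((dvd_pow_self _ hj0).trans hass.symm.dvd).mul_right _
  rw [hj0, pow_zero, associated_one_iff_isUnit] at hass
  have h4 : X v ^ e ∣ rdm O h' := by
    rw [← ha, hh', map_mul]
    obtain ⟨u, hu⟩ := hass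
    rw [← hu]
    exact Units.mul_left_dvd.2 dvd_rfl
  have hfa0 : fa ≠ 0 := by
    rintro h; rw [h, map_zero] at ha
    exact pow_ne_zero e (X_ne_zero v) ha.symm
  have hp'0 : p' i ≠ 0 := fun h => hfa0 (by rw [hh', h, zero_mul])
  have hh'0 : h' ≠ 0 := fun h => hfa0 (by rw [hh', h, mul_zero])
  have hr0 : rdm O h' ≠ 0 := by
    intro h
    rw [hh', map_mul, h, mul_zero] at ha
    exact pow_ne_zero e (X_ne_zero v) ha.symm
  have h5 : e ≤ h'.totalDegree := by
    have h6 : (X v ^ e : MvPolynomial V (IsLocalRing.ResidueField O)).totalDegree ≤ (rdm O h').totalDegree := by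
      obtain ⟨w, hw⟩ := h4
      have hw0 : w ≠ 0 := by rintro rfl; rw [mul_zero] at hw; exact hr0 hw
      rw [hw, totalDegree_mul_of_isDomain (pow_ne_zero e (X_ne_zero v)) hw0]
      omega
    rw [totalDegree_X_pow] at h6
    exact h6.trans (Finset.sup_mono (support_map_subset _ _))
  have h7 : (p' i).totalDegree + h'.totalDegree ≤ e := by
    rw [← totalDegree_mul_of_isDomain hp'0 hh'0, ← hh']; exact hdeg
  have h8 : (p' i).totalDegree = 0 := by omega
  rw [totalDegree_eq_zero_iff_eq_C] at h8
  rw [h8, map_C, ← map_mul] at hpi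
  rw [hpi] at hp0 ⊢
  exact (isUnit_iff_ne_zero.2 fun h => hp0 (by rw [h, map_zero])).map C

/-- A primitive quadratic polynomial whose discriminant is not a square is irreducible. -/
theorem irr_lemma {R : Type*} [CommRing R] [IsDomain R] (h2 : (2:R) ≠ 0) (a b c : R) (ha : a ≠ 0)
    (hprim : ∀ p, p ∣ a → p ∣ c → IsUnit p)
    (hns : ∀ f0 f1 : R, f0 ^ 2 = (b ^ 2 - a * c) * f1 ^ 2 → f1 = 0) :
    Irreducible (Polynomial.C a * Polynomial.X ^ 2 + Polynomial.C (2 * b) * Polynomial.X + Polynomial.C c) := by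
  obtain ⟨Q, hQ⟩ : ∃ Q : Polynomial R, Q = Polynomial.C a * Polynomial.X ^ 2 + Polynomial.C (2 * b) * Polynomial.X + Polynomial.C c := ⟨_, rfl⟩
  rw [← hQ]
  have hd : Q.natDegree = 2 := by rw [hQ]; exact Polynomial.natDegree_quadratic ha
  have hQ0 : Q ≠ 0 := by rintro h; rw [h] at hd; simp at hd
  have c0 : Q.coeff 0 = c := by rw [hQ]; simp
  have c1 : Q.coeff 1 = 2 * b := by rw [hQ]; simp [Polynomial.coeff_X, Polynomial.coeff_C]
  have c2 : Q.coeff 2 = a := by rw [hQ]; simp [Polynomial.coeff_X, Polynomial.coeff_C]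
  have key : ∀ f g : Polynomial R, Q = f * g → f.natDegree = 0 → IsUnit f := by
    intro f g hfg hf
    rw [Polynomial.eq_C_of_natDegree_eq_zero hf] at hfg ⊢
    refine (hprim (f.coeff 0) ⟨g.coeff 2, ?_⟩ ⟨g.coeff 0, ?_⟩).map Polynomial.C
    · rw [← c2, hfg, Polynomial.coeff_C_mul]
    · rw [← c0, hfg, Polynomial.coeff_C_mul]
  constructor
  · intro hu
    rw [Polynomial.natDegree_eq_zero_of_isUnit hu] at hd
    omega
  · intro f g hfg
    have hf0 : f ≠ 0 := by rintro rfl; rw [zero_mul] at hfg; exact hQ0 hfg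
    have hg0 : g ≠ 0 := by rintro rfl; rw [mul_zero] at hfg; exact hQ0 hfg
    have hdd := Polynomial.natDegree_mul hf0 hg0
    rw [← hfg, hd] at hdd
    rcases Nat.eq_zero_or_pos f.natDegree with hf | hf
    · exact Or.inl (key f g hfg hf)
    rcases Nat.eq_zero_or_pos g.natDegree with hg | hg
    · exact Or.inr (key g f (by rw [hfg, mul_comm]) hg)
    exfalso
    obtain ⟨f1, f0, rfl⟩ := Polynomial.exists_eq_X_add_C_of_natDegree_le_one (show f.natDegree ≤ 1 by omega)
    obtain ⟨g1, g0, rfl⟩ := Polynomial.exists_eq_X_add_C_of_natDegree_le_one (show g.natDegree ≤ 1 by omega)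
    have hfg' : Q = Polynomial.C (f1 * g1) * Polynomial.X ^ 2 +
        Polynomial.C (f1 * g0 + f0 * g1) * Polynomial.X + Polynomial.C (f0 * g0) := by
      rw [hfg]; simp only [map_mul, map_add]; ring
    have e0 : c = f0 * g0 := by rw [← c0, hfg']; simp
    have e1 : 2 * b = f1 * g0 + f0 * g1 := by
      rw [← c1, hfg', Polynomial.coeff_add, Polynomial.coeff_add, Polynomial.coeff_C_mul,
        Polynomial.coeff_C_mul, Polynomial.coeff_X_pow, Polynomial.coeff_X_one, Polynomial.coeff_C]
      simp
    have e2 : a = f1 * g1 := by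
      rw [← c2, hfg', Polynomial.coeff_add, Polynomial.coeff_add, Polynomial.coeff_C_mul,
        Polynomial.coeff_C_mul, Polynomial.coeff_X_pow, Polynomial.coeff_X, Polynomial.coeff_C]
      simp
    apply h2
    apply hns (f1 * g0 - f0 * g1) 2
    rw [e0, e2]
    linear_combination (-(2 * b + f1 * g0 + f0 * g1)) * e1

/-- The variables other than `z₀`. -/
abbrev V1 (n r : ℕ) := Fin (n+1) ⊕ Fin (r+1)

/-- Separating the variable `z₀`. -/
def tauE (n r : ℕ) : Fin (n+1) ⊕ Fin (r+2) ≃ Option (V1 n r) where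
  toFun := Sum.elim (fun i => some (Sum.inl i)) (Fin.cases none fun s => some (Sum.inr s))
  invFun := fun o => o.elim (Sum.inr 0) (Sum.elim Sum.inl fun s => Sum.inr s.succ)
  left_inv := by
    rintro (i | i)
    · rfl
    · induction i using Fin.cases <;> rfl
  right_inv := by
    rintro (_ | (i | i)) <;> rfl

/-- The coordinate ring of the ambient space as a polynomial ring in the variable `z₀`. -/
def ambE (n r : ℕ) : QB.Amb n r ≃ₐ[ℂ] Polynomial (MvPolynomial (V1 n r) ℂ) :=
  (renameEquiv ℂ (tauE n r)).trans (optionEquivLeft ℂ (V1 n r))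

theorem ambE_inl (i : Fin (n+1)) : ambE n r (X (Sum.inl i)) = Polynomial.C (X (Sum.inl i)) := by
  simp [ambE, tauE]

theorem ambE_zero : ambE n r (X (Sum.inr 0)) = Polynomial.X := by
  simp [ambE, tauE]

theorem ambE_succ (s : Fin (r+1)) : ambE n r (X (Sum.inr s.succ)) = Polynomial.C (X (Sum.inr s)) := by
  simp [ambE, tauE]

theorem ambE_rename (p : QB.PolyP n) : ambE n r (rename Sum.inl p) = Polynomial.C (rename Sum.inl p) := by
  have : (ambE n r).toAlgHom.comp (rename Sum.inl) =
      (Polynomial.CAlgHom (R := ℂ) (A := MvPolynomial (V1 n r) ℂ)).comp (rename Sum.inl) := by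
    apply MvPolynomial.algHom_ext
    intro i
    simpa using ambE_inl i
  exact DFunLike.congr_fun this p

/-- The quadratic form as a polynomial in `z₀`. -/
theorem ambE_qpoly (A : QB.SymMat n r l l₀) : ambE n r (QB.qpoly A) =
    Polynomial.C (qa A.1 Sum.inl) * Polynomial.X ^ 2 + Polynomial.C (2 * qb A.1 Sum.inl Sum.inr) * Polynomial.X
      + Polynomial.C (qc A.1 Sum.inl Sum.inr) := by
  simp only [QB.qpoly, map_sum, map_mul, ambE_rename, qa, qb, qc]
  rw [Fin.sum_univ_succ]
  simp_rw [Fin.sum_univ_succ (n := r+1)]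
  simp only [ambE_zero, ambE_succ, Finset.sum_add_distrib, Finset.mul_sum, Finset.sum_mul]
  have h : ∀ s : Fin (r+1), A.1 s.succ 0 = A.1 0 s.succ := fun s => A.2.1 _ _
  simp only [h]
  have h2 : ∀ f g h : Fin (r+1) → Polynomial (MvPolynomial (V1 n r) ℂ),
    (∀ i, f i + g i = h i) → ∑ i, f i + ∑ i, g i = ∑ i, h i := fun f g h hh => by
      rw [← Finset.sum_add_distrib]; exact Finset.sum_congr rfl fun i _ => hh i
  have h4 := h2 (fun i => Polynomial.C (rename Sum.inl (A.1 0 i.succ)) * Polynomial.X * Polynomial.C (X (Sum.inr i)))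
    (fun i => Polynomial.C (rename Sum.inl (A.1 0 i.succ)) * Polynomial.C (X (Sum.inr i)) * Polynomial.X)
    (fun i => Polynomial.C 2 * (Polynomial.C (rename Sum.inl (A.1 0 i.succ)) * Polynomial.C (X (Sum.inr i))) * Polynomial.X)
    (fun i => by rw [map_ofNat]; ring)
  linear_combination h4

end QBProof

namespace QBProof

/-! ### Integrality and the function field of the cone -/

variable {n r : ℕ} {l : Fin (r+2) → ℤ} {l₀ : ℤ}

theorem qa_ne_zero {a : Fin (r+2) → Fin (r+2) → MvPolynomial (Fin (n+1)) ℂ} (ha : IsMat l l₀ a)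
    (hinj : ∀ p : MvPolynomial (Idx n r l l₀) ℤ, aeval (cf a) p = (0:ℂ) → p = 0)
    (d : Fin (r+2) → ℕ) (hd : ∀ i, (d i : ℤ) = 2 * l i + l₀) :
    qa (V := V1 n r) a Sum.inl ≠ 0 := by
  obtain ⟨O, AO, hAO, h1, h2⟩ := spec_mon ha hinj d hd (fun _ => 0)
  intro h
  rw [qa, map_eq_zero_iff _ (rename_injective _ Sum.inl_injective), ← h1,
    map_eq_zero_iff _ (ic_inj O)] at h
  have h3 := h2 0 0
  rw [h, map_zero, if_pos rfl] at h3
  exact pow_ne_zero _ (X_ne_zero _) h3.symm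

theorem homZ_totalDegree {σ R : Type*} [CommSemiring R] {e : ℕ} {p : MvPolynomial σ R}
    (h : HomZ e p) : p.totalDegree ≤ e := by
  refine Finset.sup_le fun m hm => ?_
  have := h m (mem_support_iff.1 hm)
  rw [Finsupp.degree_apply] at this
  exact_mod_cast this.le

/-- As a polynomial in `z₀`, the generic quadratic form is primitive, since it specializes to a
diagonal form whose first entry is a power of one coordinate, and all others are powers of another. -/
theorem q_primitive (hn : 0 < n) {a : Fin (r+2) → Fin (r+2) → MvPolynomial (Fin (n+1)) ℂ} (ha : IsMat l l₀ a)
    (hinj : ∀ p : MvPolynomial (Idx n r l l₀) ℤ, aeval (cf a) p = (0:ℂ) → p = 0)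
    (d : Fin (r+2) → ℕ) (hd : ∀ i, (d i : ℤ) = 2 * l i + l₀) (p : MvPolynomial (V1 n r) ℂ)
    (h1 : p ∣ qa a Sum.inl) (h2 : p ∣ qc a Sum.inl Sum.inr) : IsUnit p := by
  obtain ⟨j, hj⟩ : ∃ j : Fin (n+1), j ≠ 0 := ⟨⟨1, by omega⟩, by simp [Fin.ext_iff]⟩
  obtain ⟨O, AO, hAO, e1, e2⟩ := spec_mon ha hinj d hd (fun i => if i = 0 then 0 else j)
  have e1' : (fun i j => icm O (AO i j)) = a := by funext i j; exact e1 i j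
  have e2' : (fun i j => rdm O (AO i j)) = fun i k => if i = k then X (if i = 0 then 0 else j) ^ d i else 0 := by
    funext i j; exact e2 i j
  refine prim_lemma O (qa AO Sum.inl) (qc AO Sum.inl Sum.inr) (Sum.inl 0) (d 0) ?_ ?_ ?_ p ?_ ?_
  · rw [qa_map, e2', qa]
    simp
  · refine (totalDegree_rename_le _ _).trans (homZ_totalDegree ?_)
    have := hAO.hom 0 0
    rwa [← two_mul, ← hd] at this
  · rw [qc_map, e2', qc_diag]
    rintro ⟨w, hw⟩
    have := congrArg (eval (Sum.elim (fun i => if i = j then 1 else 0) (fun s => if s = 0 then 1 else 0))) hw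
    simp [hj.symm] at this
  · rwa [qa_map, e1']
  · rwa [qc_map, e1']

/-- The generic quadratic form is irreducible: its discriminant with respect to `z₀` is not a square
since that of the special quadric is not one. -/
theorem q_irreducible (hr : 0 < r) {A : QB.SymMat n r l l₀}
    (hinj : ∀ p : MvPolynomial (Idx n r l l₀) ℤ, aeval (cf A.1) p = (0:ℂ) → p = 0)
    (D : Dat n r) (hD : ∀ i, (D.d i : ℤ) = 2 * l i + l₀) : Irreducible (ambE n r (QB.qpoly A)) := by
  classical
  have ha := isMat A
  have hn := D.two_le
  rw [ambE_qpoly]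
  refine irr_lemma two_ne_zero _ _ _ (qa_ne_zero ha hinj D.d hD)
    (q_primitive (by omega) ha hinj D.d hD) ?_
  intro f0 f1 h
  obtain ⟨O, μ, AO, _, hμ, hAO, e1, e2⟩ := spec_sp ha hinj D hD
  have e1' : (fun i j => icm O (AO i j)) = A.1 := by funext i j; exact e1 i j
  have e2' : (fun i j => rdm O (AO i j)) = fun i k => if i = k then D.sp (C (μ ^ 2)) X i else 0 := by
    funext i j; exact e2 i j
  refine (nonsq_lift O (qD AO Sum.inl Sum.inr) (fun g0 g1 hg => ?_) f0 f1 ?_).2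
  · rw [qD_map, e2', qD_sp] at hg
    exact disc_nonsq D hr (μ ^ 2) (xi := Sum.inl) (ze := Sum.inr)
      (by rintro (i | i) (j | j) h <;> simpa using h) g0 g1 hg
  · rw [qD_map, e1']; exact h

/-- The affine cone over a generic quadric bundle is integral. -/
theorem cone_isDomain (hr : 0 < r) {A : QB.SymMat n r l l₀}
    (hinj : ∀ p : MvPolynomial (Idx n r l l₀) ℤ, aeval (cf A.1) p = (0:ℂ) → p = 0)
    (D : Dat n r) (hD : ∀ i, (D.d i : ℤ) = 2 * l i + l₀) : IsDomain (QB.ConeRing A) := by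
  have h1 := (q_irreducible hr hinj D hD).prime
  have h2 : Prime (QB.qpoly A) := (MulEquiv.prime_iff (ambE n r)).1 h1
  have h3 : (Ideal.span {QB.qpoly A}).IsPrime := (Ideal.span_singleton_prime h2.ne_zero).2 h2
  exact (Ideal.Quotient.isDomain_iff_prime _).2 h3

/-- Fractions of the form `(f₀ + ω f₁) / g` form a subfield when `ω ^ 2 = Δ`. -/
def quadSub {R K : Type*} [CommRing R] [IsDomain R] [Field K] [CharZero K] (j : R →+* K)
    (hj : Function.Injective j) (ω : K) (Δ : R) (hω : ω ^ 2 = j Δ) : Subfield K where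
  carrier := {f | ∃ f0 f1 g, g ≠ 0 ∧ f * j g = j f0 + ω * j f1}
  mul_mem' := by
    rintro f f' ⟨f0, f1, g, hg, h⟩ ⟨f0', f1', g', hg', h'⟩
    refine ⟨f0 * f0' + Δ * f1 * f1', f0 * f1' + f1 * f0', g * g', mul_ne_zero hg hg', ?_⟩
    simp only [map_mul, map_add]
    linear_combination (f' * j g') * h + (j f0 + ω * j f1) * h' + j f1 * j f1' * hω
  one_mem' := ⟨1, 0, 1, one_ne_zero, by simp⟩
  add_mem' := by
    rintro f f' ⟨f0, f1, g, hg, h⟩ ⟨f0', f1', g', hg', h'⟩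
    refine ⟨f0 * g' + f0' * g, f1 * g' + f1' * g, g * g', mul_ne_zero hg hg', ?_⟩
    simp only [map_mul, map_add]
    linear_combination (j g') * h + (j g) * h'
  zero_mem' := ⟨0, 0, 1, one_ne_zero, by simp⟩
  neg_mem' := by
    rintro f ⟨f0, f1, g, hg, h⟩
    refine ⟨-f0, -f1, g, hg, ?_⟩
    simp only [map_neg]
    linear_combination -h
  inv_mem' := by
    rintro f ⟨f0, f1, g, hg, h⟩
    by_cases hf : f = 0
    · exact ⟨0, 0, 1, one_ne_zero, by simp [hf]⟩
    have hjg : j g ≠ 0 := (map_ne_zero_iff j hj).2 hg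
    have hs : j f0 + ω * j f1 ≠ 0 := by rw [← h]; exact mul_ne_zero hf hjg
    by_cases hN : f0 ^ 2 - Δ * f1 ^ 2 = 0
    -- a vanishing norm means that `ω` lies in the image of the fraction field of `R`
    · have h1 := congrArg j hN
      simp only [map_sub, map_mul, map_pow, map_zero] at h1
      have h2 : (j f0 + ω * j f1) * (j f0 - ω * j f1) = 0 := by
        linear_combination h1 - (j f1) ^ 2 * hω
      have h3 := (mul_eq_zero.1 h2).resolve_left hs
      have h4 : f * j g = 2 * j f0 := by linear_combination h - h3
      have h5 : j f0 ≠ 0 := by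
        intro h0
        rw [h0, mul_zero] at h4
        exact mul_ne_zero hf hjg h4
      refine ⟨g, 0, 2 * f0, ?_, ?_⟩
      · rw [← map_ne_zero_iff j hj, map_mul, map_ofNat]
        exact mul_ne_zero two_ne_zero h5
      · rw [map_mul, map_ofNat, ← h4, map_zero]
        field_simp
        ring
    · refine ⟨g * f0, -(g * f1), f0 ^ 2 - Δ * f1 ^ 2, hN, ?_⟩
      rw [inv_mul_eq_iff_eq_mul₀ hf]
      simp only [map_mul, map_neg, map_sub, map_pow]
      linear_combination (-(j f0 - ω * j f1)) * h + (j f1) ^ 2 * hω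

/-- The function field of the cone over the quadric bundle, with `m` further variables adjoined,
is generated over a rational function field by a square root of the discriminant. -/
theorem cone_field {A : QB.SymMat n r l l₀} [IsDomain (QB.ConeRing A)]
    (hqa : qa (V := V1 n r) A.1 Sum.inl ≠ 0) (m : ℕ) :
    ∃ (j : MvPolynomial (Fin m ⊕ V1 n r) ℂ →+* FractionRing (MvPolynomial (Fin m) (QB.ConeRing A)))
      (ω : FractionRing (MvPolynomial (Fin m) (QB.ConeRing A)))
      (z : Fin (r+2) → FractionRing (MvPolynomial (Fin m) (QB.ConeRing A))),
      Function.Injective j ∧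
      (∀ c, j (C c) = algebraMap ℂ _ c) ∧
      ω ^ 2 = j (qD A.1 (Sum.inr ∘ Sum.inl) (Sum.inr ∘ Sum.inr)) ∧
      (∀ f, ∃ f0 f1 g, g ≠ 0 ∧ f * j g = j f0 + ω * j f1) ∧ z ≠ 0 ∧
      ∑ i, ∑ k, j (rename (Sum.inr ∘ Sum.inl) (A.1 i k)) * z i * z k = 0 := by
  obtain ⟨mk, hsurj, hker⟩ : ∃ mk : QB.Amb n r →ₐ[ℂ] QB.ConeRing A, Function.Surjective mk ∧
      ∀ f, mk f = 0 ↔ QB.qpoly A ∣ f :=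
    ⟨Ideal.Quotient.mkₐ ℂ (Ideal.span {QB.qpoly A}), Ideal.Quotient.mkₐ_surjective _ _, fun f => by
      rw [← Ideal.mem_span_singleton]
      exact Ideal.Quotient.eq_zero_iff_mem⟩
  obtain ⟨ι, hι⟩ : ∃ ι : MvPolynomial (V1 n r) ℂ →ₐ[ℂ] QB.ConeRing A,
      ∀ p, ι p = mk ((ambE n r).symm (Polynomial.C p)) :=
    ⟨mk.comp ((ambE n r).symm.toAlgHom.comp Polynomial.CAlgHom), fun p => rfl⟩
  have hιinj : Function.Injective ι := by
    rw [injective_iff_map_eq_zero]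
    intro f hf
    by_contra hf0
    rw [hι, hker] at hf
    have h1 := map_dvd (ambE n r) hf
    rw [AlgEquiv.apply_symm_apply, ambE_qpoly] at h1
    have h2 := Polynomial.natDegree_le_of_dvd h1 (by simpa using hf0)
    rw [Polynomial.natDegree_quadratic hqa, Polynomial.natDegree_C] at h2
    omega
  obtain ⟨cc, hcc⟩ : ∃ cc : QB.ConeRing A →+* FractionRing (MvPolynomial (Fin m) (QB.ConeRing A)),
      cc = (algebraMap (MvPolynomial (Fin m) (QB.ConeRing A)) _).comp C := ⟨_, rfl⟩
  have hccinj : Function.Injective cc := by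
    rw [hcc, RingHom.coe_comp]
    exact (IsFractionRing.injective _ _).comp (C_injective _ _)
  obtain ⟨j, hj⟩ : ∃ j : MvPolynomial (Fin m ⊕ V1 n r) ℂ →+* FractionRing (MvPolynomial (Fin m) (QB.ConeRing A)),
      j = (algebraMap (MvPolynomial (Fin m) (QB.ConeRing A)) _).comp
        ((MvPolynomial.map ι.toRingHom).comp (sumAlgEquiv ℂ (Fin m) (V1 n r)).toRingEquiv.toRingHom) := ⟨_, rfl⟩
  have hjap : ∀ p, j p = algebraMap _ _ (MvPolynomial.map ι.toRingHom (sumAlgEquiv ℂ (Fin m) (V1 n r) p)) :=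
    fun p => by rw [hj]; rfl
  have hjinj : Function.Injective j := by
    intro p q h
    rw [hjap, hjap] at h
    exact (sumAlgEquiv ℂ (Fin m) (V1 n r)).injective
      (map_injective ι.toRingHom hιinj (IsFractionRing.injective _ _ h))
  have hjr : ∀ p : MvPolynomial (V1 n r) ℂ, j (rename Sum.inr p) = cc (ι p) := by
    intro p
    have h1 : sumAlgEquiv ℂ (Fin m) (V1 n r) (rename Sum.inr p) = C p :=
      DFunLike.congr_fun (sumAlgEquiv_comp_rename_inr ℂ (Fin m) (V1 n r)) p
    rw [hjap, h1, map_C, hcc]; rfl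
  have hjl : ∀ i : Fin m, j (X (Sum.inl i)) = algebraMap (MvPolynomial (Fin m) (QB.ConeRing A)) _ (X i) := by
    intro i
    rw [hjap, sumAlgEquiv_X_inl, map_X]
  have hιC : ∀ c : ℂ, ι (C c) = algebraMap ℂ _ c := fun c => ι.commutes c
  have hιr : ∀ p : QB.PolyP n, ι (rename Sum.inl p) = mk (rename Sum.inl p) := by
    intro p
    rw [hι, ← ambE_rename, AlgEquiv.symm_apply_apply]
  have hιs : ∀ s, ι (X (Sum.inr s)) = mk (X (Sum.inr s.succ)) := by
    intro s
    rw [hι, ← ambE_succ, AlgEquiv.symm_apply_apply]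
  have hιl : ∀ s, ι (X (Sum.inl s)) = mk (X (Sum.inl s)) := by
    intro s
    rw [hι, ← ambE_inl, AlgEquiv.symm_apply_apply]
  obtain ⟨Z, hZ⟩ : ∃ Z, Z = mk (X (Sum.inr 0)) := ⟨_, rfl⟩
  obtain ⟨a, haq⟩ : ∃ a : MvPolynomial (V1 n r) ℂ, a = qa A.1 Sum.inl := ⟨_, rfl⟩
  obtain ⟨b, hb⟩ : ∃ b : MvPolynomial (V1 n r) ℂ, b = qb A.1 Sum.inl Sum.inr := ⟨_, rfl⟩
  obtain ⟨c, hc⟩ : ∃ c : MvPolynomial (V1 n r) ℂ, c = qc A.1 Sum.inl Sum.inr := ⟨_, rfl⟩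
  have hq0 : mk (QB.qpoly A) = 0 := (hker _).2 dvd_rfl
  have hrel : ι a * Z ^ 2 + 2 * ι b * Z + ι c = 0 := by
    rw [← hq0, ← (ambE n r).symm_apply_apply (QB.qpoly A), ambE_qpoly, ← haq, ← hb, ← hc]
    simp only [map_add, map_mul, map_pow, ← hι]
    rw [← ambE_zero (n := n) (r := r), AlgEquiv.symm_apply_apply, ← hZ, map_ofNat]
  obtain ⟨ω, hω⟩ : ∃ ω, ω = cc (ι a * Z + ι b) := ⟨_, rfl⟩
  have hω2 : ω ^ 2 = j (qD A.1 (Sum.inr ∘ Sum.inl) (Sum.inr ∘ Sum.inr)) := by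
    rw [← qD_rename, hjr, hω, ← map_pow, qD, ← haq, ← hb, ← hc]
    congr 1
    simp only [map_sub, map_mul, map_pow]
    linear_combination (ι a) * hrel
  have hjC : ∀ c, j (C c) = algebraMap ℂ _ c := by
    intro c
    rw [hjap, sumAlgEquiv_C_inl, map_C, IsScalarTower.algebraMap_apply ℂ (MvPolynomial (Fin m) (QB.ConeRing A))]
    rw [MvPolynomial.algebraMap_apply, ← hιC c]
    rfl
  haveI : CharZero (FractionRing (MvPolynomial (Fin m) (QB.ConeRing A))) :=
    charZero_of_injective_ringHom hjinj
  refine ⟨j, ω, fun i => cc (mk (X (Sum.inr i))), hjinj, hjC, hω2, ?_, ?_, ?_⟩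
  · obtain ⟨G, hG⟩ : ∃ G : Subfield (FractionRing (MvPolynomial (Fin m) (QB.ConeRing A))),
        G = quadSub j hjinj ω _ hω2 := ⟨_, rfl⟩
    have hGj : ∀ p, j p ∈ G := fun p => by
      rw [hG]; exact ⟨p, 0, 1, one_ne_zero, by simp⟩
    have hGω : ω ∈ G := by
      rw [hG]; exact ⟨0, 1, 1, one_ne_zero, by simp⟩
    have hGι : ∀ p, cc (ι p) ∈ G := fun p => by rw [← hjr]; exact hGj _
    have hGZ : cc Z ∈ G := by
      have h1 : cc (ι a) ≠ 0 := by
        rw [map_ne_zero_iff _ hccinj, map_ne_zero_iff _ hιinj, haq]; exact hqa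
      have h2 : cc Z = (ω - cc (ι b)) / cc (ι a) := by
        rw [eq_div_iff h1, hω, map_add, map_mul]; ring
      rw [h2]
      exact div_mem (sub_mem hGω (hGι _)) (hGι _)
    have hGc : ∀ p, cc (mk p) ∈ G := by
      intro p
      induction p using MvPolynomial.induction_on with
      | C c =>
        have : mk (C c) = ι (C c) := (mk.commutes c).trans (hιC c).symm
        rw [this]; exact hGι _
      | add p q hp hq => rw [map_add, map_add]; exact add_mem hp hq
      | mul_X p i hp =>
        rw [map_mul, map_mul]
        refine mul_mem hp ?_
        rcases i with i | i
        · rw [← hιl]; exact hGι _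
        · induction i using Fin.cases with
          | zero => rw [← hZ]; exact hGZ
          | succ s => rw [← hιs]; exact hGι _
    have hGp : ∀ p : MvPolynomial (Fin m) (QB.ConeRing A), algebraMap _ (FractionRing (MvPolynomial (Fin m) (QB.ConeRing A))) p ∈ G := by
      intro p
      induction p using MvPolynomial.induction_on with
      | C c =>
        obtain ⟨c, rfl⟩ := hsurj c
        have := hGc c
        rw [hcc] at this
        exact this
      | add p q hp hq => rw [map_add]; exact add_mem hp hq
      | mul_X p i hp =>
        rw [map_mul]
        refine mul_mem hp ?_
        rw [← hjl]; exact hGj _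
    intro f
    obtain ⟨p, q, hq, rfl⟩ := IsFractionRing.div_surjective (A := MvPolynomial (Fin m) (QB.ConeRing A)) f
    have := div_mem (hGp p) (hGp q)
    rw [hG] at this
    exact this
  · intro h
    have h1 := congrFun h (Fin.succ 0)
    simp only [← hιs, Pi.zero_apply] at h1
    rw [map_eq_zero_iff _ hccinj, map_eq_zero_iff _ hιinj] at h1
    exact X_ne_zero _ h1
  · have h1 := congrArg cc hq0
    simp only [QB.qpoly, map_sum, map_mul, map_zero] at h1
    rw [← h1]
    refine Finset.sum_congr rfl fun i _ => Finset.sum_congr rfl fun k _ => ?_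
    rw [← rename_rename, hjr, hιr]
end QBProof

namespace QBProof

/-! ### Rational curves through the tautological point -/

variable {n r : ℕ} {l : Fin (r+2) → ℤ} {l₀ : ℤ}

/-- If `F` is purely transcendental over `ℂ`, an `F`-point of the quadric bundle can be written in
polynomials in algebraically independent generators `T`. -/
theorem rational_data {F : Type*} [Field F] [Algebra ℂ F] {N : ℕ} (e : F ≃ₐ[ℂ] RatFF N)
    {a : Fin (r+2) → Fin (r+2) → MvPolynomial (Fin (n+1)) ℂ} (ha : IsMat l l₀ a)
    (x : Fin (n+1) → F) (hx : x ≠ 0) (z : Fin (r+2) → F) (hz : z ≠ 0)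
    (hq : ∑ i, ∑ k, aeval x (a i k) * z i * z k = 0) :
    ∃ (P : Fin (n+1) → MvPolynomial (Fin N) ℂ) (Z : Fin (r+2) → MvPolynomial (Fin N) ℂ)
      (T : Fin N → F) (q : F), q ≠ 0 ∧ (∀ i, aeval T (P i) = q * x i) ∧ P ≠ 0 ∧ Z ≠ 0 ∧
      ∑ i, ∑ k, aeval P (a i k) * Z i * Z k = 0 := by
  obtain ⟨al, hal⟩ : ∃ al : MvPolynomial (Fin N) ℂ →ₐ[ℂ] RatFF N,
      al = IsScalarTower.toAlgHom ℂ (MvPolynomial (Fin N) ℂ) (RatFF N) := ⟨_, rfl⟩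
  have hal' : ∀ p, al p = algebraMap _ _ p := fun p => by rw [hal]; rfl
  have hinj : Function.Injective al := fun p q h => by
    rw [hal', hal'] at h; exact IsFractionRing.injective _ _ h
  obtain ⟨Q, hQ⟩ := IsLocalization.exist_integer_multiples_of_finite
    (nonZeroDivisors (MvPolynomial (Fin N) ℂ)) (fun i => e (x i))
  choose P hP using hQ
  have hQ0 : al (Q : MvPolynomial (Fin N) ℂ) ≠ 0 := by
    rw [map_ne_zero_iff _ hinj]; exact nonZeroDivisors.coe_ne_zero Q
  have hP' : ∀ i, al (P i) = al Q * e (x i) := fun i => by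
    rw [hal', hP, Algebra.smul_def, hal']
  obtain ⟨y, hy⟩ : ∃ y : Fin (r+2) → RatFF N, y = fun i => (al (Q : MvPolynomial (Fin N) ℂ)) ^ (- l i) * e (z i) := ⟨_, rfl⟩
  obtain ⟨b, hb⟩ := IsLocalization.exist_integer_multiples_of_finite
    (nonZeroDivisors (MvPolynomial (Fin N) ℂ)) y
  choose Z hZ using hb
  have hb0 : al (b : MvPolynomial (Fin N) ℂ) ≠ 0 := by
    rw [map_ne_zero_iff _ hinj]; exact nonZeroDivisors.coe_ne_zero b
  have hZ' : ∀ i, al (Z i) = al b * y i := fun i => by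
    rw [hal', hZ, Algebra.smul_def, hal']
  have hT : ∀ p, aeval (fun k => e.symm (al (X k))) p = e.symm (al p) := by
    intro p
    exact DFunLike.congr_fun (MvPolynomial.algHom_ext (A := F) (f := aeval (fun k => e.symm (al (X k))))
      (g := e.symm.toAlgHom.comp al) (fun i => by simp)) p
  refine ⟨P, Z, fun k => e.symm (al (X k)), e.symm (al Q), ?_, ?_, ?_, ?_, ?_⟩
  · simpa using hQ0
  · intro i
    rw [hT, hP', map_mul, e.symm_apply_apply]
  · intro h
    obtain ⟨i, hi⟩ := Function.ne_iff.1 hx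
    have := hP' i
    rw [h, Pi.zero_apply, map_zero, eq_comm, mul_eq_zero] at this
    rcases this with h | h
    · exact hQ0 h
    · exact hi ((map_eq_zero_iff e e.injective).1 h)
  · intro h
    obtain ⟨i, hi⟩ := Function.ne_iff.1 hz
    have := hZ' i
    rw [h, hy, Pi.zero_apply, map_zero, eq_comm, mul_eq_zero, mul_eq_zero] at this
    rcases this with h | h | h
    · exact hb0 h
    · exact zpow_ne_zero _ hQ0 h
    · exact hi ((map_eq_zero_iff e e.injective).1 h)
  · apply hinj
    rw [map_zero]
    have h1 : (al b) ^ 2 * al Q ^ l₀ * e (∑ i, ∑ k, aeval x (a i k) * z i * z k) = 0 := by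
      rw [hq, map_zero, mul_zero]
    rw [← h1]
    simp only [map_sum, map_mul, Finset.mul_sum]
    refine Finset.sum_congr rfl fun i _ => Finset.sum_congr rfl fun k _ => ?_
    have h2 : al (aeval P (a i k)) = al Q ^ (l i + l k + l₀) * e (aeval x (a i k)) := by
      have h3 := (ha.hom i k).eval₂_smul (algebraMap ℂ (RatFF N)) hQ0 (fun i => e (x i))
      simp only [Algebra.algebraMap_self, RingHom.id_apply] at h3
      rw [← AlgHom.comp_apply, comp_aeval, aeval_def]
      simp only [hP']
      rw [h3, ← AlgEquiv.coe_toAlgHom e, ← AlgHom.comp_apply, comp_aeval, aeval_def]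
    rw [h2, hZ', hZ', hy]
    have h5 : al Q ^ (l i + l k + l₀) * al Q ^ (- l i) * al Q ^ (- l k) = al Q ^ l₀ := by
      rw [← zpow_add₀ hQ0, ← zpow_add₀ hQ0]; congr 1; ring
    rw [← h5]; ring

/-- The rational curve joining a general complex point to the tautological point, lifted to the
quadric bundle. -/
theorem exists_curve {F : Type*} [Field F] [Algebra ℂ F] {N : ℕ} (e : F ≃ₐ[ℂ] RatFF N)
    {a : Fin (r+2) → Fin (r+2) → MvPolynomial (Fin (n+1)) ℂ} (ha : IsMat l l₀ a)
    (x : Fin (n+1) → F) (hx : x ≠ 0) (z : Fin (r+2) → F) (hz : z ≠ 0)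
    (hq : ∑ i, ∑ k, aeval x (a i k) * z i * z k = 0) :
    ∃ (ξ : Fin (n+1) → Polynomial F) (ζ : Fin (r+2) → Polynomial F) (pt : Fin (n+1) → ℂ) (q : F),
      q ≠ 0 ∧ pt ≠ 0 ∧ ζ ≠ 0 ∧ (∀ i, (ξ i).eval 0 = algebraMap ℂ F (pt i)) ∧
      (∀ i, (ξ i).eval 1 = q * x i) ∧ ∑ i, ∑ k, aeval ξ (a i k) * ζ i * ζ k = 0 := by
  obtain ⟨P, Z, T, q, hq0, hT, hP, hZ, hPZ⟩ := rational_data e ha x hx z hz hq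
  obtain ⟨i₀, hi₀⟩ := Function.ne_iff.1 hP
  obtain ⟨k₀, hk₀⟩ := Function.ne_iff.1 hZ
  obtain ⟨w, hw⟩ : ∃ w, eval w (P i₀ * Z k₀) ≠ 0 := by
    by_contra! h
    exact mul_ne_zero hi₀ hk₀ (MvPolynomial.funext fun w => by rw [h w, map_zero])
  rw [map_mul] at hw
  obtain ⟨g, hg⟩ : ∃ g : MvPolynomial (Fin N) ℂ →ₐ[ℂ] Polynomial F, g = aeval (fun k =>
      Polynomial.C (algebraMap ℂ F (w k)) + Polynomial.X *
        (Polynomial.C (T k) - Polynomial.C (algebraMap ℂ F (w k)))) := ⟨_, rfl⟩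
  have h0 : ∀ p, (g p).eval 0 = algebraMap ℂ F (eval w p) := by
    intro p
    have : ((Polynomial.aeval (0:F)).restrictScalars ℂ).comp g = (Algebra.ofId ℂ F).comp (aeval w) := by
      apply MvPolynomial.algHom_ext
      intro i
      simp [hg, Algebra.ofId_apply]
    have h := DFunLike.congr_fun this p
    simpa [Algebra.ofId_apply, Polynomial.aeval_def, Polynomial.eval₂_eq_eval_map] using h
  have h1 : ∀ p, (g p).eval 1 = aeval T p := by
    intro p
    have : ((Polynomial.aeval (1:F)).restrictScalars ℂ).comp g = aeval T := by
      apply MvPolynomial.algHom_ext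
      intro i
      simp [hg]
    have h := DFunLike.congr_fun this p
    simpa [Polynomial.aeval_def, Polynomial.eval₂_eq_eval_map] using h
  refine ⟨fun i => g (P i), fun i => g (Z i), fun i => eval w (P i), q, hq0, ?_, ?_, fun i => h0 _,
    fun i => (h1 _).trans (hT i), ?_⟩
  · intro h
    exact left_ne_zero_of_mul hw (congrFun h i₀)
  · intro h
    have h2 := h0 (Z k₀)
    rw [show g (Z k₀) = 0 from congrFun h k₀, Polynomial.eval_zero, eq_comm,
      map_eq_zero] at h2
    exact right_ne_zero_of_mul hw h2
  · have h2 := congrArg g hPZ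
    simp only [map_sum, map_mul, map_zero] at h2
    rw [← h2]
    refine Finset.sum_congr rfl fun i _ => Finset.sum_congr rfl fun k _ => ?_
    rw [← AlgHom.comp_apply, comp_aeval]
end QBProof

namespace QBProof

/-! ### Failure of stable rationality -/

variable {n r : ℕ} {l : Fin (r+2) → ℤ} {l₀ : ℤ}

/-- The core of the argument. If the function field `F` is purely transcendental, the tautological
point is joined to a complex point by a rational curve that lifts to the bundle. At the complex point
the reduced Pfister form is isotropic because the residue field of `O` is algebraically closed, hence
by `path` it is isotropic at the tautological point, contradicting `nonvanish`. -/
theorem not_rational {F V : Type*} [Field F] [Algebra ℂ F] [DecidableEq V] [Finite V] {N : ℕ}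
    (e : F ≃ₐ[ℂ] RatFF N) (hr : 0 < r)
    {a : Fin (r+2) → Fin (r+2) → MvPolynomial (Fin (n+1)) ℂ} (ha : IsMat l l₀ a)
    (hinj : ∀ p : MvPolynomial (Idx n r l l₀) ℤ, aeval (cf a) p = (0:ℂ) → p = 0)
    (D : Dat n r) (hD : ∀ i, (D.d i : ℤ) = 2 * l i + l₀)
    {xi : Fin (n+1) → V} {ze : Fin (r+1) → V} (hxz : Function.Injective (Sum.elim xi ze))
    (j : MvPolynomial V ℂ →+* F) (hj : Function.Injective j) (hjC : ∀ c, j (C c) = algebraMap ℂ F c)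
    (ω : F) (hω : ω ^ 2 = j (qD a xi ze))
    (hgen : ∀ f, ∃ f0 f1 g, g ≠ 0 ∧ f * j g = j f0 + ω * j f1)
    (z : Fin (r+2) → F) (hz : z ≠ 0)
    (hq : ∑ i, ∑ k, j (rename xi (a i k)) * z i * z k = 0) : False := by
  obtain ⟨x, hxdef⟩ : ∃ x : Fin (n+1) → F, ∀ i, x i = j (X (xi i)) := ⟨_, fun _ => rfl⟩
  have hx0 : ∀ i, x i ≠ 0 := fun i => by
    rw [hxdef, map_ne_zero_iff j hj]; exact X_ne_zero _
  have hjx : ∀ p, aeval x p = j (rename xi p) := by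
    intro p
    have h1 : j.comp (rename xi : _ →ₐ[ℂ] MvPolynomial V ℂ).toRingHom = (aeval x).toRingHom := by
      apply MvPolynomial.ringHom_ext
      · intro c; simp [hjC]
      · intro i; simp [hxdef]
    exact (DFunLike.congr_fun h1 p).symm
  simp only [← hjx] at hq
  obtain ⟨ξ, ζ, pt, q, hq0, hpt, hζ, hξ0, hξ1, hξζ⟩ :=
    exists_curve e ha x (fun h => hx0 0 (congrFun h 0)) z hz hq
  obtain ⟨O, μ, AO, hch, hμ, hAO, hic, hrd⟩ := spec_sp ha hinj D hD
  have hΔred : rdm O (qD AO xi ze) = D.disc (C (μ ^ 2)) (fun i => X (xi i)) (fun i => X (ze i)) := by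
    rw [rdm, qD_map]
    have : (fun i j => MvPolynomial.map (IsLocalRing.residue O) (AO i j)) =
        fun i j => if i = j then D.sp (C (μ ^ 2)) X i else 0 := by
      funext i j; exact hrd i j
    rw [this, qD_sp]
  have hΔic : icm O (qD AO xi ze) = qD a xi ze := by
    rw [icm, qD_map]
    congr 1
    funext i j; exact hic i j
  have hω' : ω ^ 2 = j (icm O (qD AO xi ze)) := by rw [hΔic, hω]
  obtain ⟨B, hB'⟩ := place O j hj ω (qD AO xi ze) hω' (fun f0 f1 h => by
    rw [hΔred] at h
    exact disc_nonsq D hr (μ ^ 2) hxz f0 f1 h)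
  have hB : GaussLike O j ω B := hB'
  haveI := hB.charZero
  -- the inclusion of the constants and its reduction
  have hval : ∀ c : O, j (icm O (C c)) = algebraMap ℂ F c := fun c => by
    rw [← hjC, icm, map_C]; rfl
  obtain ⟨β, hβ⟩ : ∃ β : O →+* B, ∀ c, ((β c : B) : F) = algebraMap ℂ F c :=
    ⟨((algebraMap ℂ F).comp O.subtype).codRestrict B.toSubring (fun c => by
      have h := hB.le_one' (C c)
      rw [hval] at h
      exact (B.valuation_le_one_iff _).1 h), fun c => rfl⟩
  obtain ⟨γ, hγ⟩ : ∃ γ : IsLocalRing.ResidueField O →+* IsLocalRing.ResidueField B,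
      ∀ c, γ (IsLocalRing.residue O c) = IsLocalRing.residue B (β c) := by
    refine ⟨Ideal.Quotient.lift _ ((IsLocalRing.residue B).comp β) (fun c hc => ?_), fun c => rfl⟩
    have h1 : IsLocalRing.residue O c = 0 := by rwa [IsLocalRing.residue_eq_zero_iff]
    rw [RingHom.comp_apply, IsLocalRing.residue_eq_zero_iff, ValuationSubring.valuation_lt_one_iff,
      hβ, ← hval, hB.lt_one', rdm, map_C, h1, C_0]
  have hμ0 : γ μ ≠ 0 := by
    rw [map_ne_zero]
    intro h
    refine hμ Polynomial.X Polynomial.X_ne_zero ?_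
    rw [Polynomial.aeval_X, h]; ring
  -- the reduction of the quadratic form over `B`
  have hred : ∀ i k, MvPolynomial.map (IsLocalRing.residue B) (MvPolynomial.map β (AO i k)) =
      if i = k then D.sp (C ((γ μ) ^ 2)) X i else 0 := by
    intro i k
    have h1 : (IsLocalRing.residue B).comp β = γ.comp (IsLocalRing.residue O) :=
      RingHom.ext fun c => (hγ c).symm
    rw [MvPolynomial.map_map, h1, ← MvPolynomial.map_map]
    have h2 := hrd i k
    rw [rdm] at h2
    rw [h2]
    split_ifs with h
    · rw [← D.sp_map]
      simp only [map_C, map_X, map_pow]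
    · rw [map_zero]
  have hQ : ∀ s t : F, s ≠ 0 → QF B D (γ μ)
      (fun i => (ξ i).comp (Polynomial.C s * Polynomial.X + Polynomial.C t)) := by
    intro s t hs
    refine QF_of_quadric B D (γ μ) l l₀ _ (hAO.map β).hom hred _
      (fun i => (ζ i).comp (Polynomial.C s * Polynomial.X + Polynomial.C t)) ?_ ?_
    · obtain ⟨i, hi⟩ := Function.ne_iff.1 hζ
      refine Function.ne_iff.2 ⟨i, fun h => ?_⟩
      rcases Polynomial.comp_eq_zero_iff.1 h with h | ⟨_, h⟩
      · exact hi h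
      · have := congrArg (fun p => Polynomial.coeff p 1) h
        simp at this
        exact hs this
    · have h1 := congrArg (Polynomial.compRingHom (Polynomial.C s * Polynomial.X + Polynomial.C t)) hξζ
      simp only [map_sum, map_mul, map_zero] at h1
      rw [← h1]
      refine Finset.sum_congr rfl fun i _ => Finset.sum_congr rfl fun k _ => ?_
      simp only [Polynomial.coe_compRingHom_apply]
      congr 2
      rw [← Polynomial.coe_compRingHom_apply, aeval_def, hom_eval₂, ← hic, icm, eval₂_map, eval₂_map]
      congr 1
      ext c
      simp [hβ]
  have hZ0 : ZF B (fun i => (ξ i).eval 0) := by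
    obtain ⟨i₀, hi₀, v, hv, hvi⟩ := exists_normalize O pt hpt
    refine ⟨algebraMap ℂ F (pt i₀), by simpa using hi₀, fun i => β (v i), fun i => ?_, ⟨i₀, ?_⟩, ?_⟩
    · beta_reduce
      rw [hξ0, hvi i, map_mul, hβ]; rfl
    · beta_reduce
      rw [hv, map_one, map_one]; exact one_ne_zero
    · haveI := residue_algClosed O
      have h2 : 0 < n := by have := D.two_le; omega
      have := (PIso.of_algClosed h2 (fun i => IsLocalRing.residue O (v i))).map γ γ.injective
      simpa only [hγ] using this
  have hZ1 := (path B (hB.hdiv hgen hj) D hμ0 ξ hQ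
    (by
      obtain ⟨i, hi⟩ := Function.ne_iff.1 hpt
      exact ⟨i, by rw [hξ0]; simpa using hi⟩)
    ⟨0, by rw [hξ1]; exact mul_ne_zero hq0 (hx0 0)⟩).1 hZ0
  have hZx : ZF B x := by
    have h := ZF_smul B (inv_ne_zero hq0) hZ1
    have h1 : (fun i => q⁻¹ * (ξ i).eval 1) = x := by
      funext i; rw [hξ1, inv_mul_cancel_left₀ hq0]
    rwa [h1] at h
  have hicX : ∀ i, j (icm O (X (xi i))) = x i := fun i => by rw [icm, map_X, hxdef]
  have hxB : ∀ i, x i ∈ B := fun i => by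
    rw [← ValuationSubring.valuation_le_one_iff, ← hicX]; exact hB.le_one' _
  have hres : ∃ i, IsLocalRing.residue B ⟨x i, hxB i⟩ ≠ 0 := by
    refine ⟨0, fun h => ?_⟩
    rw [IsLocalRing.residue_eq_zero_iff, ValuationSubring.valuation_lt_one_iff] at h
    change B.valuation (x 0) < 1 at h
    rw [← hicX, hB.lt_one', rdm, map_X] at h
    exact X_ne_zero _ h
  obtain ⟨v, hv0, hv⟩ := (ZF_iff B one_ne_zero (y' := fun i => ⟨x i, hxB i⟩)
    (fun i => (one_mul _).symm) hres).1 hZx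
  choose b hb using fun ε => IsLocalRing.residue_surjective (v ε)
  obtain ⟨f0, f1, hne, h1, h2⟩ := hB.isotropic hgen (qD AO xi ze) hω' hj
    (fun ε => pc (fun i => X (xi i)) ε) (fun ε => (b ε : F)) (by
      obtain ⟨ε, hε⟩ := Function.ne_iff.1 hv0
      refine ⟨ε, ?_⟩
      rw [← hb, Pi.zero_apply, IsLocalRing.residue_ne_zero_iff_isUnit] at hε
      exact (B.valuation_eq_one_iff _).1 hε) (by
      have h3 : ∑ ε, j (icm O (pc (fun i => X (xi i)) ε)) * (b ε : F) ^ 2 =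
          ((∑ ε, pc (fun i => (⟨x i, hxB i⟩ : B)) ε * b ε ^ 2 : B) : F) := by
        change _ = B.subtype (∑ ε, pc (fun i => (⟨x i, hxB i⟩ : B)) ε * b ε ^ 2)
        rw [map_sum]
        refine Finset.sum_congr rfl fun ε _ => ?_
        rw [map_mul, map_pow, ← pc_map, ← pc_map, ← pc_map]
        simp only [hicX]
        rfl
      rw [h3, ← ValuationSubring.valuation_lt_one_iff, ← IsLocalRing.residue_eq_zero_iff, map_sum, ← hv]
      refine Finset.sum_congr rfl fun ε _ => ?_
      rw [map_mul, map_pow, hb, pc_map])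
  simp only [hΔred] at h1
  have hpc : ∀ ε, rdm O (pc (fun i => X (xi i)) ε) = pc (fun i => X (xi i)) ε := fun ε => by
    rw [← pc_map]; simp [rdm]
  simp only [hpc] at h1 h2
  exact nonvanish D hxz (μ ^ 2) hμ f0 f1 hne h1 h2

/-- A quadric bundle with algebraically independent coefficients is not stably rational. -/
theorem not_stablyRational (hr : 0 < r) {A : QB.SymMat n r l l₀}
    (hinj : ∀ p : MvPolynomial (Idx n r l l₀) ℤ, aeval (cf A.1) p = (0:ℂ) → p = 0)
    (D : Dat n r) (hD : ∀ i, (D.d i : ℤ) = 2 * l i + l₀) : ¬ QB.IsStablyRationalQB A := by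
  haveI := cone_isDomain hr hinj D hD
  rintro ⟨m, N, ⟨e⟩⟩
  obtain ⟨j, ω, z, hj, hjC, hω, hgen, hz, hq⟩ :=
    cone_field (A := A) (qa_ne_zero (isMat A) hinj D.d hD) m
  refine not_rational e hr (isMat A) hinj D hD ?_ j hj hjC ω hω hgen z hz hq
  rintro (i | i) (k | k) h <;> simp at h <;> simp [h]

end QBProof

/-- **Theorem 3 (Schreieder, On the rationality problem for quadric bundles).**
Let `n, r` be positive integers with `2^{n-1} - 1 ≤ r ≤ 2ⁿ - 2`, and let
`d₀, …, d_{r+1}` be integers of the same parity with `d_i ≥ 2ⁿ + n - 1` for all `i`.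
Then a very general complex `r`-fold quadric bundle of type `(d_i)` over `ℙⁿ`
is not stably rational.  (The parameter space of bundles of type `(d_i)` is the space
of symmetric matrices of homogeneous polynomials of degrees `l_i + l_j + l₀`, for any
integers `l_i, l₀` with `d_i = 2 l_i + l₀`.) -/
theorem very_general_quadric_bundle_not_stably_rational
    (n r : ℕ) (hn : 0 < n) (hr : 0 < r)
    (hr1 : 2^(n-1) - 1 ≤ r) (hr2 : r ≤ 2^n - 2)
    (d : Fin (r+2) → ℤ)
    (hparity : ∀ i j, Even (d i - d j))
    (hdeg : ∀ i, (2^n + n - 1 : ℤ) ≤ d i)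
    (l : Fin (r+2) → ℤ) (l₀ : ℤ) (hl : ∀ i, d i = 2 * l i + l₀) :
    VeryGenerallyOn (QB.symMatCoords n r l l₀) fun A =>
      QB.IsQuadricBundle A ∧ IsDomain (QB.ConeRing A) ∧ ¬ QB.IsStablyRationalQB A := by
  have hn2 : 2 ≤ n := by
    rcases Nat.lt_or_ge n 2 with h | h
    · obtain rfl : n = 1 := by omega
      norm_num at hr2
      omega
    · exact h
  have h4 : 2 ^ n = 2 * 2 ^ (n - 1) := by
    rw [← pow_succ']; congr 1; omega
  have h5 : n - 1 < 2 ^ (n - 1) := Nat.lt_two_pow_self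
  have h6 : (2 ^ n : ℤ) = 2 * 2 ^ (n - 1) := by exact_mod_cast h4
  have h7 : ((n - 1 : ℕ) : ℤ) < 2 ^ (n - 1) := by exact_mod_cast h5
  have hd2 : ∀ i, (2 * n : ℤ) ≤ d i := fun i => by
    have := hdeg i
    omega
  have hnat : ∀ i, ((d i).toNat : ℤ) = d i := fun i => Int.toNat_of_nonneg (by have := hd2 i; omega)
  obtain ⟨D, hD⟩ := QBProof.exists_dat hn2 (r := r) (by omega) (fun i => (d i).toNat)
    (fun i j => by
      obtain ⟨c, hc⟩ := hparity i j
      have hi := hnat i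
      have hj := hnat j
      omega)
    (fun i => by have := hnat i; have := hd2 i; omega)
  have hDl : ∀ i, (D.d i : ℤ) = 2 * l i + l₀ := fun i => by
    rw [hD, ← hl]; exact hnat i
  refine QBProof.veryGeneral_of _ fun A hA => ⟨?_, QBProof.cone_isDomain hr hA D hDl,
    QBProof.not_stablyRational hr hA D hDl⟩
  exact QBProof.quadricBundle (QBProof.isMat A) hA D.d hDl (by omega)
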